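/- arXiv:2308.09384 — 2 statements merged into one kernel-verified Lean document; each statement's English description precedes it below -/
import Mathlib

section
/- Let K be a field of characteristic 0, A = A_n(K) the n-th Weyl algebra, φ: A → A a K-algebra endomorphism, and S = φ(A). If A is finitely generated as a left S-module or as a right S-module, then S = A; in particular, φ is an automorphism of A. -/
/-- The commutation relations defining the `n`-th Weyl algebra over `R`:
`[x_i, x_j] = 0`, `[∂_i, ∂_j] = 0`, `[∂_i, x_j] = δ_{ij}`.  Generators are indexed by
`Fin n ⊕ Fin n`, with `.inl i` corresponding to `x_i` and `.inr i` to `∂_i`. -/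
inductive WeylRel (R : Type*) [CommRing R] (n : ℕ) :
    FreeAlgebra R (Fin n ⊕ Fin n) → FreeAlgebra R (Fin n ⊕ Fin n) → Prop
  | xx (i j : Fin n) : WeylRel R n
      (FreeAlgebra.ι R (.inl i) * FreeAlgebra.ι R (.inl j))
      (FreeAlgebra.ι R (.inl j) * FreeAlgebra.ι R (.inl i))
  | dd (i j : Fin n) : WeylRel R n
      (FreeAlgebra.ι R (.inr i) * FreeAlgebra.ι R (.inr j))
      (FreeAlgebra.ι R (.inr j) * FreeAlgebra.ι R (.inr i))
  | dx (i j : Fin n) : WeylRel R n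
      (FreeAlgebra.ι R (.inr i) * FreeAlgebra.ι R (.inl j))
      (FreeAlgebra.ι R (.inl j) * FreeAlgebra.ι R (.inr i) + if i = j then 1 else 0)

/-- The `n`-th Weyl algebra `A_n(R)` over a commutative ring `R`, as the quotient of the
free `R`-algebra on `x_1, …, x_n, ∂_1, …, ∂_n` by the Weyl relations. -/
abbrev WeylAlgebra (R : Type*) [CommRing R] (n : ℕ) : Type _ := RingQuot (WeylRel R n)

/-- The generator `x_i` of the Weyl algebra. -/
noncomputable def wX (R : Type*) [CommRing R] {n : ℕ} (i : Fin n) : WeylAlgebra R n :=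
  RingQuot.mkAlgHom R (WeylRel R n) (FreeAlgebra.ι R (.inl i))

/-- The generator `∂_i` of the Weyl algebra. -/
noncomputable def wD (R : Type*) [CommRing R] {n : ℕ} (i : Fin n) : WeylAlgebra R n :=
  RingQuot.mkAlgHom R (WeylRel R n) (FreeAlgebra.ι R (.inr i))

/-!
Let `A` be finitely generated over `φ(A)` as a left module; the right-handed case follows by
transposing differential operators. If a generator of `A` is not in the image of the elements of
degree at most `c`, a linear functional witnesses this. Its coefficients, those of `φ` and those
expressing finite generation lie in a finitely generated ring, which has points in `ℤ_p` for
arbitrarily large primes `p`. So it is enough to solve `φ y = gen s` modulo large `p`, with a bound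
on the degree of `y` that is independent of `p`.

Modulo `p` the Weyl algebra is free of rank `p ^ (2 n)` over its center, a polynomial ring in the
`p`-th powers of the generators, and `φ` restricts to a map `Φ` of centers over whose image the
center is algebraic of degree less than `p`. The commutator of lifts to `ℤ_p`, divided by `p`, is a
Poisson bracket on the center, and it provides derivations `D_s` dual to the `Φ X_s`. The Euler
derivations `∑ (Φ X_s - v_s) D_s` are diagonalizable with eigenvalues in `𝔽_p`. Because the
algebraic degree is less than `p`, eigenvectors for distinct eigenvalues have distinct values under
every extension of the degree valuation, so the `D_s` do not increase these values. It follows that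
an element bounded at infinity by a constant independent of `p` is a polynomial in the `Φ X_s`. As
`A` is finitely generated over `φ(A)`, the `p`-th powers of the generators are bounded in this way.
Hence `Φ` is surjective, and then so is `φ`.
-/

namespace WeylAlgebra

open MvPolynomial

/-- The index set of the generators: `.inl i` stands for `x_i` and `.inr i` for `∂_i`. -/
abbrev Index (n : ℕ) : Type := Fin n ⊕ Fin n

/-! ### Presentation -/

section Presentation

variable {R : Type*} [CommRing R] {n : ℕ}

/-- The generators `x_1, …, x_n, ∂_1, …, ∂_n` as one family. -/
noncomputable def gen (R : Type*) [CommRing R] {n : ℕ} : Index n → WeylAlgebra R n :=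
  Sum.elim (wX R) (wD R)

/-- A family of ring elements satisfying the Weyl relations. -/
structure IsWeylFamily {B : Type*} [Ring B] (g : Index n → B) : Prop where
  xx : ∀ i j, g (.inl i) * g (.inl j) = g (.inl j) * g (.inl i)
  dd : ∀ i j, g (.inr i) * g (.inr j) = g (.inr j) * g (.inr i)
  dx : ∀ i j, g (.inr i) * g (.inl j) = g (.inl j) * g (.inr i) + if i = j then 1 else 0

theorem gen_eq_mkAlgHom (s : Index n) :
    gen R s = RingQuot.mkAlgHom R (WeylRel R n) (FreeAlgebra.ι R s) := by
  cases s <;> rfl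

theorem isWeylFamily_gen : IsWeylFamily (gen R : Index n → WeylAlgebra R n) where
  xx i j := by simpa [gen_eq_mkAlgHom] using RingQuot.mkAlgHom_rel R (WeylRel.xx (R := R) i j)
  dd i j := by simpa [gen_eq_mkAlgHom] using RingQuot.mkAlgHom_rel R (WeylRel.dd (R := R) i j)
  dx i j := by
    have h := RingQuot.mkAlgHom_rel R (WeylRel.dx (R := R) i j)
    rw [map_mul, map_add, map_mul] at h
    rw [gen_eq_mkAlgHom, gen_eq_mkAlgHom, h]
    split_ifs <;> simp

theorem IsWeylFamily.map {B C : Type*} [Ring B] [Ring C] {g : Index n → B} (hg : IsWeylFamily g)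
    (f : B →+* C) : IsWeylFamily (fun s ↦ f (g s)) where
  xx i j := by rw [← map_mul, hg.xx, map_mul]
  dd i j := by rw [← map_mul, hg.dd, map_mul]
  dx i j := by rw [← map_mul, hg.dx, map_add, map_mul]; split_ifs <;> simp

/-- The universal property of the Weyl algebra. -/
noncomputable def lift {B : Type*} [Ring B] [Algebra R B] (g : Index n → B)
    (hg : IsWeylFamily g) : WeylAlgebra R n →ₐ[R] B :=
  RingQuot.liftAlgHom R ⟨FreeAlgebra.lift R g, by
    rintro _ _ (⟨i, j⟩ | ⟨i, j⟩ | ⟨i, j⟩)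
    · simpa using hg.xx i j
    · simpa using hg.dd i j
    · rw [map_mul, map_add, map_mul]
      simp only [FreeAlgebra.lift_ι_apply]
      rw [hg.dx]
      split_ifs <;> simp⟩

@[simp]
theorem lift_gen {B : Type*} [Ring B] [Algebra R B] (g : Index n → B) (hg : IsWeylFamily g)
    (s : Index n) : lift (R := R) g hg (gen R s) = g s := by
  simp [lift, gen_eq_mkAlgHom]

theorem algHom_ext {B : Type*} [Ring B] [Algebra R B] {f g : WeylAlgebra R n →ₐ[R] B}
    (h : ∀ s, f (gen R s) = g (gen R s)) : f = g := by
  apply RingQuot.ringQuot_ext'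
  apply FreeAlgebra.hom_ext
  funext s
  simpa [gen_eq_mkAlgHom] using h s

theorem adjoin_range_gen :
    Algebra.adjoin R (Set.range (gen R : Index n → WeylAlgebra R n)) = ⊤ := by
  set S := Algebra.adjoin R (Set.range (gen R : Index n → WeylAlgebra R n))
  let g : Index n → S := fun s ↦ ⟨gen R s, Algebra.subset_adjoin ⟨s, rfl⟩⟩
  have hg : IsWeylFamily g :=
    { xx := fun i j ↦ Subtype.ext (isWeylFamily_gen.xx i j)
      dd := fun i j ↦ Subtype.ext (isWeylFamily_gen.dd i j)
      dx := fun i j ↦ Subtype.ext <| (isWeylFamily_gen.dx i j).trans <| by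
        split_ifs <;> simp [g] }
  have hid : S.val.comp (lift g hg) = AlgHom.id R _ := algHom_ext fun s ↦ by simp [g]
  refine eq_top_iff.2 fun a _ ↦ ?_
  have ha : (lift g hg a : WeylAlgebra R n) = a := DFunLike.congr_fun hid a
  exact ha ▸ (lift g hg a).2

theorem induction_left {p : WeylAlgebra R n → Prop} (one : p 1)
    (add : ∀ a b, p a → p b → p (a + b)) (smul : ∀ (r : R) a, p a → p (r • a))
    (gen_mul : ∀ s a, p a → p (gen R s * a)) (a : WeylAlgebra R n) : p a := by
  suffices h : ∀ c, p c → p (a * c) by simpa using h 1 one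
  have ha : a ∈ Algebra.adjoin R (Set.range (gen R : Index n → WeylAlgebra R n)) := by
    simp [adjoin_range_gen]
  induction ha using Algebra.adjoin_induction with
  | mem x hx =>
    obtain ⟨s, rfl⟩ := hx
    exact gen_mul s
  | algebraMap r => exact fun c hc ↦ by simpa [← Algebra.smul_def] using smul r c hc
  | add x y _ _ hx hy => exact fun c hc ↦ by simpa [add_mul] using add _ _ (hx c hc) (hy c hc)
  | mul x y _ _ hx hy => exact fun c hc ↦ by simpa [mul_assoc] using hx _ (hy _ hc)

end Presentation

/-! ### Normal ordering -/

section NormalOrdering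

variable {R : Type*} [CommRing R] {n : ℕ}

theorem pderiv_comm {τ : Type*} (s t : τ) (f : MvPolynomial τ R) :
    pderiv s (pderiv t f) = pderiv t (pderiv s f) := by
  classical
  let D (u : τ) : Derivation R (MvPolynomial τ R) (MvPolynomial τ R) := pderiv u
  have h : ⁅D s, D t⁆ = 0 := by
    refine MvPolynomial.derivation_ext fun k ↦ ?_
    rw [Derivation.commutator_apply]
    simp only [D, pderiv_X, Pi.single_apply]
    split_ifs <;> simp
  have hf := DFunLike.congr_fun h f
  rw [Derivation.commutator_apply] at hf
  exact sub_eq_zero.1 hf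

/-- The operators by which the generators act on normally ordered symbols from the left. -/
noncomputable def symbolOp (R : Type*) [CommRing R] {n : ℕ} :
    Index n → Module.End R (MvPolynomial (Index n) R) :=
  Sum.elim (fun i ↦ LinearMap.mulLeft R (X (.inl i)))
    (fun i ↦ LinearMap.mulLeft R (X (.inr i)) + (pderiv (.inl i)).toLinearMap)

theorem isWeylFamily_symbolOp : IsWeylFamily (symbolOp R : Index n → _) where
  xx i j := LinearMap.ext fun f ↦ by simp [symbolOp]; ring
  dd i j := LinearMap.ext fun f ↦ by
    simp [symbolOp, pderiv_comm (Sum.inl i) (Sum.inl j) f]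
    ring
  dx i j := LinearMap.ext fun f ↦ by
    split_ifs with h
    · subst h
      simp [symbolOp]
      ring
    · simp [symbolOp, Ne.symm h, pderiv_X]
      ring

/-- The action of the Weyl algebra on normally ordered symbols by left multiplication. -/
noncomputable def symbolRep : WeylAlgebra R n →ₐ[R] Module.End R (MvPolynomial (Index n) R) :=
  lift (symbolOp R) isWeylFamily_symbolOp

@[simp]
theorem symbolRep_gen (s : Index n) : symbolRep (gen R s) = symbolOp R s :=
  lift_gen _ _ s

theorem symbolRep_X_inr_mul (a : WeylAlgebra R n) (i : Fin n) (f : MvPolynomial (Index n) R) :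
    symbolRep a (X (.inr i) * f) = X (.inr i) * symbolRep a f := by
  induction a using induction_left with
  | one => simp
  | add a b ha hb => simp [mul_add, ha, hb]
  | smul r a ha => simp [ha]
  | gen_mul s a ha =>
    rw [map_mul symbolRep, Module.End.mul_apply, Module.End.mul_apply, ha, symbolRep_gen]
    rcases s with j | j
    · simp [symbolOp]
      ring
    · simp [symbolOp, pderiv_X]
      ring

/-- Left multiplication by `x_i` and right multiplication by `∂_i`; these commute, so a polynomial
can be evaluated at them. -/
noncomputable def orderingOp (R : Type*) [CommRing R] {n : ℕ} :
    Index n → Module.End R (WeylAlgebra R n) :=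
  Sum.elim (fun i ↦ LinearMap.mulLeft R (gen R (.inl i)))
    (fun i ↦ LinearMap.mulRight R (gen R (.inr i)))

theorem orderingOp_comm (s t : Index n) :
    orderingOp R s * orderingOp R t = orderingOp R t * orderingOp R s := by
  rcases s with i | i <;> rcases t with j | j <;> refine LinearMap.ext fun a ↦ ?_
  · simp [orderingOp, ← mul_assoc, isWeylFamily_gen.xx i j]
  · simp [orderingOp, mul_assoc]
  · simp [orderingOp, mul_assoc]
  · simp [orderingOp, mul_assoc, isWeylFamily_gen.dd i j]

open scoped IsMulCommutative in
/-- Evaluation of polynomials at the commuting operators `orderingOp`. -/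
noncomputable def orderingHom :
    MvPolynomial (Index n) R →ₐ[R] Module.End R (WeylAlgebra R n) :=
  haveI := Algebra.isMulCommutative_adjoin R (s := Set.range (orderingOp R : Index n → _))
    (by rintro _ ⟨s, rfl⟩ _ ⟨t, rfl⟩; exact orderingOp_comm s t)
  (Algebra.adjoin R (Set.range (orderingOp R : Index n → _))).val.comp
    (aeval (fun s ↦ ⟨orderingOp R s, Algebra.subset_adjoin ⟨s, rfl⟩⟩))

@[simp]
theorem orderingHom_X (s : Index n) :
    orderingHom (X s : MvPolynomial (Index n) R) = orderingOp R s := by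
  simp [orderingHom]

/-- Normal ordering: replace each monomial by the product of generators with all `x_i` to the left
of all `∂_i`. -/
noncomputable def normalOrder : MvPolynomial (Index n) R →ₗ[R] WeylAlgebra R n :=
  (LinearMap.applyₗ (1 : WeylAlgebra R n)).comp orderingHom.toLinearMap

@[simp]
theorem normalOrder_one : normalOrder (1 : MvPolynomial (Index n) R) = 1 := by
  simp [normalOrder]

theorem normalOrder_X_inl_mul (i : Fin n) (f : MvPolynomial (Index n) R) :
    normalOrder (X (.inl i) * f) = gen R (.inl i) * normalOrder f := by
  simp [normalOrder, orderingOp]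

theorem normalOrder_X_inr_mul (i : Fin n) (f : MvPolynomial (Index n) R) :
    normalOrder (X (.inr i) * f) = normalOrder f * gen R (.inr i) := by
  simp [normalOrder, orderingOp]

theorem normalOrder_C (r : R) :
    normalOrder (C r : MvPolynomial (Index n) R) = algebraMap R _ r := by
  simp [← algebraMap_eq, Algebra.algebraMap_eq_smul_one]

theorem gen_inr_mul_normalOrder (i : Fin n) (f : MvPolynomial (Index n) R) :
    gen R (.inr i) * normalOrder f =
      normalOrder f * gen R (.inr i) + normalOrder (pderiv (.inl i) f) := by
  induction f using MvPolynomial.induction_on with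
  | C a => simp [normalOrder_C, Algebra.commutes]
  | add p q hp hq => simp only [map_add, mul_add, add_mul, hp, hq]; abel
  | mul_X p s hp =>
    rw [mul_comm p, Derivation.leibniz, smul_eq_mul, smul_eq_mul, map_add]
    rcases s with j | j
    · rw [normalOrder_X_inl_mul, normalOrder_X_inl_mul, ← mul_assoc, isWeylFamily_gen.dx, add_mul,
        mul_assoc, hp, mul_add]
      split_ifs with h
      · subst h
        simp [mul_assoc]
        abel
      · simp [pderiv_X, Ne.symm h, mul_assoc]
    · rw [normalOrder_X_inr_mul, normalOrder_X_inr_mul, ← mul_assoc, hp, add_mul,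
        mul_assoc _ (gen R _) (gen R _), isWeylFamily_gen.dd]
      simp [pderiv_X, mul_assoc]

theorem normalOrder_mul_gen_inl (i : Fin n) (f : MvPolynomial (Index n) R) :
    normalOrder f * gen R (.inl i) =
      gen R (.inl i) * normalOrder f + normalOrder (pderiv (.inr i) f) := by
  induction f using MvPolynomial.induction_on with
  | C a => simp [normalOrder_C, Algebra.commutes]
  | add p q hp hq => simp only [map_add, mul_add, add_mul, hp, hq]; abel
  | mul_X p s hp =>
    rw [mul_comm p, Derivation.leibniz, smul_eq_mul, smul_eq_mul, map_add]
    rcases s with j | j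
    · rw [normalOrder_X_inl_mul, normalOrder_X_inl_mul, mul_assoc, hp, mul_add, ← mul_assoc,
        isWeylFamily_gen.xx]
      simp [pderiv_X, mul_assoc]
    · rw [normalOrder_X_inr_mul, normalOrder_X_inr_mul, mul_assoc, isWeylFamily_gen.dx, mul_add,
        ← mul_assoc, hp, add_mul]
      split_ifs with h
      · subst h
        simp [mul_assoc]
        abel
      · simp [pderiv_X, h, mul_assoc]

theorem normalOrder_symbolRep (a : WeylAlgebra R n) (f : MvPolynomial (Index n) R) :
    normalOrder (symbolRep a f) = a * normalOrder f := by
  induction a using induction_left with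
  | one => simp
  | add a b ha hb => simp [add_mul, ha, hb]
  | smul r a ha => simp [ha]
  | gen_mul s a ha =>
    rw [map_mul, Module.End.mul_apply, mul_assoc, ← ha, symbolRep_gen]
    rcases s with i | i
    · simp [symbolOp, normalOrder_X_inl_mul]
    · simp [symbolOp, normalOrder_X_inr_mul, gen_inr_mul_normalOrder]

theorem symbolRep_normalOrder (f : MvPolynomial (Index n) R) :
    symbolRep (normalOrder f) 1 = f := by
  induction f using MvPolynomial.induction_on with
  | C a => rw [normalOrder_C, AlgHom.commutes, Module.algebraMap_end_apply, smul_eq_C_mul, mul_one]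
  | add p q hp hq => simp [hp, hq]
  | mul_X p s hp =>
    rw [mul_comm p]
    rcases s with j | j
    · simp [normalOrder_X_inl_mul, symbolOp, hp]
    · have h := symbolRep_X_inr_mul (normalOrder p) j 1
      rw [hp, mul_one] at h
      simp [normalOrder_X_inr_mul, symbolOp, h]

/-- The symbol of a differential operator, with respect to normal ordering. -/
noncomputable def symbol : WeylAlgebra R n ≃ₗ[R] MvPolynomial (Index n) R :=
  LinearEquiv.ofLinearMap ((LinearMap.applyₗ (1 : MvPolynomial (Index n) R)).comp
      symbolRep.toLinearMap) normalOrder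
    (LinearMap.ext symbolRep_normalOrder)
    (LinearMap.ext fun a ↦ by simpa using normalOrder_symbolRep a 1)

theorem symbol_apply (a : WeylAlgebra R n) : symbol a = symbolRep a 1 := rfl

@[simp]
theorem symbol_normalOrder (f : MvPolynomial (Index n) R) : symbol (normalOrder f) = f :=
  symbol.apply_symm_apply f

@[simp]
theorem normalOrder_symbol (a : WeylAlgebra R n) : normalOrder (symbol a) = a :=
  symbol.symm_apply_apply a

@[simp]
theorem symbol_one : symbol (1 : WeylAlgebra R n) = 1 := by
  simp [symbol_apply]

@[simp]
theorem symbol_algebraMap (r : R) : symbol (algebraMap R (WeylAlgebra R n) r) = C r := by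
  rw [← normalOrder_C, symbol_normalOrder]

theorem symbol_gen_inl_mul (i : Fin n) (a : WeylAlgebra R n) :
    symbol (gen R (.inl i) * a) = X (.inl i) * symbol a := by
  simp [symbol_apply, symbolOp]

theorem symbol_gen_inr_mul (i : Fin n) (a : WeylAlgebra R n) :
    symbol (gen R (.inr i) * a) = X (.inr i) * symbol a + pderiv (.inl i) (symbol a) := by
  simp [symbol_apply, symbolOp]

theorem symbol_mul_gen_inr (i : Fin n) (a : WeylAlgebra R n) :
    symbol (a * gen R (.inr i)) = X (.inr i) * symbol a := by
  have h := congrArg symbol (normalOrder_X_inr_mul i (symbol a))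
  rwa [symbol_normalOrder, normalOrder_symbol, eq_comm] at h

theorem symbol_mul_gen_inl (i : Fin n) (a : WeylAlgebra R n) :
    symbol (a * gen R (.inl i)) = X (.inl i) * symbol a + pderiv (.inr i) (symbol a) := by
  have h := congrArg symbol (normalOrder_mul_gen_inl i (symbol a))
  rwa [map_add, normalOrder_symbol, symbol_normalOrder, symbol_gen_inl_mul] at h

end NormalOrdering

/-! ### Inner derivations -/

section InnerDerivations

variable {R : Type*} [CommRing R] {n : ℕ} {B : Type*} [Ring B] [Algebra R B]

/-- The inner derivations `[g_{∂_i}, ·]` and `[·, g_{x_i}]` of a family `g`; for the generators of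
the Weyl algebra these are the partial derivatives of symbols. -/
noncomputable def innerDer (R : Type*) [CommRing R] [Algebra R B] (g : Index n → B) :
    Index n → Module.End R B :=
  Sum.elim (fun i ↦ LinearMap.mulLeft R (g (.inr i)) - LinearMap.mulRight R (g (.inr i)))
    (fun i ↦ LinearMap.mulRight R (g (.inl i)) - LinearMap.mulLeft R (g (.inl i)))

theorem innerDer_inl (g : Index n → B) (i : Fin n) (b : B) :
    innerDer R g (.inl i) b = g (.inr i) * b - b * g (.inr i) := rfl

theorem innerDer_inr (g : Index n → B) (i : Fin n) (b : B) :
    innerDer R g (.inr i) b = b * g (.inl i) - g (.inl i) * b := rfl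

theorem symbol_innerDer_gen (s : Index n) (a : WeylAlgebra R n) :
    symbol (innerDer R (gen R) s a) = pderiv s (symbol a) := by
  rcases s with i | i
  · rw [innerDer_inl, map_sub, symbol_gen_inr_mul, symbol_mul_gen_inr, add_sub_cancel_left]
  · rw [innerDer_inr, map_sub, symbol_mul_gen_inl, symbol_gen_inl_mul, add_sub_cancel_left]

end InnerDerivations

/-! ### Base change -/

section BaseChange

variable {R R' : Type*} [CommRing R] [CommRing R'] {n : ℕ}

/-- Extension of scalars `A_n(R) → A_n(R')` along a ring homomorphism. -/
noncomputable def map (f : R →+* R') : WeylAlgebra R n →+* WeylAlgebra R' n :=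
  letI : Algebra R (WeylAlgebra R' n) := ((algebraMap R' (WeylAlgebra R' n)).comp f).toAlgebra'
    fun c x ↦ Algebra.commutes (f c) x
  (lift (R := R) (gen R') isWeylFamily_gen).toRingHom

@[simp]
theorem map_gen (f : R →+* R') (s : Index n) : map f (gen R s) = gen R' s :=
  letI : Algebra R (WeylAlgebra R' n) := ((algebraMap R' (WeylAlgebra R' n)).comp f).toAlgebra'
    fun c x ↦ Algebra.commutes (f c) x
  lift_gen _ _ _

@[simp]
theorem map_algebraMap (f : R →+* R') (r : R) :
    map f (algebraMap R (WeylAlgebra R n) r) = algebraMap R' (WeylAlgebra R' n) (f r) :=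
  letI : Algebra R (WeylAlgebra R' n) := ((algebraMap R' (WeylAlgebra R' n)).comp f).toAlgebra'
    fun c x ↦ Algebra.commutes (f c) x
  (lift (R := R) (n := n) (gen R') isWeylFamily_gen).commutes r

theorem map_normalOrder (f : R →+* R') (g : MvPolynomial (Index n) R) :
    map f (normalOrder g) = normalOrder (MvPolynomial.map f g) := by
  induction g using MvPolynomial.induction_on with
  | C a => rw [map_C, normalOrder_C, normalOrder_C, map_algebraMap]
  | add p q hp hq => simp [hp, hq]
  | mul_X p s hp =>
    rw [mul_comm p, map_mul (MvPolynomial.map f), map_X]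
    rcases s with j | j
    · rw [normalOrder_X_inl_mul, normalOrder_X_inl_mul, map_mul, hp, map_gen]
    · rw [normalOrder_X_inr_mul, normalOrder_X_inr_mul, map_mul, hp, map_gen]

theorem symbol_map (f : R →+* R') (a : WeylAlgebra R n) :
    symbol (map f a) = MvPolynomial.map f (symbol a) := by
  conv_lhs => rw [← normalOrder_symbol a]
  rw [map_normalOrder, symbol_normalOrder]

end BaseChange

/-! ### The degree filtration -/

section PolynomialDegree

variable {R : Type*} [CommRing R] {τ : Type*}

/-- The polynomials all of whose monomials have degree `< k`. Unlike a bound on `totalDegree`, this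
is a submodule which for `k = 0` contains only zero. -/
noncomputable def degreeLT (R : Type*) [CommRing R] (τ : Type*) (k : ℕ) :
    Submodule R (MvPolynomial τ R) :=
  restrictSupport R {m | m.degree < k}

theorem mem_degreeLT_succ {k : ℕ} {f : MvPolynomial τ R} :
    f ∈ degreeLT R τ (k + 1) ↔ f.totalDegree ≤ k := by
  rw [degreeLT, mem_restrictSupport_iff, totalDegree, Finset.sup_le_iff]
  exact forall₂_congr fun m _ ↦ Nat.lt_succ_iff

theorem degreeLT_mono {k j : ℕ} (h : k ≤ j) : degreeLT R τ k ≤ degreeLT R τ j :=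
  restrictSupport_mono R fun _ hm ↦ lt_of_lt_of_le hm h

theorem degreeLT_zero : degreeLT R τ 0 = ⊥ := by
  simp [degreeLT, restrictSupport_eq_span]

theorem monomial_mem_degreeLT {k : ℕ} {m : τ →₀ ℕ} (r : R) (h : m.degree < k) :
    monomial m r ∈ degreeLT R τ k :=
  (monomial_mem_restrictSupport R).2 (Or.inl h)

theorem mul_mem_degreeLT {k j : ℕ} {f g : MvPolynomial τ R} (hf : f ∈ degreeLT R τ (k + 1))
    (hg : g ∈ degreeLT R τ j) : f * g ∈ degreeLT R τ (k + j) := by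
  have h := Submodule.mul_mem_mul hf hg
  rw [degreeLT, degreeLT, ← restrictSupport_add] at h
  refine restrictSupport_mono R ?_ h
  rintro _ ⟨m, hm, m', hm', rfl⟩
  simp only [Set.mem_ofPred_eq, map_add] at *
  omega

theorem X_mul_mem_degreeLT {k : ℕ} (s : τ) {f : MvPolynomial τ R} (hf : f ∈ degreeLT R τ k) :
    X s * f ∈ degreeLT R τ (k + 1) := by
  rw [add_comm]
  exact mul_mem_degreeLT (monomial_mem_degreeLT _ (by simp [Finsupp.degree_single])) hf

theorem exists_eq_single_add {m : τ →₀ ℕ} (hm : m ≠ 0) :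
    ∃ s m', m = Finsupp.single s 1 + m' ∧ m.degree = m'.degree + 1 := by
  obtain ⟨s, hs⟩ := Finsupp.ne_iff.1 hm
  have h : m = Finsupp.single s 1 + (m - Finsupp.single s 1) :=
    (add_tsub_cancel_of_le (by simpa [Nat.one_le_iff_ne_zero] using hs)).symm
  exact ⟨s, _, h, by conv_lhs => rw [h, map_add, Finsupp.degree_single, add_comm]⟩

theorem pderiv_mem_degreeLT {k : ℕ} (s : τ) {f : MvPolynomial τ R}
    (hf : f ∈ degreeLT R τ (k + 1)) : pderiv s f ∈ degreeLT R τ k := by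
  classical
  rw [degreeLT, restrictSupport_eq_span] at hf
  induction hf using Submodule.span_induction with
  | mem _ hf =>
    obtain ⟨m, hm, rfl⟩ := hf
    rw [pderiv_monomial]
    by_cases hms : m s = 0
    · simp [hms]
    · have h : m - Finsupp.single s 1 + Finsupp.single s 1 = m :=
        tsub_add_cancel_of_le (by simpa [Nat.one_le_iff_ne_zero] using hms)
      have hdeg := congrArg Finsupp.degree h
      rw [map_add, Finsupp.degree_single] at hdeg
      exact monomial_mem_degreeLT _ (by simp only [Set.mem_ofPred_eq] at hm; omega)
  | zero => simp
  | add f g _ _ hf hg => rw [map_add]; exact add_mem hf hg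
  | smul r f _ hf => rw [Derivation.map_smul]; exact Submodule.smul_mem _ r hf

theorem totalDegree_eq_of_sub_mem_degreeLT {f g : MvPolynomial τ R} (hf : f ≠ 0)
    (h : g - f ∈ degreeLT R τ f.totalDegree) : g ≠ 0 ∧ g.totalDegree = f.totalDegree := by
  rcases hd : f.totalDegree with _ | d
  · rw [hd, degreeLT_zero, Submodule.mem_bot, sub_eq_zero] at h
    exact ⟨h ▸ hf, h ▸ hd⟩
  · rw [hd, mem_degreeLT_succ] at h
    have hg : g.totalDegree = d + 1 := by
      have h' := totalDegree_add_eq_left_of_totalDegree_lt (p := f) (q := g - f) (by omega)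
      rwa [add_sub_cancel, hd] at h'
    exact ⟨by rintro rfl; simp at hg, hg⟩

end PolynomialDegree

section SymbolDegree

variable {R : Type*} [CommRing R] {n : ℕ}

theorem symbol_normalOrder_monomial_mul_sub_mem (m : Index n →₀ ℕ) {j : ℕ} {b : WeylAlgebra R n}
    (hb : symbol b ∈ degreeLT R (Index n) (j + 1)) :
    symbol (normalOrder (monomial m 1) * b) - monomial m 1 * symbol b ∈
      degreeLT R (Index n) (m.degree + j) := by
  induction hk : m.degree generalizing m j b with
  | zero =>
    obtain rfl := (Finsupp.degree_eq_zero_iff m).1 hk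
    simp [show monomial (0 : Index n →₀ ℕ) (1 : R) = 1 from rfl]
  | succ k ih =>
    obtain ⟨s, m, rfl, hdeg⟩ := exists_eq_single_add (m := m) (by rintro rfl; simp at hk)
    have hm : m.degree = k := by omega
    rw [monomial_single_add, pow_one]
    rcases s with i | i
    · rw [normalOrder_X_inl_mul, mul_assoc, symbol_gen_inl_mul, mul_assoc, ← mul_sub]
      exact degreeLT_mono (by omega) (X_mul_mem_degreeLT _ (ih m hb hm))
    · have hpd := pderiv_mem_degreeLT (.inl i) hb
      have hgb : symbol (gen R (.inr i) * b) ∈ degreeLT R (Index n) (j + 1 + 1) := by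
        rw [symbol_gen_inr_mul]
        exact add_mem (X_mul_mem_degreeLT _ hb) (degreeLT_mono (by omega) hpd)
      have hlow : monomial m (1 : R) * pderiv (.inl i) (symbol b) ∈
          degreeLT R (Index n) (k + 1 + j) :=
        degreeLT_mono (by omega)
          (mul_mem_degreeLT (monomial_mem_degreeLT _ (by omega : m.degree < k + 1)) hpd)
      rw [normalOrder_X_inr_mul, mul_assoc]
      convert add_mem (degreeLT_mono (by omega) (ih m hgb hm)) hlow using 1
      rw [symbol_gen_inr_mul]
      ring

theorem symbol_mul_sub_mem_degreeLT {k j : ℕ} {a b : WeylAlgebra R n}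
    (ha : symbol a ∈ degreeLT R (Index n) (k + 1)) (hb : symbol b ∈ degreeLT R (Index n) (j + 1)) :
    symbol (a * b) - symbol a * symbol b ∈ degreeLT R (Index n) (k + j) := by
  suffices h : ∀ f ∈ degreeLT R (Index n) (k + 1),
      symbol (normalOrder f * b) - f * symbol b ∈ degreeLT R (Index n) (k + j) by
    simpa using h _ ha
  intro f hf
  rw [degreeLT, restrictSupport_eq_span] at hf
  induction hf using Submodule.span_induction with
  | mem _ hf =>
    obtain ⟨m, hm, rfl⟩ := hf
    simp only [Set.mem_ofPred_eq] at hm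
    exact degreeLT_mono (by omega) (symbol_normalOrder_monomial_mul_sub_mem m hb)
  | zero => simp
  | add f g _ _ hf hg =>
    rw [map_add, add_mul, add_mul, map_add, add_sub_add_comm]
    exact add_mem hf hg
  | smul r f _ hf =>
    rw [map_smul, smul_mul_assoc, smul_mul_assoc, map_smul, ← smul_sub]
    exact Submodule.smul_mem _ r hf

theorem totalDegree_symbol_mul_le (a b : WeylAlgebra R n) :
    (symbol (a * b)).totalDegree ≤ (symbol a).totalDegree + (symbol b).totalDegree := by
  have ha := mem_degreeLT_succ.2 (le_refl (symbol a).totalDegree)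
  have hb := mem_degreeLT_succ.2 (le_refl (symbol b).totalDegree)
  refine mem_degreeLT_succ.1 ?_
  rw [← sub_add_cancel (symbol (a * b)) (symbol a * symbol b)]
  exact add_mem (degreeLT_mono (Nat.le_succ _) (symbol_mul_sub_mem_degreeLT ha hb))
    (mem_degreeLT_succ.2 (totalDegree_mul _ _))

variable [IsDomain R]

theorem symbol_mul_ne_zero_and_totalDegree {a b : WeylAlgebra R n} (ha : a ≠ 0) (hb : b ≠ 0) :
    symbol (a * b) ≠ 0 ∧
      (symbol (a * b)).totalDegree = (symbol a).totalDegree + (symbol b).totalDegree := by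
  have ha' : symbol a ≠ 0 := symbol.map_ne_zero_iff.2 ha
  have hb' : symbol b ≠ 0 := symbol.map_ne_zero_iff.2 hb
  rw [← totalDegree_mul_of_isDomain ha' hb']
  refine totalDegree_eq_of_sub_mem_degreeLT (mul_ne_zero ha' hb') ?_
  rw [totalDegree_mul_of_isDomain ha' hb']
  exact symbol_mul_sub_mem_degreeLT (mem_degreeLT_succ.2 le_rfl) (mem_degreeLT_succ.2 le_rfl)

instance : NoZeroDivisors (WeylAlgebra R n) where
  eq_zero_or_eq_zero_of_mul_eq_zero {a b} hab := by
    by_contra! h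
    exact (symbol_mul_ne_zero_and_totalDegree h.1 h.2).1 (by rw [hab, map_zero])

instance : Nontrivial (WeylAlgebra R n) := symbol.toEquiv.nontrivial

theorem totalDegree_symbol_pow {a : WeylAlgebra R n} (ha : a ≠ 0) (e : ℕ) :
    (symbol (a ^ e)).totalDegree = e * (symbol a).totalDegree := by
  induction e with
  | zero => simp
  | succ e ih =>
    rw [pow_succ, (symbol_mul_ne_zero_and_totalDegree (pow_ne_zero e ha) ha).2, ih, add_one_mul]

end SymbolDegree

/-! ### Derivations in characteristic `p` -/

section DerivationPow

variable {p : ℕ} [Fact p.Prime] {Z : Type*} [CommRing Z] [Algebra (ZMod p) Z]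

theorem leibniz_pow_char {T : Module.End (ZMod p) Z}
    (hT : ∀ a b, T (a * b) = T a * b + a * T b) (a b : Z) :
    (T ^ p) (a * b) = (T ^ p) a * b + a * (T ^ p) b := by
  let S : Module.End (ZMod p) (TensorProduct (ZMod p) Z Z) := T.rTensor Z + T.lTensor Z
  let μ := LinearMap.mul' (ZMod p) Z
  have mul_S : μ ∘ₗ S = T ∘ₗ μ := by
    ext x y
    simp [μ, S, hT]
  have mul_S_pow (k : ℕ) : μ ∘ₗ (S ^ k) = (T ^ k) ∘ₗ μ := by
    induction k with
    | zero => rfl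
    | succ k ih =>
      rw [pow_succ', Module.End.mul_eq_comp, ← LinearMap.comp_assoc, mul_S, LinearMap.comp_assoc,
        ih, ← LinearMap.comp_assoc, pow_succ', Module.End.mul_eq_comp]
  have S_pow : S ^ p = (T ^ p).rTensor Z + (T ^ p).lTensor Z := by
    have hcomm : Commute (T.rTensor Z) (T.lTensor Z) := by
      ext x y
      simp
    rcases subsingleton_or_nontrivial (Module.End (ZMod p) (TensorProduct (ZMod p) Z Z)) with h | h
    · exact Subsingleton.elim _ _
    · have := charP_of_injective_algebraMap
        (algebraMap (ZMod p) (Module.End (ZMod p) (TensorProduct (ZMod p) Z Z))).injective p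
      rw [show S ^ p = _ from add_pow_char_of_commute p hcomm, LinearMap.rTensor_pow,
        LinearMap.lTensor_pow]
  simpa [μ, S_pow] using (LinearMap.congr_fun (mul_S_pow p) (a ⊗ₜ[ZMod p] b)).symm

/-- The `p`-th iterate of a derivation in characteristic `p`. -/
noncomputable def derivationPowChar (D : Derivation (ZMod p) Z Z) : Derivation (ZMod p) Z Z :=
  Derivation.mk' ((D : Module.End (ZMod p) Z) ^ p) fun a b ↦ by
    rw [leibniz_pow_char (fun a b ↦ by simp [mul_comm, add_comm]), smul_eq_mul, smul_eq_mul]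
    ring

theorem derivationPowChar_apply (D : Derivation (ZMod p) Z Z) (z : Z) :
    derivationPowChar D z = ((D : Module.End (ZMod p) Z) ^ p) z := rfl

end DerivationPow

section Eigenvectors

variable {F V : Type*} [Field F] [AddCommGroup V] [Module F V]

theorem nodal_univ_eq_X_pow_card_sub_X [Fintype F] :
    Lagrange.nodal Finset.univ (id : F → F) = Polynomial.X ^ Fintype.card F - Polynomial.X := by
  have hcard := Fintype.one_lt_card (α := F)
  have hmonic : (Polynomial.X ^ Fintype.card F - Polynomial.X : Polynomial F).Monic :=
    Polynomial.monic_X_pow_sub (by rw [Polynomial.degree_X]; exact_mod_cast hcard)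
  have hroots := FiniteField.roots_X_pow_card_sub_X F
  have h := Polynomial.prod_multiset_X_sub_C_of_monic_of_roots_card_eq hmonic (by
    rw [hroots, FiniteField.X_pow_card_sub_X_natDegree_eq F hcard, Finset.card_val,
      Finset.card_univ])
  rw [Lagrange.nodal_eq, ← h, hroots]
  rfl

theorem exists_sum_eigenvectors_of_pow_card_eq [Fintype F] {T : Module.End F V}
    (hT : T ^ Fintype.card F = T) (v : V) :
    ∃ u : F → V, v = ∑ a, u a ∧ ∀ a, T (u a) = a • u a := by
  classical
  let b (a : F) : Polynomial F := Lagrange.basis Finset.univ id a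
  have sum_b : ∑ a, b a = 1 := Lagrange.sum_basis (Set.injOn_id _) Finset.univ_nonempty
  have aeval_nodal : Polynomial.aeval T (Lagrange.nodal Finset.univ (id : F → F)) = 0 := by
    simp [nodal_univ_eq_X_pow_card_sub_X, hT]
  have mul_b (a : F) : (Polynomial.X - Polynomial.C a) * b a =
      Polynomial.C (Lagrange.nodalWeight Finset.univ id a) * Lagrange.nodal Finset.univ id := by
    have hdvd := Lagrange.X_sub_C_dvd_nodal (id : F → F) (Finset.mem_univ a)
    rw [show b a = _ from Lagrange.basis_eq_prod_sub_inv_mul_nodal_div (Finset.mem_univ a),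
      mul_left_comm, id_eq, EuclideanDomain.mul_div_cancel' (Polynomial.X_sub_C_ne_zero a) hdvd]
  refine ⟨fun a ↦ Polynomial.aeval T (b a) v, ?_, fun a ↦ ?_⟩
  · rw [← LinearMap.sum_apply, ← map_sum, sum_b, map_one, Module.End.one_apply]
  · have h := congr(Polynomial.aeval T $(mul_b a) v)
    simp only [map_mul, map_sub, Polynomial.aeval_X, Polynomial.aeval_C, aeval_nodal, mul_zero,
      LinearMap.zero_apply, Module.End.mul_apply, LinearMap.sub_apply,
      Module.algebraMap_end_apply] at h
    exact sub_eq_zero.1 h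

theorem sum_filter_eigenvectors_eq_zero {ι : Type*} [DecidableEq F] {T : Module.End F V}
    {s : Finset ι} {v : ι → V} {e : ι → F} (hv : ∀ i ∈ s, T (v i) = e i • v i)
    (hs : ∑ i ∈ s, v i = 0) (b : F) : ∑ i ∈ s with e i = b, v i = 0 := by
  have hindep := (iSupIndep_iff_finsetSum_eq_zero_imp_eq_zero _).1 T.eigenspaces_iSupIndep
    (insert b (s.image e)) (fun a ↦ ∑ i ∈ s with e i = a, v i)
  refine hindep (fun a _ ↦ Submodule.sum_mem _ fun i hi ↦ ?_) ?_ b (Finset.mem_insert_self _ _)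
  · obtain ⟨his, rfl⟩ := Finset.mem_filter.1 hi
    exact Module.End.mem_eigenspace_iff.2 (hv i his)
  · rw [Finset.sum_fiberwise_of_maps_to
      fun i hi ↦ Finset.mem_insert_of_mem (Finset.mem_image_of_mem e hi), hs]

theorem derivation_mul_eigenvector {Z : Type*} [CommRing Z] [Algebra F Z] {E : Derivation F Z Z}
    {y z : Z} {i j : F} (hy : E y = i • y) (hz : E z = j • z) :
    E (y * z) = (i + j) • (y * z) := by
  simp only [E.leibniz, hy, hz, smul_eq_mul, Algebra.smul_def, map_add]
  ring

theorem derivation_pow_eigenvector {Z : Type*} [CommRing Z] [Algebra F Z] {E : Derivation F Z Z}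
    {y : Z} {i : F} (hy : E y = i • y) (k : ℕ) : E (y ^ k) = (k * i) • y ^ k := by
  rw [E.leibniz_pow, hy]
  rcases k with _ | k
  · simp
  · simp only [Nat.add_sub_cancel, smul_eq_mul, mul_smul_comm, ← pow_succ, mul_smul,
      Nat.cast_smul_eq_nsmul]

end Eigenvectors

/-- Every element of `Z` satisfies a nonzero polynomial equation of degree at most `m` over `R`. -/
def AlgebraicOfDegreeLE (R Z : Type*) [CommRing R] [CommRing Z] [Algebra R Z] (m : ℕ) : Prop :=
  ∀ z : Z, ∃ f : Polynomial R, f ≠ 0 ∧ f.natDegree ≤ m ∧ Polynomial.aeval z f = 0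

section SmallDegree

variable {p : ℕ} {R Z : Type*} [CommRing R] [IsDomain R] [CharP R p] [CommRing Z]
  [IsDomain Z] [Algebra R Z] [FaithfulSMul R Z]

theorem derivative_ne_zero_of_natDegree_lt_char {f : Polynomial R} (h0 : f.natDegree ≠ 0)
    (hp : f.natDegree < p) : f.derivative ≠ 0 := by
  intro h
  obtain ⟨k, hk⟩ := Nat.exists_eq_add_one_of_ne_zero h0
  have hcoeff := congr(Polynomial.coeff $h k)
  rw [Polynomial.coeff_derivative, Polynomial.coeff_zero, ← Nat.cast_succ, ← hk, mul_eq_zero,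
    Polynomial.coeff_natDegree, Polynomial.leadingCoeff_eq_zero,
    CharP.cast_eq_zero_iff R p] at hcoeff
  rcases hcoeff with rfl | hdvd
  · exact h0 Polynomial.natDegree_zero
  · exact h0 (Nat.eq_zero_of_dvd_of_lt (hk ▸ hdvd) hp)

theorem derivation_apply_eq_zero_of_aeval_eq_zero (D : Derivation R Z Z) (z : Z) {N : ℕ} :
    ∀ f : Polynomial R, f ≠ 0 → f.natDegree = N → N < p → Polynomial.aeval z f = 0 → D z = 0 := by
  induction N using Nat.strong_induction_on with
  | h N ih =>
    rintro f hf rfl hlt hz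
    have hdegree : f.natDegree ≠ 0 := by
      intro h0
      rw [Polynomial.eq_C_of_natDegree_eq_zero h0, Polynomial.aeval_C,
        FaithfulSMul.algebraMap_eq_zero_iff] at hz
      exact hf (by rw [Polynomial.eq_C_of_natDegree_eq_zero h0, hz, map_zero])
    have hderiv := derivative_ne_zero_of_natDegree_lt_char hdegree hlt
    have hdrop := Polynomial.natDegree_derivative_lt hdegree
    have h : Polynomial.aeval z f.derivative • D z = 0 := by rw [← D.map_aeval, hz, map_zero]
    rcases smul_eq_zero.1 h with hz' | hD
    · exact ih _ hdrop _ hderiv rfl (hdrop.trans hlt) hz'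
    · exact hD

theorem AlgebraicOfDegreeLE.derivation_eq_zero {m : ℕ} (h : AlgebraicOfDegreeLE R Z m)
    (hm : m < p) (D : Derivation R Z Z) : D = 0 := by
  ext z
  obtain ⟨f, hf, hdeg, hz⟩ := h z
  exact derivation_apply_eq_zero_of_aeval_eq_zero D z f hf rfl (hdeg.trans_lt hm) hz

end SmallDegree

section PolynomialExtension

variable {p : ℕ} [Fact p.Prime] {σ Z : Type*} [CommRing Z] [IsDomain Z] [Algebra (ZMod p) Z]
  [Algebra (MvPolynomial σ (ZMod p)) Z] [IsScalarTower (ZMod p) (MvPolynomial σ (ZMod p)) Z]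
  [FaithfulSMul (MvPolynomial σ (ZMod p)) Z] {m : ℕ}

theorem AlgebraicOfDegreeLE.derivation_ext
    (h : AlgebraicOfDegreeLE (MvPolynomial σ (ZMod p)) Z m) (hm : m < p)
    {D E : Derivation (ZMod p) Z Z}
    (hX : ∀ s : σ, D (algebraMap (MvPolynomial σ (ZMod p)) Z (X s)) =
      E (algebraMap (MvPolynomial σ (ZMod p)) Z (X s))) : D = E := by
  let B : Derivation (ZMod p) Z Z := D - E
  have hB (f : MvPolynomial σ (ZMod p)) : B (algebraMap (MvPolynomial σ (ZMod p)) Z f) = 0 := by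
    have : B.compAlgebraMap (MvPolynomial σ (ZMod p)) = 0 :=
      MvPolynomial.derivation_ext fun s ↦ sub_eq_zero.2 (hX s)
    exact congr($this f)
  let B' : Derivation (MvPolynomial σ (ZMod p)) Z Z := Derivation.mk'
    { toFun := B
      map_add' := map_add B
      map_smul' := fun f z ↦ by simp [Algebra.smul_def, hB] } B.leibniz
  have hB' : B' = 0 := h.derivation_eq_zero hm B'
  ext z
  exact sub_eq_zero.1 congr($hB' z)

end PolynomialExtension

/-! ### Euler derivations and extensions of the degree valuation -/

section Shift

variable {R σ : Type*} [CommRing R] (v : σ → R)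

/-- The translation `X_s ↦ X_s - v_s` of the polynomial ring. -/
noncomputable def shift : MvPolynomial σ R →ₐ[R] MvPolynomial σ R :=
  aeval fun s ↦ X s - C (v s)

theorem shift_shift_neg (f : MvPolynomial σ R) : shift v (shift (-v) f) = f := by
  have h : (shift v).comp (shift (-v)) = AlgHom.id R _ := by
    ext s
    simp [shift]
  exact congr($h f)

theorem totalDegree_shift_le (f : MvPolynomial σ R) : (shift v f).totalDegree ≤ f.totalDegree := by
  rw [shift, aeval_def, eval₂_eq]
  refine totalDegree_finsetSum_le fun d hd ↦ (totalDegree_mul _ _).trans ?_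
  have hX (s : σ) : (X s - C (v s)).totalDegree ≤ 1 := by
    rcases subsingleton_or_nontrivial R with h | h
    · simp [Subsingleton.elim (X s - C (v s)) 0]
    · exact (totalDegree_sub _ _).trans (by simp)
  calc _ ≤ 0 + ∑ s ∈ d.support, d s := by
        gcongr
        · simp [algebraMap_eq]
        · refine (totalDegree_finsetProd _ _).trans (Finset.sum_le_sum fun s _ ↦ ?_)
          exact (totalDegree_pow _ _).trans (by simpa using Nat.mul_le_mul_left (d s) (hX s))
    _ ≤ f.totalDegree := by
        rw [zero_add]
        exact le_totalDegree hd

theorem totalDegree_shift (f : MvPolynomial σ R) : (shift v f).totalDegree = f.totalDegree := by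
  refine (totalDegree_shift_le v f).antisymm ?_
  have h := totalDegree_shift_le (-v) (shift v f)
  have hid := shift_shift_neg (-v) f
  rw [neg_neg] at hid
  rwa [hid] at h

end Shift

theorem derivation_aeval_of_isHomogeneous {F σ Z : Type*} [Field F] [CommRing Z] [Algebra F Z]
    {E : Derivation F Z Z} {y : σ → Z} (hE : ∀ s, E (y s) = y s) {h : MvPolynomial σ F} {k : ℕ}
    (hh : h.IsHomogeneous k) : E (aeval y h) = (k : F) • aeval y h := by
  have hmonomial (d : σ →₀ ℕ) :
      E (d.prod fun s e ↦ y s ^ e) = (d.degree : F) • d.prod fun s e ↦ y s ^ e := by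
    induction d using Finsupp.induction_linear with
    | zero => simp
    | add d e hd he =>
      rw [Finsupp.prod_add_index' (by simp) (by simp [pow_add]),
        derivation_mul_eigenvector hd he, map_add, Nat.cast_add]
    | single s e =>
      have hs : E (y s) = (1 : F) • y s := by rw [hE, one_smul]
      simpa using derivation_pow_eigenvector hs e
  rw [aeval_def, eval₂_eq, map_sum, Finset.smul_sum]
  refine Finset.sum_congr rfl fun d hd ↦ ?_
  have hdeg : d.degree = k := by
    rw [Finsupp.degree_eq_weight_one]
    exact hh (mem_support_iff.1 hd)
  rw [← Algebra.smul_def, E.map_smul, smul_comm, ← hdeg]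
  exact congrArg _ (hmonomial d)

section Valuations

variable {p : ℕ} [Fact p.Prime] {σ Z : Type*} [CommRing Z] [Algebra (ZMod p) Z]
  [Algebra (MvPolynomial σ (ZMod p)) Z]

/-- `E` multiplies the homogeneous components of a polynomial, taken with respect to coordinates
that may be translated, by their degrees. -/
def ActsByDegree (σ : Type*) [Algebra (MvPolynomial σ (ZMod p)) Z]
    (E : Derivation (ZMod p) Z Z) : Prop :=
  ∀ f : MvPolynomial σ (ZMod p), ∃ g : ℕ → MvPolynomial σ (ZMod p),
    f = ∑ k ∈ Finset.range (f.totalDegree + 1), g k ∧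
    ∀ k, E (algebraMap _ Z (g k)) = (k : ZMod p) • algebraMap _ Z (g k) ∧
      (g k ≠ 0 → (g k).totalDegree = k)

theorem actsByDegree_of_apply_X_sub_C [IsScalarTower (ZMod p) (MvPolynomial σ (ZMod p)) Z]
    {E : Derivation (ZMod p) Z Z} (v : σ → ZMod p)
    (hE : ∀ s, E (algebraMap (MvPolynomial σ (ZMod p)) Z (X s - C (v s))) =
      algebraMap (MvPolynomial σ (ZMod p)) Z (X s - C (v s))) : ActsByDegree σ E := by
  intro f
  refine ⟨fun k ↦ shift v (homogeneousComponent k (shift (-v) f)), ?_, fun k ↦ ⟨?_, fun hk ↦ ?_⟩⟩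
  · rw [← map_sum, ← totalDegree_shift (-v) f, sum_homogeneousComponent, shift_shift_neg]
  · have h := derivation_aeval_of_isHomogeneous hE
      (homogeneousComponent_isHomogeneous k (shift (-v) f))
    rwa [show aeval (fun s ↦ algebraMap (MvPolynomial σ (ZMod p)) Z (X s - C (v s))) _ =
      algebraMap (MvPolynomial σ (ZMod p)) Z (shift v _) from aeval_algebraMap_apply _ _ _] at h
  · rw [totalDegree_shift]
    exact (homogeneousComponent_isHomogeneous k _).totalDegree fun h ↦ hk (by simp [h])

variable {Γ₀ : Type*} [LinearOrderedCommGroupWithZero Γ₀]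

/-- The valuation `w` of `Z` is faithful and restricts to `f ↦ q ^ deg f` on nonzero polynomials,
where `q > 1`. -/
structure ExtendsDegree (p : ℕ) (σ : Type*) {Z : Type*} [CommRing Z]
    [Algebra (MvPolynomial σ (ZMod p)) Z] {Γ₀ : Type*} [LinearOrderedCommGroupWithZero Γ₀]
    (w : Valuation Z Γ₀) (q : Γ₀) : Prop where
  one_lt : 1 < q
  ne_zero : ∀ z, z ≠ 0 → w z ≠ 0
  apply_algebraMap : ∀ f : MvPolynomial σ (ZMod p), f ≠ 0 →
    w (algebraMap _ Z f) = q ^ f.totalDegree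

theorem valuation_apply_le_sum_of_injOn {R ι : Type*} [Ring R] (w : Valuation R Γ₀) {s : Finset ι}
    {t : ι → R} (ht : ∀ i ∈ s, ∀ j ∈ s, w (t i) ≠ 0 → w (t i) = w (t j) → i = j) {i : ι}
    (hi : i ∈ s) : w (t i) ≤ w (∑ j ∈ s, t j) := by
  classical
  obtain ⟨k, hk, hmax⟩ := Finset.exists_max_image s (fun j ↦ w (t j)) ⟨i, hi⟩
  refine (hmax i hi).trans ?_
  by_cases h0 : w (t k) = 0
  · simp [h0]
  have hrest : w (∑ j ∈ s.erase k, t j) < w (t k) := by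
    refine w.map_sum_lt h0 fun j hj ↦ ?_
    obtain ⟨hjk, hjs⟩ := Finset.mem_erase.1 hj
    exact (hmax j hjs).lt_of_ne fun h ↦ hjk (ht k hk j hjs h0 h.symm).symm
  rw [← Finset.add_sum_erase s t hk, w.map_add_eq_of_lt_left hrest]

end Valuations

section EulerValuation

variable {p : ℕ} {σ Z : Type*} [CommRing Z] [Algebra (MvPolynomial σ (ZMod p)) Z] {m : ℕ}
  {Γ₀ : Type*} [LinearOrderedCommGroupWithZero Γ₀] {w : Valuation Z Γ₀} {q : Γ₀}

theorem ExtendsDegree.zpow_injective (hw : ExtendsDegree p σ w q) :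
    Function.Injective fun d : ℤ ↦ q ^ d :=
  zpow_right_injective₀ (zero_lt_one.trans hw.one_lt) hw.one_lt.ne'

variable [Fact p.Prime] [Algebra (ZMod p) Z] {E : Derivation (ZMod p) Z Z}

theorem ExtendsDegree.apply_smul_le [IsScalarTower (ZMod p) (MvPolynomial σ (ZMod p)) Z]
    (hw : ExtendsDegree p σ w q) (a : ZMod p) (z : Z) : w (a • z) ≤ w z := by
  rcases eq_or_ne a 0 with rfl | ha
  · simp
  · have hC : w (algebraMap (MvPolynomial σ (ZMod p)) Z (C a)) = 1 := by
      rw [hw.apply_algebraMap _ (C_ne_zero.2 ha), totalDegree_C, pow_zero]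
    rw [Algebra.smul_def, map_mul,
      IsScalarTower.algebraMap_apply (ZMod p) (MvPolynomial σ (ZMod p)), algebraMap_eq, hC, one_mul]

theorem exists_eigenvectors_valuation_eq {ι : Type*} {s : Finset ι} {t : ι → Z} {e : ι → ZMod p}
    (ht : ∀ i ∈ s, E (t i) = e i • t i) (hsum : ∑ i ∈ s, t i = 0) {i₀ : ι} (hi₀ : i₀ ∈ s)
    (hw₀ : w (t i₀) ≠ 0) :
    ∃ i ∈ s, ∃ j ∈ s, i ≠ j ∧ w (t i) ≠ 0 ∧ w (t i) = w (t j) ∧ e i = e j := by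
  by_contra! h
  refine hw₀ (le_zero_iff.1 ?_)
  calc w (t i₀) ≤ w (∑ i ∈ s with e i = e i₀, t i) :=
        valuation_apply_le_sum_of_injOn w (fun i hi j hj hi0 hij ↦ by
          obtain ⟨his, hie⟩ := Finset.mem_filter.1 hi
          obtain ⟨hjs, hje⟩ := Finset.mem_filter.1 hj
          by_contra hne
          exact h i his j hjs hne hi0 hij (hie.trans hje.symm))
        (Finset.mem_filter.2 ⟨hi₀, rfl⟩)
    _ = 0 := by
        rw [sum_filter_eigenvectors_eq_zero (T := (E : Module.End (ZMod p) Z)) ht hsum, map_zero]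

theorem ActsByDegree.exists_terms_valuation_eq
    (halg : AlgebraicOfDegreeLE (MvPolynomial σ (ZMod p)) Z m) (hE : ActsByDegree σ E)
    (hw : ExtendsDegree p σ w q) {y : Z} {i : ZMod p} (hy : y ≠ 0) (hi : E y = i • y) :
    ∃ k l : ℕ, k < l ∧ l ≤ m ∧ ∃ a b : ℕ,
      q ^ a * w y ^ k = q ^ b * w y ^ l ∧ (a + k * i : ZMod p) = b + l * i := by
  have hq : q ≠ 0 := (zero_lt_one.trans hw.one_lt).ne'
  obtain ⟨f, hf, hfm, hfy⟩ := halg y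
  choose g hsum hg using fun k ↦ hE (f.coeff k)
  let S : Finset (Σ _ : ℕ, ℕ) :=
    (Finset.range (m + 1)).sigma fun k ↦ Finset.range ((f.coeff k).totalDegree + 1)
  let t (x : Σ _ : ℕ, ℕ) : Z := algebraMap (MvPolynomial σ (ZMod p)) Z (g x.1 x.2) * y ^ x.1
  let e (x : Σ _ : ℕ, ℕ) : ZMod p := x.2 + x.1 * i
  have ht_eigen (x : Σ _ : ℕ, ℕ) : E (t x) = e x • t x :=
    derivation_mul_eigenvector (hg x.1 x.2).1 (derivation_pow_eigenvector hi x.1)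
  have ht_sum : ∑ x ∈ S, t x = 0 := by
    simp only [S, t, Finset.sum_sigma, ← Finset.sum_mul, ← map_sum, ← hsum]
    simpa [Polynomial.aeval_eq_sum_range' (Nat.lt_succ_of_le hfm), Algebra.smul_def] using hfy
  have hw_t {x : Σ _ : ℕ, ℕ} (hx : g x.1 x.2 ≠ 0) : w (t x) = q ^ x.2 * w y ^ x.1 := by
    rw [map_mul, map_pow, hw.apply_algebraMap _ hx, (hg x.1 x.2).2 hx]
  have hg_of_t {x : Σ _ : ℕ, ℕ} (hx : w (t x) ≠ 0) : g x.1 x.2 ≠ 0 := fun h ↦ hx (by simp [t, h])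
  obtain ⟨a, haS, ha⟩ : ∃ a ∈ Finset.range (f.leadingCoeff.totalDegree + 1),
      g f.natDegree a ≠ 0 := by
    refine Finset.exists_ne_zero_of_sum_ne_zero ?_
    rw [← Polynomial.coeff_natDegree, ← hsum]
    exact Polynomial.leadingCoeff_ne_zero.2 hf
  let x₀ : Σ _ : ℕ, ℕ := ⟨f.natDegree, a⟩
  have hx₀ : x₀ ∈ S := Finset.mem_sigma.2 ⟨Finset.mem_range.2 (Nat.lt_succ_of_le hfm), haS⟩
  have hwx₀ : w (t x₀) ≠ 0 := by
    rw [hw_t ha]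
    exact mul_ne_zero (pow_ne_zero _ hq) (pow_ne_zero _ (hw.ne_zero y hy))
  obtain ⟨x, hx, x', hx', hne, hx0, hxx', hee⟩ :=
    exists_eigenvectors_valuation_eq (fun x _ ↦ ht_eigen x) ht_sum hx₀ hwx₀
  simp only [S, Finset.mem_sigma, Finset.mem_range, Nat.lt_succ_iff] at hx hx'
  have hx0' : w (t x') ≠ 0 := hxx' ▸ hx0
  rw [hw_t (hg_of_t hx0), hw_t (hg_of_t hx0')] at hxx'
  rcases lt_trichotomy x.1 x'.1 with hlt | heq | hlt
  · exact ⟨_, _, hlt, hx'.1, _, _, hxx', hee⟩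
  · refine absurd (Sigma.ext heq (heq_of_eq ?_)) hne
    rw [heq] at hxx'
    have hpow := mul_right_cancel₀ (pow_ne_zero _ (hw.ne_zero y hy)) hxx'
    exact pow_right_injective₀ (zero_lt_one.trans hw.one_lt) hw.one_lt.ne' hpow
  · exact ⟨_, _, hlt, hx.1, _, _, hxx'.symm, hee.symm⟩

theorem ActsByDegree.exists_valuation_pow_eq
    (halg : AlgebraicOfDegreeLE (MvPolynomial σ (ZMod p)) Z m) (hE : ActsByDegree σ E)
    (hw : ExtendsDegree p σ w q) {y : Z} {i : ZMod p} (hy : y ≠ 0) (hi : E y = i • y) :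
    ∃ k, 1 ≤ k ∧ k ≤ m ∧ ∃ d : ℤ, w y ^ k = q ^ d ∧ (d : ZMod p) = k * i := by
  obtain ⟨k, l, hkl, hlm, a, b, hval, heig⟩ := hE.exists_terms_valuation_eq halg hw hy hi
  have hq : q ≠ 0 := (zero_lt_one.trans hw.one_lt).ne'
  refine ⟨l - k, by omega, by omega, a - b, ?_, ?_⟩
  · rw [zpow_sub₀ hq, zpow_natCast, zpow_natCast, eq_div_iff (pow_ne_zero _ hq)]
    refine mul_right_cancel₀ (pow_ne_zero k (hw.ne_zero y hy)) ?_
    rw [hval, mul_right_comm, ← pow_add, Nat.sub_add_cancel hkl.le, mul_comm]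
  · push_cast [Nat.cast_sub hkl.le]
    linear_combination heig

theorem ActsByDegree.eigenvalue_eq_of_valuation_eq
    (halg : AlgebraicOfDegreeLE (MvPolynomial σ (ZMod p)) Z m) (hm : m < p)
    (hE : ActsByDegree σ E) (hw : ExtendsDegree p σ w q) {y z : Z} {i j : ZMod p}
    (hi : E y = i • y) (hj : E z = j • z) (hy : w y ≠ 0) (hyz : w y = w z) : i = j := by
  have hy0 : y ≠ 0 := fun h ↦ hy (by simp [h])
  have hz0 : z ≠ 0 := fun h ↦ hy (by simp [hyz, h])
  obtain ⟨k, hk, hkm, d, hyd, hd⟩ := hE.exists_valuation_pow_eq halg hw hy0 hi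
  obtain ⟨l, hl, hlm, e, hze, he⟩ :=
    hE.exists_valuation_pow_eq halg hw hz0 hj
  have hde : d * l = e * k := hw.zpow_injective <| by
    simp only [zpow_mul, zpow_natCast, ← hyd, ← hze, hyz, ← pow_mul, mul_comm]
  have hcast : (k * l : ZMod p) * i = k * l * j := by
    have h := congr((($hde : ℤ) : ZMod p))
    push_cast at h
    rw [hd, he] at h
    linear_combination h
  have hne {a : ℕ} (h1 : 1 ≤ a) (ham : a ≤ m) : (a : ZMod p) ≠ 0 := fun h ↦
    (Nat.le_of_dvd h1 ((ZMod.natCast_eq_zero_iff a p).1 h)).not_gt (ham.trans_lt hm)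
  exact mul_left_cancel₀ (mul_ne_zero (hne hk hkm) (hne hl hlm)) hcast

theorem ActsByDegree.valuation_apply_le [IsScalarTower (ZMod p) (MvPolynomial σ (ZMod p)) Z]
    (halg : AlgebraicOfDegreeLE (MvPolynomial σ (ZMod p)) Z m) (hm : m < p)
    (hE : ActsByDegree σ E) (hpow : (E : Module.End (ZMod p) Z) ^ p = E)
    (hw : ExtendsDegree p σ w q) (z : Z) : w (E z) ≤ w z := by
  obtain ⟨u, rfl, hu⟩ := exists_sum_eigenvectors_of_pow_card_eq
    (T := (E : Module.End (ZMod p) Z)) (by rw [ZMod.card, hpow]) z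
  have hle (a : ZMod p) : w (u a) ≤ w (∑ b, u b) :=
    valuation_apply_le_sum_of_injOn w (fun a _ b _ ha hab ↦
      hE.eigenvalue_eq_of_valuation_eq halg hm hw (hu a) (hu b) ha hab) (Finset.mem_univ a)
  rw [map_sum]
  refine w.map_sum_le fun a _ ↦ ?_
  rw [show E (u a) = a • u a from hu a]
  exact (hw.apply_smul_le a (u a)).trans (hle a)

theorem ActsByDegree.valuation_le_one_of_apply_eq_zero
    (halg : AlgebraicOfDegreeLE (MvPolynomial σ (ZMod p)) Z m)
    (hE : ActsByDegree σ E) (hw : ExtendsDegree p σ w q) {z : Z} (hz : E z = 0) {c : ℕ}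
    (hc : c * m < p) (hwz : w z ≤ q ^ c) : w z ≤ 1 := by
  rcases eq_or_ne z 0 with rfl | hz0
  · simp
  obtain ⟨k, hk, hkm, d, hd, hdk⟩ :=
    hE.exists_valuation_pow_eq halg hw hz0 (i := 0) (by rw [hz, zero_smul])
  have hdvd : (p : ℤ) ∣ d := by
    rw [← ZMod.intCast_zmod_eq_zero_iff_dvd, hdk, mul_zero]
  have hd_lt : d < p := by
    have h : q ^ d ≤ q ^ ((c * k : ℕ) : ℤ) := by
      rw [← hd, zpow_natCast, pow_mul]
      exact pow_le_pow_left₀ zero_le hwz k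
    have h' := (zpow_le_zpow_iff_right₀ hw.one_lt).1 h
    have : c * k ≤ c * m := Nat.mul_le_mul_left c hkm
    omega
  have hd_le : d ≤ 0 := by
    by_contra! h
    exact hd_lt.not_ge (Int.le_of_dvd h hdvd)
  rw [← pow_le_one_iff_of_nonneg zero_le (by omega : k ≠ 0), hd]
  exact zpow_le_one_of_nonpos₀ hw.one_lt.le hd_le

end EulerValuation

/-! ### Elements bounded at infinity -/

theorem isIntegral_of_forall_mem_valuationSubring {R L : Type*} [CommRing R] [Field L]
    [Algebra R L] {x : L}
    (hx : ∀ V : ValuationSubring L, (∀ r, algebraMap R L r ∈ V) → x ∈ V) : IsIntegral R x := by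
  let S : Set L := Set.range (algebraMap R L)
  have hmem : x ∈ (integralClosure (Subring.closure S) L).toSubring := by
    rw [← iInf_valuationSubring_superset, Subring.mem_iInf]
    exact fun V ↦ hx V.1 fun r ↦ V.2 ⟨r, rfl⟩
  obtain ⟨f, hf, hfx⟩ : IsIntegral (Subring.closure S) x := hmem
  have hS : Subring.closure S ≤ (algebraMap R L).range := Subring.closure_le.2 (by simp [S])
  have hlifts : f.map (algebraMap (Subring.closure S) L) ∈ Polynomial.lifts (algebraMap R L) := by
    refine (Polynomial.lifts_iff_coeff_lifts _).2 fun k ↦ ?_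
    rw [Polynomial.coeff_map]
    exact hS (f.coeff k).2
  obtain ⟨g, hg, -, hmonic⟩ := Polynomial.lifts_and_natDegree_eq_and_monic hlifts (hf.map _)
  exact ⟨g, hmonic, by rwa [← Polynomial.eval_map, hg, Polynomial.eval_map]⟩

theorem mem_valuationSubring_of_isIntegral {R Z L : Type*} [CommRing R] [CommRing Z] [Field L]
    [Algebra R Z] [Algebra Z L] {V : ValuationSubring L}
    (hR : ∀ r, algebraMap Z L (algebraMap R Z r) ∈ V) {z : Z} (hz : IsIntegral R z) :
    algebraMap Z L z ∈ V := by
  let incl : R →+* V := ((algebraMap Z L).comp (algebraMap R Z)).codRestrict V hR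
  obtain ⟨f, hf, hfz⟩ := hz
  have hintegral : IsIntegral V (algebraMap Z L z) := by
    refine ⟨f.map incl, hf.map _, ?_⟩
    have h := congr(algebraMap Z L $hfz)
    rw [Polynomial.hom_eval₂, map_zero] at h
    rwa [Polynomial.eval₂_map]
  obtain ⟨y, hy⟩ := IsIntegrallyClosed.isIntegral_iff.1 hintegral
  exact hy ▸ y.2

section DegreeValuation

variable {F σ : Type*} [Field F]

/-- The valuation ring of the degree: the fractions `f / g` with `deg f ≤ deg g`. -/
noncomputable def degreeValuationSubring (F σ : Type*) [Field F] :
    ValuationSubring (FractionRing (MvPolynomial σ F)) where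
  carrier := {z | ∃ f g : MvPolynomial σ F, g ≠ 0 ∧ f.totalDegree ≤ g.totalDegree ∧
    z = algebraMap _ (FractionRing (MvPolynomial σ F)) f / algebraMap _ _ g}
  mul_mem' := by
    rintro _ _ ⟨f, g, hg, h, rfl⟩ ⟨f', g', hg', h', rfl⟩
    refine ⟨f * f', g * g', mul_ne_zero hg hg', ?_, by rw [map_mul, map_mul, div_mul_div_comm]⟩
    rw [totalDegree_mul_of_isDomain hg hg']
    exact (totalDegree_mul _ _).trans (add_le_add h h')
  one_mem' := ⟨1, 1, one_ne_zero, le_rfl, by simp⟩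
  add_mem' := by
    rintro _ _ ⟨f, g, hg, h, rfl⟩ ⟨f', g', hg', h', rfl⟩
    refine ⟨f * g' + g * f', g * g', mul_ne_zero hg hg', ?_, ?_⟩
    · rw [totalDegree_mul_of_isDomain hg hg']
      exact (totalDegree_add _ _).trans (max_le
        ((totalDegree_mul _ _).trans (by gcongr)) ((totalDegree_mul _ _).trans (by gcongr)))
    · rw [div_add_div _ _ (by simpa using hg) (by simpa using hg')]
      simp
  zero_mem' := ⟨0, 1, one_ne_zero, by simp, by simp⟩
  neg_mem' := by
    rintro _ ⟨f, g, hg, h, rfl⟩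
    exact ⟨-f, g, hg, by rwa [totalDegree_neg], by rw [map_neg, neg_div]⟩
  mem_or_inv_mem' z := by
    obtain ⟨f, g, hg, rfl⟩ := IsFractionRing.div_surjective (A := MvPolynomial σ F) z
    rcases eq_or_ne f 0 with rfl | hf
    · exact .inl ⟨0, 1, one_ne_zero, by simp, by simp⟩
    rcases le_total f.totalDegree g.totalDegree with h | h
    · exact .inl ⟨f, g, nonZeroDivisors.ne_zero hg, h, rfl⟩
    · exact .inr ⟨g, f, hf, h, inv_div _ _⟩

theorem totalDegree_eq_zero_of_mem_degreeValuationSubring {f : MvPolynomial σ F}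
    (h : algebraMap _ _ f ∈ degreeValuationSubring F σ) : f.totalDegree = 0 := by
  obtain ⟨a, b, hb, hab, h⟩ := h
  rcases eq_or_ne f 0 with rfl | hf
  · simp
  rw [eq_div_iff (by simpa using hb), ← map_mul] at h
  rw [← IsFractionRing.injective (MvPolynomial σ F) _ h, totalDegree_mul_of_isDomain hf hb] at hab
  omega

theorem algebraMap_C_mem_degreeValuationSubring (a : F) :
    algebraMap (MvPolynomial σ F) _ (C a) ∈ degreeValuationSubring F σ :=
  ⟨C a, 1, one_ne_zero, by simp, by simp⟩

theorem totalDegree_eq_zero_of_isIntegral {f : MvPolynomial σ F} (hf : IsIntegral F f) :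
    f.totalDegree = 0 := by
  refine totalDegree_eq_zero_of_mem_degreeValuationSubring ?_
  exact mem_valuationSubring_of_isIntegral algebraMap_C_mem_degreeValuationSubring hf

variable {Z : Type*} [CommRing Z] [IsDomain Z] [Algebra (MvPolynomial σ F) Z]
  [FaithfulSMul (MvPolynomial σ F) Z]

theorem totalDegree_coeff_minpoly_eq_zero {z : Z} (hz : IsIntegral (MvPolynomial σ F) z)
    (hV : ∀ V : ValuationSubring (FractionRing Z),
      (∀ f g : MvPolynomial σ F, g ≠ 0 → f.totalDegree ≤ g.totalDegree →
        algebraMap Z (FractionRing Z) (algebraMap _ Z f) / algebraMap Z _ (algebraMap _ Z g) ∈ V) →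
      algebraMap Z (FractionRing Z) z ∈ V) (k : ℕ) :
    ((minpoly (MvPolynomial σ F) z).coeff k).totalDegree = 0 := by
  let M := FractionRing (MvPolynomial σ F)
  let L := FractionRing Z
  let _ : Algebra M L := FractionRing.liftAlgebra _ _
  have : IsScalarTower (MvPolynomial σ F) M L := FractionRing.isScalarTower_liftAlgebra _ _
  have hintegral : IsIntegral (degreeValuationSubring F σ) (algebraMap Z L z) := by
    refine isIntegral_of_forall_mem_valuationSubring fun V hO ↦ hV V fun f g hg hfg ↦ ?_
    have h := hO ⟨algebraMap _ M f / algebraMap _ M g, f, g, hg, hfg, rfl⟩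
    have hr (x : degreeValuationSubring F σ) : algebraMap (degreeValuationSubring F σ) L x =
      algebraMap M L x := rfl
    rw [hr, map_div₀, ← IsScalarTower.algebraMap_apply, ← IsScalarTower.algebraMap_apply] at h
    rwa [← IsScalarTower.algebraMap_apply, ← IsScalarTower.algebraMap_apply]
  have hminpoly := (minpoly.isIntegrallyClosed_eq_field_fractions M L hz).symm.trans
    (minpoly.isIntegrallyClosed_eq_field_fractions' M hintegral)
  refine totalDegree_eq_zero_of_mem_degreeValuationSubring ?_
  have hcoeff := congr(Polynomial.coeff $hminpoly k)
  rw [Polynomial.coeff_map, Polynomial.coeff_map] at hcoeff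
  rw [hcoeff]
  exact ((minpoly (degreeValuationSubring F σ) (algebraMap Z L z)).coeff k).2

theorem isIntegral_of_forall_mem_of_degree [Algebra F Z] [IsScalarTower F (MvPolynomial σ F) Z]
    {z : Z} (hz : IsIntegral (MvPolynomial σ F) z)
    (hV : ∀ V : ValuationSubring (FractionRing Z),
      (∀ f g : MvPolynomial σ F, g ≠ 0 → f.totalDegree ≤ g.totalDegree →
        algebraMap Z (FractionRing Z) (algebraMap _ Z f) / algebraMap Z _ (algebraMap _ Z g) ∈ V) →
      algebraMap Z (FractionRing Z) z ∈ V) : IsIntegral F z := by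
  have hlifts : minpoly (MvPolynomial σ F) z ∈ Polynomial.lifts (C : F →+* MvPolynomial σ F) :=
    (Polynomial.lifts_iff_coeff_lifts _).2 fun k ↦
      ⟨_, (totalDegree_eq_zero_iff_eq_C.1 (totalDegree_coeff_minpoly_eq_zero hz hV k)).symm⟩
  obtain ⟨r, hr, -, hmonic⟩ :=
    Polynomial.lifts_and_natDegree_eq_and_monic hlifts (minpoly.monic hz)
  have haeval := minpoly.aeval (MvPolynomial σ F) z
  rw [← hr, Polynomial.aeval_def, Polynomial.eval₂_map, ← algebraMap_eq,
    ← IsScalarTower.algebraMap_eq] at haeval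
  exact ⟨r, hmonic, haeval⟩

end DegreeValuation

section BoundedAtInfinity

variable {p : ℕ} {σ Z : Type*} [CommRing Z] [IsDomain Z] [Algebra (MvPolynomial σ (ZMod p)) Z]

/-- `z` has order at most `c` with respect to every extension of the degree valuation to the
fraction field of `Z`. -/
def BoundedAtInfinity (p : ℕ) (σ : Type*) {Z : Type*} [CommRing Z] [IsDomain Z]
    [Algebra (MvPolynomial σ (ZMod p)) Z] (c : ℕ) (z : Z) : Prop :=
  ∀ (V : ValuationSubring (FractionRing Z)) (q : V.ValueGroup),
    ExtendsDegree p σ (V.valuation.comap (algebraMap Z (FractionRing Z))) q →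
      V.valuation (algebraMap Z (FractionRing Z) z) ≤ q ^ c

variable [Fact p.Prime] [FaithfulSMul (MvPolynomial σ (ZMod p)) Z]

theorem extendsDegree_comap_valuation {V : ValuationSubring (FractionRing Z)}
    (hV : ∀ f g : MvPolynomial σ (ZMod p), g ≠ 0 → f.totalDegree ≤ g.totalDegree →
      algebraMap Z (FractionRing Z) (algebraMap _ Z f) / algebraMap Z _ (algebraMap _ Z g) ∈ V)
    {s : σ} (hs : 1 < V.valuation (algebraMap Z (FractionRing Z)
      (algebraMap (MvPolynomial σ (ZMod p)) Z (X s)))) :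
    ExtendsDegree p σ (V.valuation.comap (algebraMap Z (FractionRing Z)))
      (V.valuation (algebraMap Z (FractionRing Z)
        (algebraMap (MvPolynomial σ (ZMod p)) Z (X s)))) where
  one_lt := hs
  ne_zero z hz := by simpa using hz
  apply_algebraMap f hf := by
    have hle {f g : MvPolynomial σ (ZMod p)} (hg : g ≠ 0) (hfg : f.totalDegree ≤ g.totalDegree) :
        V.valuation (algebraMap Z (FractionRing Z) (algebraMap _ Z f)) ≤
          V.valuation (algebraMap Z (FractionRing Z) (algebraMap _ Z g)) := by
      have h := (V.valuation_le_one_iff _).2 (hV f g hg hfg)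
      rwa [map_div₀, div_le_one₀ (by simpa [zero_lt_iff] using hg)] at h
    have hX : (X s ^ f.totalDegree : MvPolynomial σ (ZMod p)) ≠ 0 := pow_ne_zero _ (X_ne_zero s)
    rw [Valuation.comap_apply, ← map_pow, ← map_pow, ← map_pow]
    exact le_antisymm (hle hX (by simp)) (hle hf (by simp))

theorem isIntegral_of_boundedAtInfinity_zero [Algebra (ZMod p) Z]
    [IsScalarTower (ZMod p) (MvPolynomial σ (ZMod p)) Z] {z : Z}
    (hz : IsIntegral (MvPolynomial σ (ZMod p)) z) (hb : BoundedAtInfinity p σ 0 z) :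
    IsIntegral (ZMod p) z := by
  refine isIntegral_of_forall_mem_of_degree hz fun V hV ↦ ?_
  by_cases hX : ∀ s, V.valuation (algebraMap Z (FractionRing Z)
      (algebraMap (MvPolynomial σ (ZMod p)) Z (X s))) ≤ 1
  · have hP (f : MvPolynomial σ (ZMod p)) :
        algebraMap Z (FractionRing Z) (algebraMap _ Z f) ∈ V := by
      induction f using MvPolynomial.induction_on with
      | C a => simpa using hV (C a) 1 one_ne_zero (by simp)
      | add f g hf hg => simpa only [map_add] using V.add_mem _ _ hf hg
      | mul_X f s hf =>
        simpa only [map_mul] using V.mul_mem _ _ hf ((V.valuation_le_one_iff _).1 (hX s))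
    exact mem_valuationSubring_of_isIntegral hP hz
  · push Not at hX
    obtain ⟨s, hs⟩ := hX
    simpa using hb V _ (extendsDegree_comap_valuation hV hs)

theorem totalDegree_le_of_boundedAtInfinity {f : MvPolynomial σ (ZMod p)}
    [Algebra.IsIntegral (MvPolynomial σ (ZMod p)) Z] [Algebra (ZMod p) Z]
    [IsScalarTower (ZMod p) (MvPolynomial σ (ZMod p)) Z] {c : ℕ}
    (hf : BoundedAtInfinity p σ c (algebraMap (MvPolynomial σ (ZMod p)) Z f)) :
    f.totalDegree ≤ c := by
  by_contra! hlt
  have hf0 : f ≠ 0 := by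
    rintro rfl
    simp at hlt
  have h0 : BoundedAtInfinity p σ 0 (algebraMap (MvPolynomial σ (ZMod p)) Z f) := fun V q hV ↦ by
    have h : q ^ f.totalDegree ≤ q ^ c := (hV.apply_algebraMap f hf0).symm.le.trans (hf V q hV)
    exact absurd h (pow_lt_pow_right₀ hV.one_lt hlt).not_ge
  have hintegral : IsIntegral (ZMod p) f :=
    (isIntegral_algHom_iff (IsScalarTower.toAlgHom (ZMod p) (MvPolynomial σ (ZMod p)) Z)
      (FaithfulSMul.algebraMap_injective _ _)).1
      (isIntegral_of_boundedAtInfinity_zero (Algebra.IsIntegral.isIntegral _) h0)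
  exact absurd (totalDegree_eq_zero_of_isIntegral hintegral) (by lia)

end BoundedAtInfinity

section ExtendedPartialDerivatives

variable {p : ℕ} [Fact p.Prime] {σ Z : Type*} [CommRing Z] [Algebra (ZMod p) Z]
  [Algebra (MvPolynomial σ (ZMod p)) Z] {D : σ → Derivation (ZMod p) Z Z} {m : ℕ}

/-- The Euler derivation `∑ s, (X_s - v_s) ∂_s` centred at `v`. -/
noncomputable def euler [Fintype σ] (D : σ → Derivation (ZMod p) Z Z) (v : σ → ZMod p) :
    Derivation (ZMod p) Z Z :=
  ∑ s, algebraMap (MvPolynomial σ (ZMod p)) Z (X s - C (v s)) • D s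

theorem euler_apply [Fintype σ] (v : σ → ZMod p) (z : Z) :
    euler D v z = ∑ s, algebraMap (MvPolynomial σ (ZMod p)) Z (X s - C (v s)) * D s z := by
  have h := congr($(map_sum Derivation.coeFnAddMonoidHom
    (fun s ↦ algebraMap (MvPolynomial σ (ZMod p)) Z (X s - C (v s)) • D s) Finset.univ) z)
  rw [Finset.sum_apply] at h
  exact h

variable [DecidableEq σ]

/-- The derivations `D s` of `Z` extend the partial derivatives of the polynomial ring. -/
def ExtendsPDeriv (D : σ → Derivation (ZMod p) Z Z) : Prop :=
  ∀ s t, D s (algebraMap (MvPolynomial σ (ZMod p)) Z (X t)) = if s = t then 1 else 0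

theorem ExtendsPDeriv.euler_apply_X [Fintype σ] (hD : ExtendsPDeriv D) (v : σ → ZMod p) (t : σ) :
    euler D v (algebraMap (MvPolynomial σ (ZMod p)) Z (X t)) =
      algebraMap (MvPolynomial σ (ZMod p)) Z (X t - C (v t)) := by
  simp [euler_apply, hD _ t]

variable [IsScalarTower (ZMod p) (MvPolynomial σ (ZMod p)) Z]

theorem ExtendsPDeriv.apply_algebraMap (hD : ExtendsPDeriv D) (s : σ)
    (f : MvPolynomial σ (ZMod p)) :
    D s (algebraMap (MvPolynomial σ (ZMod p)) Z f) = algebraMap _ Z (pderiv s f) := by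
  have h : (D s).compAlgebraMap (MvPolynomial σ (ZMod p)) =
      (Algebra.linearMap (MvPolynomial σ (ZMod p)) Z).compDer (pderiv s) := by
    refine MvPolynomial.derivation_ext fun t ↦ (hD s t).trans ?_
    rcases eq_or_ne s t with rfl | hst
    · simp
    · simp [hst, pderiv_X_of_ne hst.symm]
  exact congr($h f)

theorem ExtendsPDeriv.euler_apply_X_sub_C [Fintype σ] (hD : ExtendsPDeriv D) (v : σ → ZMod p)
    (t : σ) : euler D v (algebraMap (MvPolynomial σ (ZMod p)) Z (X t - C (v t))) =
      algebraMap (MvPolynomial σ (ZMod p)) Z (X t - C (v t)) := by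
  have hC : euler D v (algebraMap (MvPolynomial σ (ZMod p)) Z (C (v t))) = 0 := by
    rw [← algebraMap_eq, ← IsScalarTower.algebraMap_apply, Derivation.map_algebraMap]
  rw [map_sub (algebraMap _ Z), map_sub, hD.euler_apply_X, hC, sub_zero, map_sub]

theorem ExtendsPDeriv.euler_mem_range [Fintype σ] (hD : ExtendsPDeriv D) (v : σ → ZMod p) {z : Z}
    (hz : z ∈ (algebraMap (MvPolynomial σ (ZMod p)) Z).range) :
    euler D v z ∈ (algebraMap (MvPolynomial σ (ZMod p)) Z).range := by
  obtain ⟨f, rfl⟩ := hz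
  rw [euler_apply]
  exact sum_mem fun s _ ↦ mul_mem ⟨_, rfl⟩ ⟨_, (hD.apply_algebraMap s f).symm⟩

variable [IsDomain Z] [FaithfulSMul (MvPolynomial σ (ZMod p)) Z]

theorem ExtendsPDeriv.commute (hD : ExtendsPDeriv D)
    (halg : AlgebraicOfDegreeLE (MvPolynomial σ (ZMod p)) Z m) (hm : m < p) (s t : σ) :
    Commute (D s : Module.End (ZMod p) Z) (D t : Module.End (ZMod p) Z) := by
  have h : ⁅D s, D t⁆ = (0 : Derivation (ZMod p) Z Z) := halg.derivation_ext hm fun u ↦ by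
    simp only [Derivation.commutator_apply, hD _ u, Derivation.zero_apply]
    split_ifs <;> simp
  ext z
  exact sub_eq_zero.1 congr($h z)

theorem ExtendsPDeriv.pow_char_eq_zero (hD : ExtendsPDeriv D)
    (halg : AlgebraicOfDegreeLE (MvPolynomial σ (ZMod p)) Z m) (hm : m < p) (s : σ) :
    (D s : Module.End (ZMod p) Z) ^ p = 0 := by
  have h : derivationPowChar (D s) = 0 := halg.derivation_ext hm fun t ↦ by
    have hDD : D s (D s (algebraMap (MvPolynomial σ (ZMod p)) Z (X t))) = 0 := by
      rw [hD]
      split_ifs <;> simp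
    rw [derivationPowChar_apply, ← pow_sub_mul_pow _ (Fact.out : p.Prime).two_le, sq]
    exact (congrArg ((D s : Module.End (ZMod p) Z) ^ (p - 2)) hDD).trans (map_zero _)
  ext z
  rw [← derivationPowChar_apply, h]
  rfl

theorem ExtendsPDeriv.euler_pow_char [Fintype σ] (hD : ExtendsPDeriv D)
    (halg : AlgebraicOfDegreeLE (MvPolynomial σ (ZMod p)) Z m) (hm : m < p) (v : σ → ZMod p) :
    (euler D v : Module.End (ZMod p) Z) ^ p = euler D v := by
  have h : derivationPowChar (euler D v) = euler D v := halg.derivation_ext hm fun t ↦ by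
    rw [derivationPowChar_apply, ← pow_sub_one_mul (Fact.out : p.Prime).ne_zero,
      Module.End.mul_apply, Derivation.coeFn_coe, hD.euler_apply_X, Module.End.pow_apply]
    exact Function.iterate_fixed (hD.euler_apply_X_sub_C v t) (p - 1)
  ext z
  rw [← derivationPowChar_apply, h]
  rfl

variable {Γ₀ : Type*} [LinearOrderedCommGroupWithZero Γ₀] {w : Valuation Z Γ₀} {q : Γ₀}

theorem ExtendsPDeriv.valuation_euler_le [Fintype σ] (hD : ExtendsPDeriv D)
    (halg : AlgebraicOfDegreeLE (MvPolynomial σ (ZMod p)) Z m) (hm : m < p)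
    (hw : ExtendsDegree p σ w q) (v : σ → ZMod p) (z : Z) : w (euler D v z) ≤ w z :=
  (actsByDegree_of_apply_X_sub_C v (hD.euler_apply_X_sub_C v)).valuation_apply_le halg hm
    (hD.euler_pow_char halg hm v) hw z

theorem ExtendsPDeriv.valuation_apply_le [Finite σ] (hD : ExtendsPDeriv D)
    (halg : AlgebraicOfDegreeLE (MvPolynomial σ (ZMod p)) Z m) (hm : m < p)
    (hw : ExtendsDegree p σ w q) (s : σ) (z : Z) : w (D s z) ≤ w z := by
  cases nonempty_fintype σ
  have h : D s z = euler D 0 z - euler D (Pi.single s 1) z := by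
    rw [euler_apply, euler_apply, ← Finset.sum_sub_distrib]
    simp [← sub_mul, Pi.single_apply, apply_ite]
  rw [h]
  exact (w.map_sub _ _).trans
    (max_le (hD.valuation_euler_le halg hm hw 0 z) (hD.valuation_euler_le halg hm hw _ z))

section Descent

variable {c : ℕ} {z : Z}

theorem ExtendsPDeriv.boundedAtInfinity_apply [Finite σ] (hD : ExtendsPDeriv D)
    (halg : AlgebraicOfDegreeLE (MvPolynomial σ (ZMod p)) Z m) (hm : m < p)
    (hz : BoundedAtInfinity p σ c z) (s : σ) : BoundedAtInfinity p σ c (D s z) :=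
  fun V q hV ↦ (hD.valuation_apply_le halg hm hV s z).trans (hz V q hV)

theorem ExtendsPDeriv.mem_range_of_euler_eq_zero [Fintype σ]
    [Algebra.IsIntegral (MvPolynomial σ (ZMod p)) Z] [IsIntegrallyClosedIn (ZMod p) Z]
    (hD : ExtendsPDeriv D)
    (halg : AlgebraicOfDegreeLE (MvPolynomial σ (ZMod p)) Z m) (hc : c * m < p)
    (hz : BoundedAtInfinity p σ c z) (hEz : euler D 0 z = 0) :
    z ∈ (algebraMap (MvPolynomial σ (ZMod p)) Z).range := by
  have hE := actsByDegree_of_apply_X_sub_C 0 (hD.euler_apply_X_sub_C 0)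
  have h0 : BoundedAtInfinity p σ 0 z := fun V q hV ↦ by
    simpa using hE.valuation_le_one_of_apply_eq_zero halg hV hEz hc (hz V q hV)
  obtain ⟨a, ha⟩ := IsIntegrallyClosedIn.algebraMap_eq_of_integral
    (isIntegral_of_boundedAtInfinity_zero (Algebra.IsIntegral.isIntegral z) h0)
  exact ⟨C a, by rw [← ha, ← algebraMap_eq, ← IsScalarTower.algebraMap_apply]⟩

/-- `z - E ^ (p - 1) z` is killed by `E`, and `E ^ (p - 1) z` is an iterate of `E` at `E z`. -/
theorem ExtendsPDeriv.mem_range_of_euler_mem_range [Fintype σ]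
    [Algebra.IsIntegral (MvPolynomial σ (ZMod p)) Z] [IsIntegrallyClosedIn (ZMod p) Z]
    (hD : ExtendsPDeriv D) (halg : AlgebraicOfDegreeLE (MvPolynomial σ (ZMod p)) Z m) (hm : m < p)
    (hc : c * m < p) (hz : BoundedAtInfinity p σ c z)
    (hEz : euler D 0 z ∈ (algebraMap (MvPolynomial σ (ZMod p)) Z).range) :
    z ∈ (algebraMap (MvPolynomial σ (ZMod p)) Z).range := by
  let E : Module.End (ZMod p) Z := euler D 0
  have hp := (Fact.out : p.Prime).two_le
  have hiter : (E ^ (p - 1)) z ∈ (algebraMap (MvPolynomial σ (ZMod p)) Z).range := by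
    rw [← pow_sub_one_mul (by lia), Module.End.mul_apply, Module.End.pow_apply]
    exact Function.Iterate.rec (· ∈ (algebraMap (MvPolynomial σ (ZMod p)) Z).range)
      hEz (fun _ ↦ hD.euler_mem_range 0) _
  have hbounded : BoundedAtInfinity p σ c (z - (E ^ (p - 1)) z) := fun V q hV ↦ by
    rw [map_sub]
    refine (V.valuation.map_sub _ _).trans (max_le (hz V q hV) (le_trans ?_ (hz V q hV)))
    rw [Module.End.pow_apply]
    exact Function.Iterate.rec
      (fun y ↦ V.valuation (algebraMap Z _ y) ≤ V.valuation (algebraMap Z _ z))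
      le_rfl (fun y hy ↦ (hD.valuation_euler_le halg hm hV 0 y).trans hy) _
  have hker : euler D 0 (z - (E ^ (p - 1)) z) = 0 := by
    have hpow := congr($(hD.euler_pow_char halg hm 0) z)
    rw [← mul_pow_sub_one (by lia), Module.End.mul_apply] at hpow
    rw [map_sub, sub_eq_zero]
    exact hpow.symm
  rw [← sub_add_cancel z ((E ^ (p - 1)) z)]
  exact add_mem (hD.mem_range_of_euler_eq_zero halg hc hbounded hker) hiter

theorem ExtendsPDeriv.mem_range_of_boundedAtInfinity [Finite σ]
    [Algebra.IsIntegral (MvPolynomial σ (ZMod p)) Z] [IsIntegrallyClosedIn (ZMod p) Z]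
    (hD : ExtendsPDeriv D) (halg : AlgebraicOfDegreeLE (MvPolynomial σ (ZMod p)) Z m) (hm : m < p)
    (hc : c * m < p) (hz : BoundedAtInfinity p σ c z) :
    z ∈ (algebraMap (MvPolynomial σ (ZMod p)) Z).range := by
  cases nonempty_fintype σ
  suffices h : ∀ (N : ℕ) (d : σ → ℕ) (x : Z), ∑ s, d s = N → BoundedAtInfinity p σ c x →
      (∀ s, ((D s : Module.End (ZMod p) Z) ^ d s) x = 0) →
      x ∈ (algebraMap (MvPolynomial σ (ZMod p)) Z).range from
    h _ (fun _ ↦ p) z rfl hz fun s ↦ by simp [hD.pow_char_eq_zero halg hm s]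
  intro N
  induction N using Nat.strong_induction_on with
  | h N ih =>
    rintro d x rfl hx hd
    refine hD.mem_range_of_euler_mem_range halg hm hc hx ?_
    rw [euler_apply]
    refine sum_mem fun s _ ↦ mul_mem ⟨_, rfl⟩ ?_
    rcases Nat.eq_zero_or_pos (d s) with hs | hs
    · have hx0 : x = 0 := by simpa [hs] using hd s
      simp [hx0]
    refine ih _ ?_ (Function.update d s (d s - 1)) (D s x) rfl
      (hD.boundedAtInfinity_apply halg hm hx s) fun t ↦ ?_
    · refine Finset.sum_lt_sum (fun t _ ↦ ?_) ⟨s, Finset.mem_univ s, by simpa using hs⟩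
      rcases eq_or_ne t s with rfl | hts <;> simp [*]
    · rcases eq_or_ne t s with rfl | hts
      · rw [Function.update_self, ← Derivation.coeFn_coe, ← Module.End.mul_apply, ← pow_succ,
          Nat.sub_add_cancel hs, hd]
      · rw [Function.update_of_ne hts, ← Derivation.coeFn_coe, ← Module.End.mul_apply,
          ((hD.commute halg hm t s).pow_left (d t)).eq, Module.End.mul_apply, hd, map_zero]

end Descent

end ExtendedPartialDerivatives

section WeightedMatrix

variable {p : ℕ} {σ Z : Type*} [CommRing Z] [IsDomain Z] [Algebra (MvPolynomial σ (ZMod p)) Z]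
  {ι : Type*} [Fintype ι] {v : ι → Z} {x : Z} {M : ι → ι → MvPolynomial σ (ZMod p)}

theorem isIntegral_of_mul_eq_sum (hv : v ≠ 0)
    (hx : ∀ i, x * v i = ∑ k, algebraMap _ Z (M i k) * v k) :
    IsIntegral (MvPolynomial σ (ZMod p)) x := by
  obtain ⟨i, hi⟩ := Function.ne_iff.1 hv
  refine isIntegral_of_smul_mem_submodule
    (Submodule.span (MvPolynomial σ (ZMod p)) (Set.range v)) ?_
    (Submodule.fg_span (Set.finite_range v)) x fun y hy ↦ ?_
  · exact fun h ↦ hi (Submodule.span_eq_bot.1 h _ (Set.mem_range_self i))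
  · induction hy using Submodule.span_induction with
    | zero => simp
    | add y z _ _ hy hz => simpa only [smul_add] using add_mem hy hz
    | smul a y _ hy => simpa only [smul_comm x a y] using Submodule.smul_mem _ a hy
    | mem y hy =>
      obtain ⟨i, rfl⟩ := hy
      rw [smul_eq_mul, hx]
      refine sum_mem fun k _ ↦ ?_
      rw [← Algebra.smul_def]
      exact Submodule.smul_mem _ _ (Submodule.subset_span (Set.mem_range_self k))

/-- Compare both sides of `hx` at an index `i` maximizing `w (v i) ^ p * q⁻¹ ^ e i`. -/
theorem boundedAtInfinity_of_mul_eq_sum [NeZero p] {e : ι → ℕ} {c : ℕ} (hv : v ≠ 0)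
    (hx : ∀ i, x * v i = ∑ k, algebraMap _ Z (M i k) * v k)
    (hM : ∀ i k, M i k ≠ 0 → p * (M i k).totalDegree + e k ≤ p * c + e i) :
    BoundedAtInfinity p σ c x := by
  intro V q hV
  let w := V.valuation.comap (algebraMap Z (FractionRing Z))
  have hq : 0 < q := zero_lt_one.trans hV.one_lt
  obtain ⟨g, hg⟩ : ∃ g : ι → V.ValueGroup, ∀ i, w (v i) ^ p = q ^ e i * g i :=
    ⟨fun i ↦ w (v i) ^ p * q⁻¹ ^ e i, fun i ↦ by
      rw [mul_left_comm, ← mul_pow, mul_inv_cancel₀ hq.ne', one_pow, mul_one]⟩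
  obtain ⟨j, hj⟩ := Function.ne_iff.1 hv
  obtain ⟨i, -, hmax⟩ := Finset.exists_max_image Finset.univ g ⟨j, Finset.mem_univ j⟩
  have hgi : g i ≠ 0 := fun h ↦ by
    have hj0 : w (v j) ^ p = 0 := by
      rw [hg, le_zero_iff.1 ((hmax j (Finset.mem_univ j)).trans_eq h), mul_zero]
    exact hV.ne_zero _ hj (eq_zero_of_pow_eq_zero hj0)
  have hvi : 0 < w (v i) := zero_lt_iff.2 fun h ↦ by
    have h0 := hg i
    rw [h, zero_pow (NeZero.ne p)] at h0
    exact mul_ne_zero (pow_ne_zero _ hq.ne') hgi h0.symm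
  have hterm (k : ι) : w (algebraMap _ Z (M i k) * v k) ≤ q ^ c * w (v i) := by
    by_cases hik : M i k = 0
    · simp [hik]
    refine le_of_pow_le_pow_left₀ (NeZero.ne p) zero_le ?_
    rw [map_mul, hV.apply_algebraMap _ hik, mul_pow, mul_pow, hg, hg, ← mul_assoc, ← mul_assoc,
      ← pow_mul, ← pow_mul, ← pow_add, ← pow_add, mul_comm _ p, mul_comm c p]
    exact mul_le_mul' (pow_le_pow_right₀ hV.one_lt.le (hM i k hik)) (hmax k (Finset.mem_univ k))
  refine le_of_mul_le_mul_right (a := w (v i)) ?_ hvi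
  calc w x * w (v i) = w (∑ k, algebraMap _ Z (M i k) * v k) := by rw [← map_mul, hx]
    _ ≤ q ^ c * w (v i) := w.map_sum_le fun k _ ↦ hterm k

end WeightedMatrix

section PolynomialTarget

variable {p : ℕ} [Fact p.Prime] {σ τ : Type*}

theorem isIntegrallyClosedIn_mvPolynomial (F τ : Type*) [Field F] :
    IsIntegrallyClosedIn F (MvPolynomial τ F) :=
  isIntegrallyClosedIn_iff.2 ⟨C_injective _ _, fun {f} hf ↦
    ⟨f.coeff 0, (totalDegree_eq_zero_iff_eq_C.1 (totalDegree_eq_zero_of_isIntegral hf)).symm⟩⟩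

theorem exists_apply_eq_X_of_mul_eq_sum [Finite σ] [DecidableEq σ]
    {Φ : MvPolynomial σ (ZMod p) →ₐ[ZMod p] MvPolynomial τ (ZMod p)}
    (hΦ : Function.Injective Φ)
    {D : σ → Derivation (ZMod p) (MvPolynomial τ (ZMod p)) (MvPolynomial τ (ZMod p))}
    (hD : ∀ s t, D s (Φ (X t)) = if s = t then 1 else 0)
    {m c : ℕ} (hm : m < p) (hc : c * m < p)
    (halg : ∀ z, ∃ f : Polynomial (MvPolynomial σ (ZMod p)),
      f ≠ 0 ∧ f.natDegree ≤ m ∧ f.eval₂ Φ.toRingHom z = 0)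
    {ι : Type*} [Fintype ι] {v : ι → MvPolynomial τ (ZMod p)} (hv : v ≠ 0)
    {M : τ → ι → ι → MvPolynomial σ (ZMod p)} {e : ι → ℕ}
    (hX : ∀ t i, X t * v i = ∑ k, Φ (M t i k) * v k)
    (hM : ∀ t i k, M t i k ≠ 0 → p * (M t i k).totalDegree + e k ≤ p * c + e i) (t : τ) :
    ∃ f, Φ f = X t ∧ f.totalDegree ≤ c := by
  let _ : Algebra (MvPolynomial σ (ZMod p)) (MvPolynomial τ (ZMod p)) := Φ.toRingHom.toAlgebra
  have : IsScalarTower (ZMod p) (MvPolynomial σ (ZMod p)) (MvPolynomial τ (ZMod p)) :=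
    IsScalarTower.of_algebraMap_eq fun a ↦ (Φ.commutes a).symm
  have : FaithfulSMul (MvPolynomial σ (ZMod p)) (MvPolynomial τ (ZMod p)) :=
    (faithfulSMul_iff_algebraMap_injective _ _).2 hΦ
  have : Algebra.IsIntegral (MvPolynomial σ (ZMod p)) (MvPolynomial τ (ZMod p)) := by
    refine ⟨fun f ↦ ?_⟩
    induction f using MvPolynomial.induction_on with
    | C a => exact (Φ.commutes a) ▸ isIntegral_algebraMap (x := C a)
    | add f g hf hg => exact hf.add hg
    | mul_X f t hf => exact hf.mul (isIntegral_of_mul_eq_sum hv (hX t))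
  have := isIntegrallyClosedIn_mvPolynomial (ZMod p) τ
  have hb : BoundedAtInfinity p σ c (X t : MvPolynomial τ (ZMod p)) :=
    boundedAtInfinity_of_mul_eq_sum hv (hX t) (hM t)
  obtain ⟨f, hf⟩ := ExtendsPDeriv.mem_range_of_boundedAtInfinity hD halg hm hc hb
  exact ⟨f, hf, totalDegree_le_of_boundedAtInfinity (hf ▸ hb)⟩

end PolynomialTarget

/-! ### The Weyl algebra over its center in characteristic `p` -/

section Digits

variable {p : ℕ} {σ : Type*} [Fintype σ]

/-- The exponent vector with entries `γ s < p`. -/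
noncomputable def digitExponent (γ : σ → Fin p) : σ →₀ ℕ :=
  Finsupp.equivFunOnFinite.symm fun s ↦ γ s

@[simp]
theorem digitExponent_apply (γ : σ → Fin p) (s : σ) : digitExponent γ s = γ s := rfl

theorem digitExponent_injective : Function.Injective (digitExponent (p := p) (σ := σ)) :=
  fun _ _ h ↦ funext fun s ↦ Fin.ext (DFunLike.congr_fun h s)

variable [NeZero p]

/-- Entrywise division with remainder by `p`. -/
noncomputable def exponentDivMod (p : ℕ) (σ : Type*) [Fintype σ] [NeZero p] :
    (σ →₀ ℕ) ≃ (σ → Fin p) × (σ →₀ ℕ) where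
  toFun u := (fun s ↦ Fin.ofNat p (u s), u.mapRange (· / p) (Nat.zero_div p))
  invFun x := p • x.2 + digitExponent x.1
  left_inv u := by
    ext s
    simp [Nat.div_add_mod]
  right_inv x := by
    have hp := NeZero.pos p
    ext s <;> simp [Nat.mul_add_div hp, Nat.mod_eq_of_lt]

theorem exists_smul_add_digitExponent_eq (p : ℕ) [NeZero p] (u : σ →₀ ℕ) :
    ∃ (v : σ →₀ ℕ) (γ : σ → Fin p), p • v + digitExponent γ = u :=
  ⟨_, _, (exponentDivMod p σ).symm_apply_apply u⟩

variable {R : Type*} [CommRing R]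

/-- The coefficient of `X ^ γ` of a polynomial in the basis `X ^ γ`, `γ s < p`, of the polynomial
ring over its subring of polynomials in the `X s ^ p`. -/
noncomputable def digit (γ : σ → Fin p) : MvPolynomial σ R →ₗ[R] MvPolynomial σ R :=
  (basisMonomials σ R).constr R fun u ↦
    if (exponentDivMod p σ u).1 = γ then monomial (exponentDivMod p σ u).2 1 else 0

theorem digit_monomial (γ δ : σ → Fin p) (v : σ →₀ ℕ) (r : R) :
    digit γ (monomial (p • v + digitExponent δ) r) = if δ = γ then monomial v r else 0 := by
  have hdm : exponentDivMod p σ (p • v + digitExponent δ) = (δ, v) :=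
    (exponentDivMod p σ).apply_symm_apply (δ, v)
  have h : monomial (p • v + digitExponent δ) r =
      r • basisMonomials σ R (p • v + digitExponent δ) := by simp [smul_monomial]
  rw [h, map_smul, digit, Module.Basis.constr_basis, hdm]
  split_ifs <;> simp [smul_monomial]

theorem digit_expand_mul (γ : σ → Fin p) (g f : MvPolynomial σ R) :
    digit γ (expand p g * f) = g * digit γ f := by
  induction g using MvPolynomial.induction_on' with
  | add g h hg hh => rw [map_add, add_mul, map_add, hg, hh, add_mul]
  | monomial w a =>
    induction f using MvPolynomial.induction_on' with
    | add f h hf hh => rw [mul_add, map_add, hf, hh, map_add, mul_add]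
    | monomial u r =>
      obtain ⟨v, δ, rfl⟩ := exists_smul_add_digitExponent_eq p u
      rw [expand_monomial, monomial_mul, ← add_assoc, ← smul_add, digit_monomial (p := p),
        digit_monomial (p := p), mul_ite, mul_zero, monomial_mul]

theorem sum_expand_digit_mul [DecidableEq σ] (f : MvPolynomial σ R) :
    ∑ γ : σ → Fin p, expand p (digit γ f) * monomial (digitExponent γ) 1 = f := by
  induction f using MvPolynomial.induction_on' with
  | add f g hf hg => simp only [map_add, add_mul, Finset.sum_add_distrib, hf, hg]
  | monomial u r =>
    obtain ⟨v, δ, rfl⟩ := exists_smul_add_digitExponent_eq p u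
    rw [Finset.sum_eq_single_of_mem δ (Finset.mem_univ δ)
      fun γ _ hγ ↦ by rw [digit_monomial (p := p), if_neg hγ.symm, map_zero, zero_mul]]
    rw [digit_monomial (p := p), if_pos rfl, expand_monomial, monomial_mul, mul_one]

theorem coeff_digit (γ : σ → Fin p) (v : σ →₀ ℕ) (f : MvPolynomial σ R) :
    coeff v (digit γ f) = coeff (p • v + digitExponent γ) f := by
  classical
  induction f using MvPolynomial.induction_on' with
  | add f g hf hg => rw [map_add, coeff_add, hf, hg, coeff_add]
  | monomial u r =>
    obtain ⟨w, δ, rfl⟩ := exists_smul_add_digitExponent_eq p u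
    have h : p • w + digitExponent δ = p • v + digitExponent γ ↔ δ = γ ∧ w = v := by
      rw [← Prod.mk_inj]
      exact (exponentDivMod p σ).symm.injective.eq_iff (a := (δ, w)) (b := (γ, v))
    rw [digit_monomial (p := p), coeff_monomial, apply_ite (coeff v), coeff_monomial, coeff_zero]
    simp only [h, ite_and]

theorem totalDegree_digit_add_le {γ : σ → Fin p} {f : MvPolynomial σ R} (h : digit γ f ≠ 0) :
    p * (digit γ f).totalDegree + (digitExponent γ).degree ≤ f.totalDegree := by
  obtain ⟨v, hv, hdeg⟩ := Finset.exists_mem_eq_sup _ (support_nonempty.2 h) Finsupp.degree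
  have hmem : p • v + digitExponent γ ∈ f.support := by
    rwa [mem_support_iff, ← coeff_digit, ← mem_support_iff]
  have hle : (p • v + digitExponent γ).degree ≤ f.totalDegree := le_totalDegree hmem
  rw [map_add, map_nsmul, smul_eq_mul] at hle
  rwa [show (digit γ f).totalDegree = v.degree from hdeg]

end Digits

section Center

theorem commute_gen_of_pderiv_symbol_eq_zero {R : Type*} [CommRing R] {n : ℕ} {a : WeylAlgebra R n}
    (h : ∀ s, pderiv s (symbol a) = 0) (s : Index n) : Commute a (gen R s) := by
  have hinner (t : Index n) : innerDer R (gen R) t a = 0 :=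
    symbol.map_eq_zero_iff.1 ((symbol_innerDer_gen t a).trans (h t))
  rcases s with i | i
  · exact sub_eq_zero.1 (hinner (.inr i))
  · exact (sub_eq_zero.1 (hinner (.inl i))).symm

theorem commute_of_pderiv_symbol_eq_zero {R : Type*} [CommRing R] {n : ℕ} {a : WeylAlgebra R n}
    (h : ∀ s, pderiv s (symbol a) = 0) (b : WeylAlgebra R n) : Commute a b := by
  induction b using induction_left with
  | one => exact Commute.one_right a
  | add b c hb hc => exact hb.add_right hc
  | smul r b hb => exact hb.smul_right r
  | gen_mul s b hb => exact (commute_gen_of_pderiv_symbol_eq_zero h s).mul_right hb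

theorem symbol_gen_inl_pow_mul {R : Type*} [CommRing R] {n : ℕ} (i : Fin n) (k : ℕ)
    (a : WeylAlgebra R n) : symbol (gen R (.inl i) ^ k * a) = X (.inl i) ^ k * symbol a := by
  induction k with
  | zero => simp
  | succ k ih => rw [pow_succ', mul_assoc, symbol_gen_inl_mul, ih, pow_succ', mul_assoc]

theorem symbol_mul_gen_inr_pow {R : Type*} [CommRing R] {n : ℕ} (i : Fin n) (k : ℕ)
    (a : WeylAlgebra R n) : symbol (a * gen R (.inr i) ^ k) = X (.inr i) ^ k * symbol a := by
  induction k with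
  | zero => simp
  | succ k ih => rw [pow_succ, ← mul_assoc, symbol_mul_gen_inr, ih, pow_succ', mul_assoc]

theorem symbol_gen_pow {R : Type*} [CommRing R] {n : ℕ} (s : Index n) (k : ℕ) :
    symbol (gen R s ^ k) = (X s ^ k : MvPolynomial (Index n) R) := by
  rcases s with i | i
  · simpa using symbol_gen_inl_pow_mul (R := R) i k 1
  · simpa using symbol_mul_gen_inr_pow (R := R) i k 1

variable {p : ℕ} {n : ℕ}

theorem commute_gen_pow_char (s : Index n) (a : WeylAlgebra (ZMod p) n) :
    Commute (gen (ZMod p) s ^ p) a :=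
  commute_of_pderiv_symbol_eq_zero (fun t ↦ by simp [symbol_gen_pow]) a

theorem symbol_gen_pow_char_mul (s : Index n) (a : WeylAlgebra (ZMod p) n) :
    symbol (gen (ZMod p) s ^ p * a) = X s ^ p * symbol a := by
  rcases s with i | i
  · exact symbol_gen_inl_pow_mul i p a
  · rw [(commute_gen_pow_char _ a).eq, symbol_mul_gen_inr_pow]

/-- The polynomial subring of the center of the Weyl algebra generated by the `p`-th powers of the
generators. -/
noncomputable def centerHom (p n : ℕ) : MvPolynomial (Index n) (ZMod p) →ₐ[ZMod p]
    Subalgebra.center (ZMod p) (WeylAlgebra (ZMod p) n) :=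
  aeval fun s ↦ ⟨gen (ZMod p) s ^ p,
    Subalgebra.mem_center_iff.2 fun a ↦ (commute_gen_pow_char s a).eq.symm⟩

noncomputable instance centerAlgebra :
    Algebra (MvPolynomial (Index n) (ZMod p)) (WeylAlgebra (ZMod p) n) :=
  ((Subalgebra.center (ZMod p) (WeylAlgebra (ZMod p) n)).val.comp
    (centerHom p n)).toRingHom.toAlgebra'
    fun z a ↦ (Subalgebra.mem_center_iff.1 (centerHom p n z).2 a).symm

instance : IsScalarTower (ZMod p) (MvPolynomial (Index n) (ZMod p)) (WeylAlgebra (ZMod p) n) :=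
  IsScalarTower.of_algebraMap_eq fun a ↦
    (((Subalgebra.center (ZMod p) (WeylAlgebra (ZMod p) n)).val.comp
      (centerHom p n)).commutes a).symm

theorem algebraMap_X (s : Index n) :
    algebraMap (MvPolynomial (Index n) (ZMod p)) (WeylAlgebra (ZMod p) n) (X s) =
      gen (ZMod p) s ^ p :=
  congrArg Subtype.val (aeval_X (fun s ↦ (⟨gen (ZMod p) s ^ p, _⟩ : Subalgebra.center _ _)) s)

theorem symbol_smul (z : MvPolynomial (Index n) (ZMod p)) (a : WeylAlgebra (ZMod p) n) :
    symbol (z • a) = expand p z * symbol a := by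
  induction z using MvPolynomial.induction_on generalizing a with
  | C r =>
    rw [← algebraMap_eq, algebraMap_smul, map_smul, AlgHom.commutes, Algebra.smul_def]
  | add f g hf hg => rw [add_smul, map_add, hf, hg, map_add, add_mul]
  | mul_X f s hf =>
    rw [mul_smul, hf, Algebra.smul_def, algebraMap_X, symbol_gen_pow_char_mul, map_mul, expand_X,
      mul_assoc]

variable [Fact p.Prime]

/-- The basis of normally ordered monomials with exponents less than `p`. -/
noncomputable def monomialBasis (p n : ℕ) [Fact p.Prime] : Module.Basis (Index n → Fin p)
    (MvPolynomial (Index n) (ZMod p)) (WeylAlgebra (ZMod p) n) :=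
  .ofEquivFun
    { toFun a γ := digit γ (symbol a)
      invFun z := ∑ γ, z γ • normalOrder (monomial (digitExponent γ) 1)
      map_add' a b := by
        ext1 γ
        simp
      map_smul' z a := by
        ext1 γ
        simp [symbol_smul, digit_expand_mul]
      left_inv a := by
        apply symbol.injective
        simp only [map_sum, symbol_smul, symbol_normalOrder, sum_expand_digit_mul]
      right_inv z := by
        ext1 γ
        have h (δ : Index n → Fin p) :
            digit γ (monomial (digitExponent δ) (1 : ZMod p)) = if δ = γ then 1 else 0 := by
          simpa using digit_monomial γ δ 0 (1 : ZMod p)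
        simp [symbol_smul, digit_expand_mul, h] }

theorem monomialBasis_apply (γ : Index n → Fin p) :
    monomialBasis p n γ = normalOrder (monomial (digitExponent γ) 1) := by
  simp [monomialBasis, Module.Basis.ofEquivFun, Pi.single_apply]

theorem totalDegree_repr_add_le {γ : Index n → Fin p} {a : WeylAlgebra (ZMod p) n}
    (h : (monomialBasis p n).repr a γ ≠ 0) :
    p * ((monomialBasis p n).repr a γ).totalDegree + (digitExponent γ).degree ≤
      (symbol a).totalDegree :=
  totalDegree_digit_add_le h

theorem finrank_weylAlgebra : Module.finrank (MvPolynomial (Index n) (ZMod p))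
    (WeylAlgebra (ZMod p) n) = Fintype.card (Index n → Fin p) :=
  Module.finrank_eq_card_basis (monomialBasis p n)

end Center

section IteratedDerivatives

variable {R : Type*} [CommRing R] {n : ℕ} {B : Type*} [Ring B] [Algebra R B]
  (φ : WeylAlgebra R n →ₐ[R] B) {c : B}

theorem innerDer_mul_apply (hc : ∀ a, Commute c (φ a)) (s : Index n) (a : WeylAlgebra R n) :
    innerDer R (φ ∘ gen R) s (c * φ a) = c * φ (innerDer R (gen R) s a) := by
  rcases s with i | i
  · simp only [innerDer_inl, Function.comp_apply, map_sub, map_mul, mul_sub, mul_assoc]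
    rw [← mul_assoc, ← (hc _).eq, mul_assoc]
  · simp only [innerDer_inr, Function.comp_apply, map_sub, map_mul, mul_sub, mul_assoc]
    rw [← mul_assoc (φ (gen R _)) c, ← (hc _).eq, mul_assoc]

theorem prod_innerDer_mul_apply_normalOrder (hc : ∀ a, Commute c (φ a)) (l : List (Index n))
    (f : MvPolynomial (Index n) R) :
    (l.map (innerDer R (φ ∘ gen R))).prod (c * φ (normalOrder f)) =
      c * φ (normalOrder ((l.map fun s ↦ (pderiv (R := R) s).toLinearMap).prod f)) := by
  induction l with
  | nil => simp
  | cons s l ih =>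
    rw [List.map_cons, List.prod_cons, Module.End.mul_apply, ih, innerDer_mul_apply φ hc,
      List.map_cons, List.prod_cons, Module.End.mul_apply]
    congr 2
    apply symbol.injective
    simp [symbol_innerDer_gen]

/-- Differentiating `u s` times in each variable `X s` isolates the coefficient of `X ^ u` among
the monomials of degree at most that of `u`. -/
theorem exists_prod_pderiv_monomial_eq {p : ℕ} [Fact p.Prime] {σ : Type*} [DecidableEq σ]
    (u : σ →₀ ℕ) (hu : ∀ s, u s < p) :
    ∃ (l : List σ) (r : ZMod p), r ≠ 0 ∧ ∀ v : σ →₀ ℕ, v.degree ≤ u.degree →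
      (l.map fun s ↦ (pderiv (R := ZMod p) s).toLinearMap).prod (monomial v 1) =
        if v = u then C r else 0 := by
  induction hk : u.degree generalizing u with
  | zero =>
    obtain rfl : u = 0 := (Finsupp.degree_eq_zero_iff u).1 hk
    refine ⟨[], 1, one_ne_zero, fun v hv ↦ ?_⟩
    obtain rfl : v = 0 := (Finsupp.degree_eq_zero_iff v).1 (by simpa using hv)
    simp
  | succ k ih =>
    obtain ⟨s, u, rfl, hdeg⟩ := exists_eq_single_add (m := u) (by rintro rfl; simp at hk)
    have hus : u s + 1 < p := by simpa [add_comm] using hu s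
    obtain ⟨l, r, hr, hl⟩ := ih u (fun t ↦ (by simp : u t ≤ _).trans_lt (hu t)) (by lia)
    refine ⟨l ++ [s], r * (u s + 1 : ℕ), mul_ne_zero hr fun h ↦ ?_, fun v hv ↦ ?_⟩
    · rw [ZMod.natCast_eq_zero_iff] at h
      exact absurd (Nat.le_of_dvd (Nat.succ_pos _) h) hus.not_ge
    rw [List.map_append, List.prod_append, List.map_singleton, List.prod_singleton,
      Module.End.mul_apply, Derivation.coeFn_coe, pderiv_monomial]
    by_cases hvs : v s = 0
    · have hne : v ≠ Finsupp.single s 1 + u := by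
        rintro rfl
        simp at hvs
      simp [hvs, hne]
    obtain ⟨v, rfl⟩ : ∃ v', v = Finsupp.single s 1 + v' :=
      ⟨v - Finsupp.single s 1, (add_tsub_cancel_of_le (by simpa using by lia)).symm⟩
    have hvk : v.degree ≤ k := by simpa [add_comm 1] using hv
    rw [add_tsub_cancel_left, one_mul, ← mul_one ((_ : ℕ) : ZMod p), ← smul_eq_mul,
      ← smul_monomial, map_smul, hl v hvk]
    rcases eq_or_ne v u with rfl | hvu
    · simp [smul_eq_C_mul, mul_comm, add_comm]
    · simp [hvu]

end IteratedDerivatives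

section Centralizer

variable {p : ℕ} [Fact p.Prime] {n : ℕ}

theorem eq_zero_of_sum_mul_apply_monomialBasis_eq_zero {B : Type*} [Ring B] [Algebra (ZMod p) B]
    {φ : WeylAlgebra (ZMod p) n →ₐ[ZMod p] B} {c : (Index n → Fin p) → B}
    (hc : ∀ γ a, Commute (c γ) (φ a)) (h : ∑ γ, c γ * φ (monomialBasis p n γ) = 0) : c = 0 := by
  classical
  by_contra hc0
  obtain ⟨γ, hγ, hmax⟩ := Finset.exists_max_image {γ | c γ ≠ 0}
    (fun γ ↦ (digitExponent γ).degree) (by simpa [Finset.Nonempty] using Function.ne_iff.1 hc0)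
  obtain ⟨l, r, hr, hl⟩ := exists_prod_pderiv_monomial_eq (digitExponent γ) fun s ↦ (γ s).2
  have hterm (δ : Index n → Fin p) :
      (l.map (innerDer (ZMod p) (φ ∘ gen (ZMod p)))).prod (c δ * φ (monomialBasis p n δ)) =
        if δ = γ then r • c γ else 0 := by
    rw [monomialBasis_apply, prod_innerDer_mul_apply_normalOrder φ (hc δ)]
    by_cases hδ : c δ = 0
    · rcases eq_or_ne δ γ with rfl | hne
      · simp [hδ]
      · simp [hδ, hne]
    rw [hl _ (hmax δ (by simpa using hδ))]
    simp only [digitExponent_injective.eq_iff]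
    split_ifs with hδγ
    · rw [hδγ, normalOrder_C, AlgHom.commutes, ← Algebra.commutes, Algebra.smul_def]
    · simp
  have hsum := congrArg (l.map (innerDer (ZMod p) (φ ∘ gen (ZMod p)))).prod h
  rw [map_sum, Finset.sum_congr rfl fun δ _ ↦ hterm δ, Finset.sum_ite_eq',
    if_pos (Finset.mem_univ _), map_zero, smul_eq_zero_iff_right hr] at hsum
  simp [hsum] at hγ

theorem monomialBasis_zero : monomialBasis p n 0 = 1 := by
  rw [monomialBasis_apply, show digitExponent (0 : Index n → Fin p) = 0 by ext; simp]
  exact normalOrder_one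

instance : Module.Finite (MvPolynomial (Index n) (ZMod p)) (WeylAlgebra (ZMod p) n) :=
  .of_basis (monomialBasis p n)

instance : Module.IsTorsionFree (MvPolynomial (Index n) (ZMod p)) (WeylAlgebra (ZMod p) n) :=
  (monomialBasis p n).isTorsionFree

variable {φ : WeylAlgebra (ZMod p) n →ₐ[ZMod p] WeylAlgebra (ZMod p) n}

/-- The elements `φ b_γ` and `c φ b_γ` are too many to be independent over the center, so `c` is a
fraction of central elements. -/
theorem exists_smul_eq_algebraMap_of_commute {c : WeylAlgebra (ZMod p) n}
    (hc : ∀ a, Commute c (φ a)) :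
    ∃ y z : MvPolynomial (Index n) (ZMod p), y ≠ 0 ∧ y • c = algebraMap _ _ z := by
  have hdep : ¬ LinearIndependent (MvPolynomial (Index n) (ZMod p))
      (Sum.elim (fun γ ↦ φ (monomialBasis p n γ)) fun γ ↦ c * φ (monomialBasis p n γ)) := by
    intro hli
    have hle := hli.fintype_card_le_finrank
    rw [finrank_weylAlgebra, Fintype.card_sum] at hle
    have := Fintype.card_pos (α := Index n → Fin p)
    lia
  obtain ⟨w, hw, i, hi⟩ := Fintype.not_linearIndependent_iff.1 hdep
  have hzero := eq_zero_of_sum_mul_apply_monomialBasis_eq_zero (φ := φ)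
    (c := fun γ ↦ algebraMap _ _ (w (.inl γ)) + algebraMap _ _ (w (.inr γ)) * c)
    (fun γ a ↦ (Algebra.commute_algebraMap_left _ _).add_left
      ((Algebra.commute_algebraMap_left _ _).mul_left (hc a)))
    (by simpa [Fintype.sum_sum_type, ← Finset.sum_add_distrib, add_mul, mul_assoc,
      Algebra.smul_def] using hw)
  by_contra! hy
  have hinr (γ) : w (.inr γ) = 0 := by
    by_contra h
    refine hy _ (-w (.inl γ)) h ?_
    rw [Algebra.smul_def, map_neg]
    exact eq_neg_of_add_eq_zero_right (congrFun hzero γ)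
  rcases i with γ | γ
  · refine hi ((FaithfulSMul.algebraMap_eq_zero_iff _ (WeylAlgebra (ZMod p) n)).1 ?_)
    simpa [hinr γ] using congrFun hzero γ
  · exact hi (hinr γ)

theorem exists_algebraMap_eq_of_commute {c : WeylAlgebra (ZMod p) n}
    (hc : ∀ a, Commute c (φ a)) : ∃ z : MvPolynomial (Index n) (ZMod p), algebraMap _ _ z = c := by
  obtain ⟨y, z, hy, hyz⟩ := exists_smul_eq_algebraMap_of_commute hc
  rw [Algebra.algebraMap_eq_smul_one, ← monomialBasis_zero] at hyz
  refine ⟨(monomialBasis p n).repr c 0, smul_right_injective _ hy ?_⟩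
  have hcoord : y * (monomialBasis p n).repr c 0 = z := by
    simpa using congr((monomialBasis p n).repr $hyz 0)
  dsimp only
  rw [hyz, ← hcoord, mul_smul, Algebra.algebraMap_eq_smul_one, monomialBasis_zero]

variable (φ) in
theorem exists_centerMap : ∃ Φ : MvPolynomial (Index n) (ZMod p) →ₐ[ZMod p]
    MvPolynomial (Index n) (ZMod p), ∀ z, φ (algebraMap _ _ z) = algebraMap _ _ (Φ z) := by
  have hcomm (s : Index n) (a) : Commute (φ (gen (ZMod p) s ^ p)) (φ a) :=
    (commute_gen_pow_char s a).map φ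
  choose w hw using fun s ↦ exists_algebraMap_eq_of_commute (hcomm s)
  have heq : φ.comp (IsScalarTower.toAlgHom (ZMod p) (MvPolynomial (Index n) (ZMod p)) _) =
      (IsScalarTower.toAlgHom _ _ _).comp (aeval w) := by
    refine MvPolynomial.algHom_ext fun s ↦ ?_
    simp [hw, algebraMap_X]
  exact ⟨aeval w, fun z ↦ congr($heq z)⟩

variable {Φ : MvPolynomial (Index n) (ZMod p) →ₐ[ZMod p] MvPolynomial (Index n) (ZMod p)}

theorem apply_smul_of_centerMap (hΦ : ∀ z, φ (algebraMap _ _ z) = algebraMap _ _ (Φ z))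
    (z : MvPolynomial (Index n) (ZMod p)) (a : WeylAlgebra (ZMod p) n) :
    φ (z • a) = Φ z • φ a := by
  rw [Algebra.smul_def, map_mul, hΦ, ← Algebra.smul_def]

theorem injective_of_injective_centerMap
    (hΦ : ∀ z, φ (algebraMap _ _ z) = algebraMap _ _ (Φ z)) (hinj : Function.Injective Φ) :
    Function.Injective φ := by
  refine (injective_iff_map_eq_zero φ).2 fun a ha ↦ (monomialBasis p n).ext_elem fun γ ↦ ?_
  have hzero := eq_zero_of_sum_mul_apply_monomialBasis_eq_zero (φ := φ)
    (c := fun γ ↦ algebraMap _ _ (Φ ((monomialBasis p n).repr a γ)))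
    (fun γ a ↦ Algebra.commutes _ _) (by
      rw [← ha]
      conv_rhs => rw [← (monomialBasis p n).sum_repr a, map_sum]
      simp only [apply_smul_of_centerMap hΦ]
      simp only [Algebra.smul_def])
  rw [map_zero, Finsupp.zero_apply]
  apply hinj
  rw [map_zero]
  exact (FaithfulSMul.algebraMap_eq_zero_iff _ (WeylAlgebra (ZMod p) n)).1 (congrFun hzero γ)

end Centralizer

section LoweringOperators

theorem pow_succ_mul_of_mul_eq_mul_add_one {B : Type*} [Ring B] {d x : B} (h : d * x = x * d + 1)
    (k : ℕ) : d ^ (k + 1) * x = x * d ^ (k + 1) + ((k + 1 : ℕ) : B) * d ^ k := by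
  induction k with
  | zero => simpa using h
  | succ k ih =>
    rw [pow_succ' d (k + 1), mul_assoc, ih, mul_add, ← mul_assoc d x, h, ← mul_assoc d _ (d ^ k),
      (Nat.cast_commute _ d).eq.symm, mul_assoc _ d, ← pow_succ']
    push_cast
    noncomm_ring

variable {p : ℕ} [Fact p.Prime]

theorem mem_of_pow_apply_eq_zero {B : Type*} [AddCommGroup B] [Module (ZMod p) B]
    {T L : Module.End (ZMod p) B} (hTL : T * L = L * T + 1) {V W : Submodule (ZMod p) B}
    (hVT : ∀ x ∈ V, T x ∈ V) (hVL : ∀ x ∈ V, L x ∈ V) (hWL : ∀ x ∈ W, L x ∈ W)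
    (hker : ∀ x ∈ V, T x = 0 → x ∈ W) {k : ℕ} (hk : k ≤ p) {x : B} (hx : x ∈ V)
    (hTx : (T ^ k) x = 0) : x ∈ W := by
  induction k generalizing x with
  | zero =>
    obtain rfl : x = 0 := by simpa using hTx
    exact W.zero_mem
  | succ k ih =>
    rcases k with - | k
    · exact hker x hx (by simpa using hTx)
    have hLT : L (T x) ∈ W :=
      hWL _ (ih (by lia) (hVT x hx) (by rwa [pow_succ, Module.End.mul_apply] at hTx))
    have hdiff : (k + 1 : ZMod p) • x - L (T x) ∈ W := by
      refine ih (by lia) (V.sub_mem (V.smul_mem _ hx) (hVL _ (hVT x hx))) ?_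
      rw [pow_succ, Module.End.mul_apply] at hTx
      have hpow := congr($(pow_succ_mul_of_mul_eq_mul_add_one hTL k) (T x))
      simp only [Module.End.mul_apply, LinearMap.add_apply, hTx, map_zero, zero_add] at hpow
      rw [map_sub, hpow, map_smul, Module.End.natCast_apply, ← Module.End.mul_apply,
        ← pow_succ, ← Nat.cast_smul_eq_nsmul (ZMod p), Nat.cast_succ, sub_self]
    have hunit : (k + 1 : ZMod p) ≠ 0 := by
      rw [← Nat.cast_succ, Ne, ZMod.natCast_eq_zero_iff]
      exact Nat.not_dvd_of_pos_of_lt (Nat.succ_pos _) hk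
    exact (W.smul_mem_iff hunit).1 (by simpa using W.add_mem hdiff hLT)

variable {n : ℕ} {B : Type*} [Ring B] {g : Index n → B}

theorem IsWeylFamily.innerDer_mul {R : Type*} [CommRing R] [Algebra R B] (hg : IsWeylFamily g)
    (s t : Index n) (b : B) :
    innerDer R g s (g t * b) = g t * innerDer R g s b + if s = t then b else 0 := by
  rcases s with i | i <;> rcases t with j | j
  · simp only [innerDer_inl, ← mul_assoc, hg.dx, Sum.inl.injEq]
    split_ifs <;> noncomm_ring
  · simp only [innerDer_inl, ← mul_assoc, hg.dd i j, reduceCtorEq, if_false]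
    noncomm_ring
  · simp only [innerDer_inr, ← mul_assoc, hg.xx i j, reduceCtorEq, if_false]
    noncomm_ring
  · simp only [innerDer_inr, mul_sub, ← mul_assoc, hg.dx, Sum.inr.injEq, eq_comm (a := i)]
    split_ifs <;> noncomm_ring

theorem IsWeylFamily.commute_innerDer {R : Type*} [CommRing R] [Algebra R B]
    (hg : IsWeylFamily g) (s t : Index n) : Commute (innerDer R g s) (innerDer R g t) := by
  refine LinearMap.ext fun b ↦ ?_
  simp only [Module.End.mul_apply]
  rcases s with i | i <;> rcases t with j | j
  · simp only [innerDer_inl, mul_sub, sub_mul, ← mul_assoc, hg.dd i j]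
    simp only [mul_assoc, hg.dd i j]
    noncomm_ring
  · simp only [innerDer_inl, innerDer_inr, mul_sub, sub_mul, ← mul_assoc, hg.dx]
    simp only [mul_assoc, hg.dx]
    split_ifs <;> noncomm_ring
  · simp only [innerDer_inl, innerDer_inr, mul_sub, sub_mul, ← mul_assoc, hg.dx]
    simp only [mul_assoc, hg.dx]
    split_ifs <;> noncomm_ring
  · simp only [innerDer_inr, mul_sub, sub_mul, ← mul_assoc, hg.xx i j]
    simp only [mul_assoc, hg.xx i j]
    noncomm_ring

theorem innerDer_pow_char_eq_zero [Algebra (ZMod p) B] (hg : ∀ s b, Commute (g s ^ p) b)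
    (s : Index n) : innerDer (ZMod p) g s ^ p = 0 := by
  nontriviality B
  have : CharP (Module.End (ZMod p) B) p := charP_of_injective_algebraMap' (ZMod p) p
  have hpow (t : Index n) :
      LinearMap.mulLeft (ZMod p) (g t) ^ p = LinearMap.mulRight (ZMod p) (g t) ^ p := by
    rw [LinearMap.pow_mulLeft, LinearMap.pow_mulRight]
    exact LinearMap.ext fun b ↦ hg t b
  have hcomm (t : Index n) := LinearMap.commute_mulLeft_right (R := ZMod p) (g t) (g t)
  rcases s with i | i
  · exact (sub_pow_char_of_commute _ (hcomm _)).trans (sub_eq_zero.2 (hpow _))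
  · exact (sub_pow_char_of_commute _ (hcomm _).symm).trans (sub_eq_zero.2 (hpow _).symm)

theorem IsWeylFamily.eq_top_of_forall_mul_mem [Algebra (ZMod p) B] (hg : IsWeylFamily g)
    (hcenter : ∀ s b, Commute (g s ^ p) b) {W : Submodule (ZMod p) B}
    (hW : ∀ s, ∀ x ∈ W, g s * x ∈ W) (hker : ∀ x, (∀ s, innerDer (ZMod p) g s x = 0) → x ∈ W) :
    W = ⊤ := by
  suffices h : ∀ (S : Finset (Index n)) (x : B), (∀ s ∉ S, innerDer (ZMod p) g s x = 0) → x ∈ W from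
    (Submodule.eq_top_iff'.2 fun x ↦ h Finset.univ x (by simp))
  intro S
  induction S using Finset.induction_on with
  | empty => simpa using hker
  | insert s S _ ih =>
    intro x hx
    refine mem_of_pow_apply_eq_zero (T := innerDer (ZMod p) g s)
      (L := LinearMap.mulLeft (ZMod p) (g s))
      (V := ⨅ t ∉ insert s S, LinearMap.ker (innerDer (ZMod p) g t))
      (LinearMap.ext fun b ↦ by simp [hg.innerDer_mul]) ?_ ?_ (hW s) ?_ le_rfl
      (by simpa [Submodule.mem_iInf] using hx) (by rw [innerDer_pow_char_eq_zero hcenter]; rfl)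
    all_goals simp only [Submodule.mem_iInf, LinearMap.mem_ker]
    · intro y hy t ht
      rw [← Module.End.mul_apply, (hg.commute_innerDer t s).eq, Module.End.mul_apply, hy t ht,
        map_zero]
    · intro y hy t ht
      rw [LinearMap.mulLeft_apply, hg.innerDer_mul, hy t ht, if_neg (by grind), mul_zero, add_zero]
    · exact fun y hy hsy ↦ ih y fun t ht ↦ by grind

end LoweringOperators

section Centralizer

variable {p : ℕ} [Fact p.Prime] {n : ℕ}
  {φ : WeylAlgebra (ZMod p) n →ₐ[ZMod p] WeylAlgebra (ZMod p) n}
  {Φ : MvPolynomial (Index n) (ZMod p) →ₐ[ZMod p] MvPolynomial (Index n) (ZMod p)}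

theorem commute_apply_of_innerDer_eq_zero {R : Type*} [CommRing R] {B : Type*} [Ring B]
    [Algebra R B] {φ : WeylAlgebra R n →ₐ[R] B} {c : B}
    (hc : ∀ s, innerDer R (φ ∘ gen R) s c = 0) (a : WeylAlgebra R n) : Commute c (φ a) := by
  induction a using induction_left with
  | one => simp
  | add a b ha hb => simpa using ha.add_right hb
  | smul r a ha => simpa using ha.smul_right r
  | gen_mul s a ha =>
    rw [map_mul]
    refine Commute.mul_right ?_ ha
    rcases s with i | i
    · exact sub_eq_zero.1 (hc (.inr i))
    · exact (sub_eq_zero.1 (hc (.inl i))).symm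

theorem surjective_of_surjective_centerMap
    (hΦ : ∀ z, φ (algebraMap _ _ z) = algebraMap _ _ (Φ z)) (hsurj : Function.Surjective Φ) :
    Function.Surjective φ := by
  have hcenter (s : Index n) (b) : Commute ((φ ∘ gen (ZMod p)) s ^ p) b := by
    rw [Function.comp_apply, ← map_pow, ← algebraMap_X, hΦ]
    exact Algebra.commute_algebraMap_left _ _
  have htop : LinearMap.range φ.toLinearMap = ⊤ := by
    refine (isWeylFamily_gen.map φ.toRingHom).eq_top_of_forall_mul_mem hcenter ?_ fun x hx ↦ ?_
    · rintro s - ⟨a, rfl⟩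
      exact ⟨gen (ZMod p) s * a, by simp⟩
    · obtain ⟨z, rfl⟩ := exists_algebraMap_eq_of_commute (commute_apply_of_innerDer_eq_zero hx)
      obtain ⟨y, rfl⟩ := hsurj z
      exact ⟨algebraMap _ _ y, hΦ y⟩
  exact LinearMap.range_eq_top.1 htop

end Centralizer

section GeneratorMatrices

variable {R : Type*} [CommRing R] {n : ℕ} {φ : WeylAlgebra R n →ₐ[R] WeylAlgebra R n}
  {ι : Type*} [Fintype ι] {a : ι → WeylAlgebra R n} {U : Index n → ι → ι → WeylAlgebra R n}

theorem exists_mul_gen_pow_eq_sum {c : ℕ}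
    (hU : ∀ s l, a l * gen R s = ∑ k, φ (U s l k) * a k)
    (hUc : ∀ s l k, (symbol (U s l k)).totalDegree ≤ c) (s : Index n) (e : ℕ) :
    ∃ t : ι → ι → WeylAlgebra R n, (∀ l k, (symbol (t l k)).totalDegree ≤ e * c) ∧
      ∀ l, a l * gen R s ^ e = ∑ k, φ (t l k) * a k := by
  classical
  induction e with
  | zero =>
    refine ⟨fun l k ↦ if l = k then 1 else 0, fun l k ↦ ?_, fun l ↦ ?_⟩
    · dsimp only
      split_ifs <;> simp
    · simp [apply_ite φ]
  | succ e ih =>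
    obtain ⟨t, ht, hte⟩ := ih
    refine ⟨fun l k ↦ ∑ i, t l i * U s i k, fun l k ↦ ?_, fun l ↦ ?_⟩
    · rw [map_sum]
      refine totalDegree_finsetSum_le fun i _ ↦ (totalDegree_symbol_mul_le _ _).trans ?_
      rw [add_mul, one_mul]
      exact add_le_add (ht l i) (hUc s i k)
    · rw [pow_succ, ← mul_assoc, hte, Finset.sum_mul]
      simp only [mul_assoc, hU, Finset.mul_sum, map_sum, map_mul, Finset.sum_mul]
      exact Finset.sum_comm

theorem exists_eq_sum_apply_mul (hU : ∀ s l, a l * gen R s = ∑ k, φ (U s l k) * a k)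
    {l₀ : ι} (hl₀ : a l₀ = 1) (b : WeylAlgebra R n) :
    ∃ t : ι → WeylAlgebra R n, b = ∑ k, φ (t k) * a k := by
  classical
  suffices h : ∀ l, ∃ t : ι → WeylAlgebra R n, a l * b = ∑ k, φ (t k) * a k by
    simpa [hl₀] using h l₀
  induction b using induction_left with
  | one => exact fun l ↦ ⟨fun k ↦ if l = k then 1 else 0, by simp [apply_ite φ]⟩
  | add b b' hb hb' =>
    intro l
    obtain ⟨t, ht⟩ := hb l
    obtain ⟨t', ht'⟩ := hb' l
    exact ⟨t + t', by simp [mul_add, add_mul, Finset.sum_add_distrib, ht, ht']⟩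
  | smul r b hb =>
    intro l
    obtain ⟨t, ht⟩ := hb l
    exact ⟨r • t, by simp [ht, Finset.smul_sum]⟩
  | gen_mul s b hb =>
    intro l
    choose t ht using hb
    refine ⟨fun k ↦ ∑ i, U s l i * t i k, ?_⟩
    rw [← mul_assoc, hU, Finset.sum_mul]
    simp only [mul_assoc, ht, Finset.mul_sum, map_sum, map_mul, Finset.sum_mul]
    exact Finset.sum_comm

end GeneratorMatrices

section FiniteOverImage

theorem exists_sum_smul_eq_zero_of_card_lt {P P' M I J : Type*} [CommRing P] [Nontrivial P]
    [Semiring P'] [AddCommMonoid M] [Module P' M] [Fintype I] [Fintype J] {f : P →+* P'}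
    {u : I → M} {v : J → M} {w : I → J → P} (h : ∀ i, u i = ∑ j, f (w i j) • v j)
    (hcard : Fintype.card J < Fintype.card I) : ∃ y : I → P, y ≠ 0 ∧ ∑ i, f (y i) • u i = 0 := by
  have hdep : ¬ LinearIndependent P w := fun hli ↦ hcard.not_ge <| by
    simpa using hli.fintype_card_le_finrank
  obtain ⟨y, hy, i, hi⟩ := Fintype.not_linearIndependent_iff.1 hdep
  refine ⟨y, Function.ne_iff.2 ⟨i, hi⟩, ?_⟩
  calc ∑ i, f (y i) • u i = ∑ j, f ((∑ i, y i • w i) j) • v j := by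
        simp only [h, Finset.smul_sum, Finset.sum_apply, Pi.smul_apply, smul_eq_mul, map_sum,
          map_mul, Finset.sum_smul, mul_smul]
        exact Finset.sum_comm
    _ = 0 := by simp only [hy, Pi.zero_apply, map_zero, zero_smul, Finset.sum_const_zero]

variable {p : ℕ} [Fact p.Prime] {n : ℕ}
  {φ : WeylAlgebra (ZMod p) n →ₐ[ZMod p] WeylAlgebra (ZMod p) n}
  {Φ : MvPolynomial (Index n) (ZMod p) →ₐ[ZMod p] MvPolynomial (Index n) (ZMod p)}

theorem apply_mul_eq_sum_repr (hΦ : ∀ z, φ (algebraMap _ _ z) = algebraMap _ _ (Φ z))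
    (x b : WeylAlgebra (ZMod p) n) :
    φ x * b = ∑ γ, Φ ((monomialBasis p n).repr x γ) • (φ (monomialBasis p n γ) * b) := by
  conv_lhs => rw [← (monomialBasis p n).sum_repr x, map_sum, Finset.sum_mul]
  simp only [apply_smul_of_centerMap hΦ, smul_mul_assoc]

variable {ι : Type*} [Fintype ι] {a : ι → WeylAlgebra (ZMod p) n}

/-- The elements `z ^ j • φ b_γ` with `j ≤ m` are `Φ`-linear combinations of the fewer elements
`φ b_δ * a l`. -/
theorem exists_polynomial_eval₂_eq_zero
    (hΦ : ∀ z, φ (algebraMap _ _ z) = algebraMap _ _ (Φ z))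
    (hspan : ∀ b, ∃ t : ι → WeylAlgebra (ZMod p) n, b = ∑ k, φ (t k) * a k)
    (z : MvPolynomial (Index n) (ZMod p)) :
    ∃ f : Polynomial (MvPolynomial (Index n) (ZMod p)), f ≠ 0 ∧ f.natDegree ≤ Fintype.card ι ∧
      f.eval₂ Φ.toRingHom z = 0 := by
  choose t ht using fun j : Fin (Fintype.card ι + 1) ↦ hspan (algebraMap _ _ (z ^ (j : ℕ)))
  have hcomb (i : Fin (Fintype.card ι + 1) × (Index n → Fin p)) :
      z ^ (i.1 : ℕ) • φ (monomialBasis p n i.2) = ∑ k : ι × (Index n → Fin p),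
        Φ.toRingHom ((monomialBasis p n).repr (monomialBasis p n i.2 * t i.1 k.1) k.2) •
          (φ (monomialBasis p n k.2) * a k.1) := by
    rw [Algebra.smul_def, Algebra.commutes, ht, Finset.mul_sum, Fintype.sum_prod_type]
    refine Finset.sum_congr rfl fun k _ ↦ ?_
    rw [← mul_assoc, ← map_mul]
    exact apply_mul_eq_sum_repr hΦ _ _
  obtain ⟨y, hy, hsum⟩ := exists_sum_smul_eq_zero_of_card_lt hcomb (by
    rw [Fintype.card_prod, Fintype.card_prod, Fintype.card_fin]
    exact Nat.mul_lt_mul_of_pos_right (Nat.lt_succ_self _) Fintype.card_pos)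
  obtain ⟨⟨j, γ⟩, hjγ⟩ := Function.ne_iff.1 hy
  have hzero := eq_zero_of_sum_mul_apply_monomialBasis_eq_zero
    (c := fun γ ↦ algebraMap _ _ (∑ j, Φ (y (j, γ)) * z ^ (j : ℕ)))
    (fun γ b ↦ Algebra.commute_algebraMap_left _ _) (by
      rw [← hsum, Fintype.sum_prod_type_right]
      simp only [← Algebra.smul_def, Finset.sum_smul, mul_smul]
      rfl)
  refine ⟨∑ j : Fin (Fintype.card ι + 1), Polynomial.monomial (j : ℕ) (y (j, γ)),
    fun h ↦ hjγ ?_, ?_, ?_⟩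
  · simpa [Polynomial.finsetSum_coeff, Polynomial.coeff_monomial, Fin.val_inj] using
      congr(Polynomial.coeff $h j)
  · exact Polynomial.natDegree_sum_le_of_forall_le _ _ fun i _ ↦
      (Polynomial.natDegree_monomial_le _).trans (Nat.lt_succ_iff.1 i.2)
  · rw [Polynomial.eval₂_finsetSum]
    refine (FaithfulSMul.algebraMap_eq_zero_iff _ (WeylAlgebra (ZMod p) n)).1 ?_
    simpa using congrFun hzero γ

theorem totalDegree_repr_monomialBasis_mul_add_le {γ δ : Index n → Fin p} {k : ℕ}
    {b : WeylAlgebra (ZMod p) n} (hb : (symbol b).totalDegree ≤ k)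
    (h : (monomialBasis p n).repr (monomialBasis p n δ * b) γ ≠ 0) :
    p * ((monomialBasis p n).repr (monomialBasis p n δ * b) γ).totalDegree +
      (digitExponent γ).degree ≤ k + (digitExponent δ).degree := by
  refine (totalDegree_repr_add_le h).trans ((totalDegree_symbol_mul_le _ _).trans ?_)
  rw [monomialBasis_apply, symbol_normalOrder, totalDegree_monomial _ one_ne_zero, add_comm k]
  exact Nat.add_le_add le_rfl hb

theorem exists_X_mul_repr_eq_sum (hΦ : ∀ z, φ (algebraMap _ _ z) = algebraMap _ _ (Φ z))
    {U : Index n → ι → ι → WeylAlgebra (ZMod p) n}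
    (hU : ∀ s l, a l * gen (ZMod p) s = ∑ k, φ (U s l k) * a k) {c : ℕ}
    (hUc : ∀ s l k, (symbol (U s l k)).totalDegree ≤ c) (s : Index n)
    (ε : WeylAlgebra (ZMod p) n →ₗ[MvPolynomial (Index n) (ZMod p)]
      MvPolynomial (Index n) (ZMod p)) :
    ∃ M : ι × (Index n → Fin p) → ι × (Index n → Fin p) → MvPolynomial (Index n) (ZMod p),
      (∀ i, X s * ε (φ (monomialBasis p n i.2) * a i.1) =
        ∑ k, Φ (M i k) * ε (φ (monomialBasis p n k.2) * a k.1)) ∧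
      ∀ i k, M i k ≠ 0 → p * (M i k).totalDegree + (digitExponent k.2).degree ≤
        p * c + (digitExponent i.2).degree := by
  classical
  obtain ⟨t, ht, hta⟩ := exists_mul_gen_pow_eq_sum hU hUc s p
  refine ⟨fun i k ↦ (monomialBasis p n).repr (monomialBasis p n i.2 * t i.1 k.1) k.2, fun i ↦ ?_,
    fun i k ↦ totalDegree_repr_monomialBasis_mul_add_le (ht i.1 k.1)⟩
  rw [← smul_eq_mul, ← map_smul, Algebra.smul_def, Algebra.commutes, algebraMap_X, mul_assoc, hta,
    Finset.mul_sum, Fintype.sum_prod_type]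
  simp only [← mul_assoc, ← map_mul, apply_mul_eq_sum_repr hΦ (_ * _), map_sum, map_smul,
    smul_eq_mul]

theorem exists_apply_eq_gen_of_dual_derivation
    (hΦ : ∀ z, φ (algebraMap _ _ z) = algebraMap _ _ (Φ z)) (hinj : Function.Injective Φ)
    {D : Index n → Derivation (ZMod p) (MvPolynomial (Index n) (ZMod p))
      (MvPolynomial (Index n) (ZMod p))}
    (hD : ∀ s t, D s (Φ (X t)) = if s = t then 1 else 0)
    {U : Index n → ι → ι → WeylAlgebra (ZMod p) n}
    (hU : ∀ s l, a l * gen (ZMod p) s = ∑ k, φ (U s l k) * a k) {c : ℕ}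
    (hUc : ∀ s l k, (symbol (U s l k)).totalDegree ≤ c) {l₀ : ι} (hl₀ : a l₀ = 1)
    (hm : Fintype.card ι < p) (hc : c * Fintype.card ι < p) (s : Index n) :
    ∃ y, (symbol y).totalDegree ≤ c ∧ φ y = gen (ZMod p) s := by
  classical
  let ε := (monomialBasis p n).coord 0
  choose M hM hMdeg using fun s ↦ exists_X_mul_repr_eq_sum hΦ hU hUc s ε
  have hv : (fun i : ι × (Index n → Fin p) ↦ ε (φ (monomialBasis p n i.2) * a i.1)) ≠ 0 := by
    intro h
    have h₀ := congrFun h (l₀, 0)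
    simp only [hl₀, monomialBasis_zero, map_one, mul_one, Pi.zero_apply] at h₀
    rw [← monomialBasis_zero (p := p)] at h₀
    simp [ε] at h₀
  choose f hf hfdeg using exists_apply_eq_X_of_mul_eq_sum hinj hD hm hc
    (exists_polynomial_eval₂_eq_zero hΦ (exists_eq_sum_apply_mul hU hl₀)) hv hM hMdeg
  have hsurj : Function.Surjective Φ := fun z ↦ ⟨aeval f z, by
    rw [← AlgHom.comp_apply, comp_aeval]
    simp [hf]⟩
  obtain ⟨y, hy⟩ := surjective_of_surjective_centerMap hΦ hsurj (gen (ZMod p) s)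
  refine ⟨y, ?_, hy⟩
  have hyp : y ^ p = algebraMap _ _ (f s) :=
    injective_of_injective_centerMap hΦ hinj (by rw [map_pow, hy, hΦ, hf, algebraMap_X])
  rcases eq_or_ne y 0 with rfl | hy0
  · simp
  have hdeg : p * (symbol y).totalDegree = p * (f s).totalDegree := by
    rw [← totalDegree_symbol_pow hy0, hyp, Algebra.algebraMap_eq_smul_one, symbol_smul, symbol_one,
      mul_one, totalDegree_expand, mul_comm]
  exact (Nat.eq_of_mul_eq_mul_left (Fact.out : p.Prime).pos hdeg).trans_le (hfdeg s)

end FiniteOverImage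

/-! ### Dual derivations from a flat lift -/

section FlatLift

variable {p : ℕ} {A B : Type*} [Ring A] [Ring B] {red : B →+* A} {Q : B}

/-- `red : B →+* A` exhibits `A` as the quotient `B / pB` of a `p`-torsion-free ring, which is the
setting in which the commutator of `B`, divided by `p`, becomes a bracket on `A`. -/
structure IsFlatLift (p : ℕ) (red : B →+* A) : Prop where
  surjective : Function.Surjective red
  dvd_of_map_eq_zero : ∀ b, red b = 0 → (p : B) ∣ b
  eq_zero_of_mul_eq_zero : ∀ b, (p : B) * b = 0 → b = 0

theorem IsFlatLift.map_eq_map_of_commutator_eq (hred : IsFlatLift p red)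
    (hQ : ∀ a, Commute (red Q) a) {b b' e e' : B} (hb : red b = red b')
    (he : Q * b - b * Q = p * e) (he' : Q * b' - b' * Q = p * e') : red e = red e' := by
  obtain ⟨c, hc⟩ := hred.dvd_of_map_eq_zero (b - b') (by rw [map_sub, hb, sub_self])
  have hec : e - e' = Q * c - c * Q := by
    rw [← sub_eq_zero]
    refine hred.eq_zero_of_mul_eq_zero _ ?_
    calc (p : B) * (e - e' - (Q * c - c * Q))
        = (Q * b - b * Q) - (Q * b' - b' * Q) - (p * Q * c - p * c * Q) := by
          rw [he, he']; noncomm_ring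
      _ = Q * (b - b' - p * c) - (b - b' - p * c) * Q := by
          rw [(Nat.cast_commute p Q).eq]; noncomm_ring
      _ = 0 := by rw [hc]; simp
  rw [← sub_eq_zero, ← map_sub, hec, map_sub, map_mul, map_mul, (hQ _).eq, sub_self]

theorem IsFlatLift.exists_bracket (hred : IsFlatLift p red) (hQ : ∀ a, Commute (red Q) a) :
    ∃ δ : A →+ A, (∀ a b, δ (a * b) = δ a * b + a * δ b) ∧
      ∀ b e, Q * b - b * Q = p * e → δ (red b) = red e := by
  choose lift hlift using hred.surjective
  choose div hdiv using fun b ↦ hred.dvd_of_map_eq_zero (Q * b - b * Q) (by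
    rw [map_sub, map_mul, map_mul, (hQ _).eq, sub_self])
  have hδ (b e : B) (he : Q * b - b * Q = p * e) : red (div (lift (red b))) = red e :=
    hred.map_eq_map_of_commutator_eq hQ (hlift _) (hdiv _) he
  refine ⟨AddMonoidHom.mk' (fun a ↦ red (div (lift a))) fun a b ↦ ?_, fun a b ↦ ?_, hδ⟩
  · rw [← map_add]
    convert hδ (lift a + lift b) (div (lift a) + div (lift b)) ?_
    · rw [map_add, hlift, hlift]
    · rw [mul_add (p : B), ← hdiv, ← hdiv]
      noncomm_ring
  · have h := hδ (lift a * lift b) (div (lift a) * lift b + lift a * div (lift b)) (by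
      rw [mul_add, ← mul_assoc (p : B), ← hdiv, (Nat.cast_commute p (lift a)).left_comm, ← hdiv]
      noncomm_ring)
    simpa [hlift] using h

end FlatLift

section PrimePowers

variable {B : Type*} [Ring B] {d x : B}

theorem pow_mulRight_sub_mulLeft_apply_pow (h : d * x = x * d + 1) (k : ℕ) :
    ((LinearMap.mulRight ℤ x - LinearMap.mulLeft ℤ x) ^ k) (d ^ k) = (k.factorial : B) := by
  induction k with
  | zero => simp
  | succ k ih =>
    rw [pow_succ, Module.End.mul_apply, LinearMap.sub_apply, LinearMap.mulRight_apply,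
      LinearMap.mulLeft_apply, pow_succ_mul_of_mul_eq_mul_add_one h, add_sub_cancel_left,
      ← nsmul_eq_mul, map_nsmul, ih, nsmul_eq_mul, Nat.factorial_succ, Nat.cast_mul]

theorem exists_pow_prime_mul_pow_prime_eq (h : d * x = x * d + 1) {p : ℕ} (hp : p.Prime) :
    ∃ e, d ^ p * x ^ p = x ^ p * d ^ p + p * (p * e + ((p - 1).factorial : B)) := by
  set L := LinearMap.mulLeft ℤ x
  set T := LinearMap.mulRight ℤ x - L
  have hLT : Commute L T := (LinearMap.commute_mulLeft_right x x).sub_right (Commute.refl L)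
  set S := ∑ k ∈ Finset.Ioo 0 p, L ^ (k - 1) * T ^ (p - k - 1) * (p.choose k / p : ℕ)
  have hTS : Commute T S := by
    refine Commute.sum_right _ _ _ fun k _ ↦ ?_
    exact ((hLT.symm.pow_right _).mul_right ((Commute.refl T).pow_right _)).mul_right
      (Nat.commute_cast _ _)
  have hpow : LinearMap.mulRight ℤ x ^ p = L ^ p + T ^ p + p * (L * S) * T := by
    rw [mul_assoc (p : Module.End ℤ B), mul_assoc L, ← hTS.eq, ← mul_assoc L, ← mul_assoc,
      ← mul_assoc, ← hLT.add_pow_prime_eq hp, add_sub_cancel]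
  have hTd : T (d ^ p) = p • d ^ (p - 1) := by
    obtain ⟨q, rfl⟩ : ∃ q, p = q + 1 := ⟨p - 1, by have := hp.pos; lia⟩
    simp [T, L, pow_succ_mul_of_mul_eq_mul_add_one h]
  refine ⟨L (S (d ^ (p - 1))), ?_⟩
  have happ := congr($hpow (d ^ p))
  rw [LinearMap.pow_mulRight, LinearMap.mulRight_apply, LinearMap.add_apply, LinearMap.add_apply,
    LinearMap.pow_mulLeft, LinearMap.mulLeft_apply, pow_mulRight_sub_mulLeft_apply_pow h,
    Module.End.mul_apply, hTd, Module.End.mul_apply, map_nsmul, Module.End.natCast_apply,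
    Module.End.mul_apply, nsmul_eq_mul, nsmul_eq_mul, ← Nat.mul_factorial_pred hp.ne_zero,
    Nat.cast_mul, add_assoc, ← mul_add, add_comm ((p - 1).factorial : B)] at happ
  exact happ

end PrimePowers

section DualDerivations

variable {p : ℕ} [Fact p.Prime] {n : ℕ} {B : Type*} [Ring B]
  {red : B →+* WeylAlgebra (ZMod p) n}

theorem IsFlatLift.exists_derivation (hred : IsFlatLift p red) {Q : B}
    (hQ : ∀ a, Commute (red Q) a) :
    ∃ D : Derivation (ZMod p) (MvPolynomial (Index n) (ZMod p)) (MvPolynomial (Index n) (ZMod p)),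
      ∀ z b e, red b = algebraMap _ _ z → Q * b - b * Q = p * e →
        algebraMap _ (WeylAlgebra (ZMod p) n) (D z) = red e := by
  obtain ⟨δ, hmul, hδ⟩ := hred.exists_bracket hQ
  have hcenter (z : MvPolynomial (Index n) (ZMod p)) :
      ∃ w : MvPolynomial (Index n) (ZMod p), algebraMap _ _ w = δ (algebraMap _ _ z) := by
    refine exists_algebraMap_eq_of_commute (φ := AlgHom.id _ _) fun a ↦ ?_
    have h := congr(δ $((Algebra.commute_algebraMap_left z a).eq))
    rw [hmul, hmul, (Algebra.commute_algebraMap_left z (δ a)).eq, add_comm] at h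
    exact add_left_cancel h
  choose D hD using hcenter
  have hinj := FaithfulSMul.algebraMap_injective (MvPolynomial (Index n) (ZMod p))
    (WeylAlgebra (ZMod p) n)
  have hadd (z w) : D (z + w) = D z + D w := hinj (by simp only [map_add, hD])
  refine ⟨Derivation.mk' ((AddMonoidHom.mk' D hadd).toZModLinearMap p) fun z w ↦ hinj ?_,
    fun z b e hb he ↦ ?_⟩
  · change algebraMap _ _ (D (z * w)) = algebraMap _ _ (z * D w + w * D z)
    rw [hD, map_mul, hmul, ← hD, ← hD, (Algebra.commute_algebraMap_right w _).eq, add_comm,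
      map_add, map_mul, map_mul]
  · exact (hD z).trans (by rw [← hb, hδ b e he])

/-- The elements whose brackets with the `p`-th powers `G t ^ p` of a Weyl family are dual to them:
`-∂ᵢᵖ` for `xᵢᵖ` and `xᵢᵖ` for `∂ᵢᵖ`. -/
def dualPow (p : ℕ) (G : Index n → B) : Index n → B
  | .inl i => -G (.inr i) ^ p
  | .inr i => G (.inl i) ^ p

theorem IsWeylFamily.exists_commutator_pow_eq (red : B →+* WeylAlgebra (ZMod p) n)
    {G : Index n → B} (hG : IsWeylFamily G) (i j : Fin n) :
    ∃ e, G (.inl j) ^ p * G (.inr i) ^ p - G (.inr i) ^ p * G (.inl j) ^ p = p * e ∧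
      red e = if i = j then 1 else 0 := by
  have hdx := hG.dx i j
  split_ifs at hdx ⊢ with hij
  · subst hij
    obtain ⟨e, he⟩ := exists_pow_prime_mul_pow_prime_eq hdx (Fact.out : p.Prime)
    refine ⟨-(p * e + ((p - 1).factorial : B)), by rw [he, mul_neg]; abel, ?_⟩
    have hp : (p : WeylAlgebra (ZMod p) n) = 0 := by
      rw [← map_natCast (algebraMap (ZMod p) _), CharP.cast_eq_zero, map_zero]
    rw [map_neg, map_add, map_mul, map_natCast, hp, zero_mul, zero_add, map_natCast,
      ← map_natCast (algebraMap (ZMod p) _), ZMod.wilsons_lemma, map_neg, map_one, neg_neg]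
  · have hcomm : Commute (G (.inr i)) (G (.inl j)) := by rwa [add_zero] at hdx
    exact ⟨0, by rw [mul_zero, (hcomm.pow_pow p p).eq, sub_self], map_zero _⟩

theorem IsWeylFamily.exists_commutator_dualPow_eq (red : B →+* WeylAlgebra (ZMod p) n)
    {G : Index n → B} (hG : IsWeylFamily G) (s t : Index n) :
    ∃ e, dualPow p G s * G t ^ p - G t ^ p * dualPow p G s = p * e ∧
      red e = if s = t then 1 else 0 := by
  rcases s with i | i <;> rcases t with j | j
  · obtain ⟨e, he, hred⟩ := hG.exists_commutator_pow_eq red i j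
    exact ⟨e, by rw [← he, dualPow]; noncomm_ring, by simp [hred]⟩
  · have hcomm : Commute (G (.inr i)) (G (.inr j)) := hG.dd i j
    exact ⟨0, by simp [dualPow, (hcomm.pow_pow p p).eq], by simp⟩
  · have hcomm : Commute (G (.inl i)) (G (.inl j)) := hG.xx i j
    exact ⟨0, by simp [dualPow, (hcomm.pow_pow p p).eq], by simp⟩
  · obtain ⟨e, he, hred⟩ := hG.exists_commutator_pow_eq red j i
    exact ⟨e, he, by simp [hred, eq_comm]⟩

variable {φ : WeylAlgebra (ZMod p) n →ₐ[ZMod p] WeylAlgebra (ZMod p) n}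
  {Φ : MvPolynomial (Index n) (ZMod p) →ₐ[ZMod p] MvPolynomial (Index n) (ZMod p)}

theorem IsFlatLift.exists_dual_derivation (hred : IsFlatLift p red) {G : Index n → B}
    (hG : IsWeylFamily G) (hGφ : ∀ s, red (G s) = φ (gen (ZMod p) s))
    (hΦ : ∀ z, φ (algebraMap _ _ z) = algebraMap _ _ (Φ z)) :
    ∃ D : Index n →
        Derivation (ZMod p) (MvPolynomial (Index n) (ZMod p)) (MvPolynomial (Index n) (ZMod p)),
      ∀ s t, D s (Φ (X t)) = if s = t then 1 else 0 := by
  have hpow (t : Index n) : red (G t ^ p) = algebraMap _ _ (Φ (X t)) := by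
    rw [map_pow, hGφ, ← hΦ, algebraMap_X, map_pow]
  have hcenter (t : Index n) (a) : Commute (red (G t ^ p)) a := by
    rw [hpow]
    exact Algebra.commute_algebraMap_left _ _
  have hdual (s : Index n) (a) : Commute (red (dualPow p G s)) a := by
    rcases s with i | i
    · rw [dualPow, map_neg]
      exact (hcenter _ a).neg_left
    · exact hcenter _ a
  choose D hD using fun s ↦ hred.exists_derivation (hdual s)
  refine ⟨D, fun s t ↦ FaithfulSMul.algebraMap_injective _ (WeylAlgebra (ZMod p) n) ?_⟩
  obtain ⟨e, he, hrede⟩ := hG.exists_commutator_dualPow_eq red s t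
  rw [hD s _ _ e (hpow t) he, hrede, apply_ite (algebraMap _ _), map_one, map_zero]

end DualDerivations

section VanishingDerivatives

variable {R σ : Type*} [CommRing R]

theorem coeff_mul_natCast_eq_zero_of_pderiv_eq_zero {f : MvPolynomial σ R} {s : σ}
    (hf : pderiv s f = 0) (u : σ →₀ ℕ) : coeff u f * (u s : R) = 0 := by
  rcases eq_or_ne (u s) 0 with hu | hu
  · simp [hu]
  have hle : Finsupp.single s 1 ≤ u := Finsupp.single_le_iff.2 (Nat.one_le_iff_ne_zero.2 hu)
  have h := congr(coeff (u - Finsupp.single s 1) $hf)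
  rw [coeff_pderiv, tsub_add_cancel_of_le hle, coeff_zero, Finsupp.tsub_apply,
    Finsupp.single_eq_same, ← Nat.cast_succ, Nat.succ_eq_add_one,
    Nat.sub_add_cancel (Nat.one_le_iff_ne_zero.2 hu)] at h
  exact h

theorem totalDegree_pderiv_lt {f : MvPolynomial σ R} (hf : f.totalDegree ≠ 0) (s : σ) :
    (pderiv s f).totalDegree < f.totalDegree := by
  obtain ⟨k, hk⟩ := Nat.exists_eq_succ_of_ne_zero hf
  rw [hk, Nat.succ_eq_add_one, Nat.lt_succ_iff, ← mem_degreeLT_succ]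
  exact pderiv_mem_degreeLT s (mem_degreeLT_succ.2 hk.le)

theorem totalDegree_eq_zero_of_pderiv_eq_zero [CharZero R] [NoZeroDivisors R]
    {f : MvPolynomial σ R} (hf : ∀ s, pderiv s f = 0) : f.totalDegree = 0 := by
  rw [totalDegree_eq_zero_iff]
  intro u hu s
  have h := coeff_mul_natCast_eq_zero_of_pderiv_eq_zero (hf s) u
  exact_mod_cast (mul_eq_zero.1 h).resolve_left (mem_support_iff.1 hu)

variable {p : ℕ} [Fact p.Prime]

theorem exists_eq_pow_of_pderiv_eq_zero {f : MvPolynomial σ (ZMod p)}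
    (hf : ∀ s, pderiv s f = 0) : ∃ h, f = h ^ p := by
  have hdvd (u : σ →₀ ℕ) (hu : u ∈ f.support) (s : σ) : p ∣ u s :=
    (ZMod.natCast_eq_zero_iff _ _).1 <|
      (mul_eq_zero.1 (coeff_mul_natCast_eq_zero_of_pderiv_eq_zero (hf s) u)).resolve_left
        (mem_support_iff.1 hu)
  refine ⟨∑ u ∈ f.support, monomial (u.mapRange (· / p) (Nat.zero_div p)) (coeff u f), ?_⟩
  rw [← expand_zmod, map_sum]
  conv_lhs => rw [f.as_sum]
  refine Finset.sum_congr rfl fun u hu ↦ ?_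
  rw [expand_monomial]
  congr
  exact Finsupp.ext fun s ↦ (Nat.mul_div_cancel' (hdvd u hu s)).symm

theorem algHom_injective_of_dual_derivation [DecidableEq σ] {Z : Type*} [CommRing Z] [IsDomain Z]
    [Algebra (ZMod p) Z] {Φ : MvPolynomial σ (ZMod p) →ₐ[ZMod p] Z}
    {D : σ → Derivation (ZMod p) Z Z} (hD : ∀ s t, D s (Φ (X t)) = if s = t then 1 else 0) :
    Function.Injective Φ := by
  let _ : Algebra (MvPolynomial σ (ZMod p)) Z := Φ.toRingHom.toAlgebra
  have : IsScalarTower (ZMod p) (MvPolynomial σ (ZMod p)) Z :=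
    IsScalarTower.of_algebraMap_eq fun a ↦ (Φ.commutes a).symm
  have hpderiv (s : σ) (f) : D s (Φ f) = Φ (pderiv s f) :=
    ExtendsPDeriv.apply_algebraMap (D := D) hD s f
  rw [injective_iff_map_eq_zero]
  intro f
  induction h : f.totalDegree using Nat.strong_induction_on generalizing f with
  | _ k ih =>
    subst h
    intro hf
    by_cases hdeg : f.totalDegree = 0
    · rw [totalDegree_eq_zero_iff_eq_C.1 hdeg] at hf ⊢
      rw [← algebraMap_eq, Φ.commutes, map_eq_zero] at hf
      rw [hf, C_0]
    obtain ⟨g, rfl⟩ := exists_eq_pow_of_pderiv_eq_zero fun s ↦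
      ih _ (totalDegree_pderiv_lt hdeg s) _ rfl (by rw [← hpderiv, hf, map_zero])
    have hp := (Fact.out : p.Prime)
    rw [map_pow, pow_eq_zero_iff hp.ne_zero] at hf
    rw [← expand_zmod, totalDegree_expand] at hdeg ih
    rw [ih _ (lt_mul_of_one_lt_right (by grind) hp.one_lt) g rfl hf, zero_pow hp.ne_zero]

end VanishingDerivatives

section ModP

variable {p : ℕ} [Fact p.Prime] {n : ℕ}

theorem isFlatLift_map_toZMod :
    IsFlatLift p (map (n := n) (PadicInt.toZMod (p := p))) where
  surjective b := by
    obtain ⟨q, hq⟩ := MvPolynomial.map_surjective _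
      (ZMod.ringHom_surjective (PadicInt.toZMod (p := p))) (symbol b)
    exact ⟨normalOrder q, by rw [map_normalOrder, hq, normalOrder_symbol]⟩
  dvd_of_map_eq_zero b hb := by
    have hdvd : C (p : ℤ_[p]) ∣ symbol b := by
      refine C_dvd_iff_dvd_coeff _ _ |>.2 fun u ↦ ?_
      have hker : coeff u (symbol b) ∈ RingHom.ker (PadicInt.toZMod (p := p)) := by
        rw [RingHom.mem_ker, ← coeff_map, ← symbol_map, hb, map_zero, coeff_zero]
      rwa [PadicInt.ker_toZMod, PadicInt.maximalIdeal_eq_span_p,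
        Ideal.mem_span_singleton] at hker
    obtain ⟨q, hq⟩ := hdvd
    refine ⟨normalOrder q, symbol.injective ?_⟩
    rw [hq, ← nsmul_eq_mul, map_nsmul, symbol_normalOrder, nsmul_eq_mul, map_natCast]
  eq_zero_of_mul_eq_zero b hb := by
    have hp : (p : WeylAlgebra ℤ_[p] n) ≠ 0 := by
      rw [← map_natCast (algebraMap ℤ_[p] _), ← symbol.injective.ne_iff, symbol_algebraMap,
        map_zero, Ne, C_eq_zero]
      exact_mod_cast (Fact.out : p.Prime).ne_zero
    exact (mul_eq_zero.1 hb).resolve_left hp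

theorem IsFlatLift.exists_apply_eq_gen {B : Type*} [Ring B] {red : B →+* WeylAlgebra (ZMod p) n}
    (hred : IsFlatLift p red) {φ : WeylAlgebra (ZMod p) n →ₐ[ZMod p] WeylAlgebra (ZMod p) n}
    {G : Index n → B} (hG : IsWeylFamily G) (hGφ : ∀ s, red (G s) = φ (gen (ZMod p) s))
    {ι : Type*} [Fintype ι] {a : ι → WeylAlgebra (ZMod p) n}
    {U : Index n → ι → ι → WeylAlgebra (ZMod p) n}
    (hU : ∀ s l, a l * gen (ZMod p) s = ∑ k, φ (U s l k) * a k) {c : ℕ}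
    (hUc : ∀ s l k, (symbol (U s l k)).totalDegree ≤ c) {l₀ : ι} (hl₀ : a l₀ = 1)
    (hm : Fintype.card ι < p) (hc : c * Fintype.card ι < p) (s : Index n) :
    ∃ y, (symbol y).totalDegree ≤ c ∧ φ y = gen (ZMod p) s := by
  obtain ⟨Φ, hΦ⟩ := exists_centerMap φ
  obtain ⟨D, hD⟩ := hred.exists_dual_derivation hG hGφ hΦ
  exact exists_apply_eq_gen_of_dual_derivation hΦ (algHom_injective_of_dual_derivation hD) hD hU
    hUc hl₀ hm hc s

end ModP

end WeylAlgebra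

namespace WeylAlgebra

/-! ### `p`-adic points of finitely generated rings -/

section PadicPoints

open Polynomial

theorem exists_eval_mul_natAbs_ne {f : ℤ[X]} (hf : 0 < f.natDegree) {b : ℤ} (hb : b ≠ 0) (c : ℕ) :
    ∃ x : ℤ, (f.eval (b * x)).natAbs ≠ c := by
  by_contra! h
  have sub_C_ne_zero (r : ℤ) : f - C r ≠ 0 := fun hr ↦ by
    rw [sub_eq_zero.1 hr, natDegree_C] at hf
    exact lt_irrefl _ hf
  have hfin := finite_setOfPred_isRoot (mul_ne_zero (sub_C_ne_zero c) (sub_C_ne_zero (-c)))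
  refine Set.infinite_range_of_injective (mul_right_injective₀ hb) (hfin.subset ?_)
  rintro _ ⟨x, rfl⟩
  rcases Int.natAbs_eq_iff.1 (h x) with hx | hx <;> simp [hx]

theorem exists_prime_gt_dvd_eval {f : ℤ[X]} (hf : 0 < f.natDegree) (M : ℕ) :
    ∃ p : ℕ, p.Prime ∧ M < p ∧ ∃ k : ℤ, (p : ℤ) ∣ f.eval k := by
  by_cases ha : f.eval 0 = 0
  · obtain ⟨p, hMp, hp⟩ := Nat.exists_infinite_primes (M + 1)
    exact ⟨p, hp, hMp, 0, by rw [ha]; exact dvd_zero _⟩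
  -- `f(abx) = a(1 + bxy)` for `a = f(0)`, `b = M!`, and no prime `≤ M` divides `1 + bxy`.
  set a := f.eval 0
  obtain ⟨b, hb⟩ : ∃ b : ℤ, b = M.factorial := ⟨_, rfl⟩
  have hb0 : b ≠ 0 := by rw [hb]; exact_mod_cast M.factorial_ne_zero
  obtain ⟨x, hx⟩ := exists_eval_mul_natAbs_ne hf (mul_ne_zero ha hb0) a.natAbs
  set y := f.divX.eval (a * b * x)
  have heval : f.eval (a * b * x) = a * (1 + b * x * y) := by
    conv_lhs => rw [← f.divX_mul_X_add]
    rw [eval_add, eval_mul, eval_X, eval_C, coeff_zero_eq_eval_zero]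
    ring
  have hunit : (1 + b * x * y).natAbs ≠ 1 := fun h ↦ hx (by rw [heval, Int.natAbs_mul, h, mul_one])
  obtain ⟨p, hp, hdvd⟩ := Nat.exists_prime_and_dvd hunit
  replace hdvd := Int.natCast_dvd.2 hdvd
  refine ⟨p, hp, ?_, a * b * x, heval ▸ hdvd.mul_left _⟩
  by_contra! hpM
  have hpb : (p : ℤ) ∣ b := by rw [hb]; exact_mod_cast hp.dvd_factorial.2 hpM
  have hp1 : (p : ℤ) ∣ 1 := (dvd_add_left ((hpb.mul_right x).mul_right y)).1 hdvd
  exact hp.one_lt.ne' (Nat.dvd_one.1 (Int.natCast_dvd.1 hp1))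

theorem not_natCast_dvd_of_natAbs_lt {p : ℕ} {d : ℤ} (hd : d ≠ 0) (h : d.natAbs < p) :
    ¬ (p : ℤ) ∣ d :=
  fun hpd ↦ h.not_ge (Nat.le_of_dvd (Int.natAbs_pos.2 hd) (Int.natCast_dvd.1 hpd))

theorem exists_padicInt_root_of_dvd {p : ℕ} [Fact p.Prime] {f : ℤ[X]} {k : ℤ}
    (hk : (p : ℤ) ∣ f.eval k) (hk' : ¬ (p : ℤ) ∣ (derivative f).eval k) :
    ∃ z : ℤ_[p], aeval z f = 0 := by
  have aeval_intCast (g : ℤ[X]) : aeval (k : ℤ_[p]) g = ((g.eval k : ℤ) : ℤ_[p]) := by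
    simpa using aeval_algebraMap_apply ℤ_[p] k g
  have hnorm : ‖(((derivative f).eval k : ℤ) : ℤ_[p])‖ = 1 :=
    (PadicInt.norm_le_one _).eq_of_not_lt (mt (PadicInt.norm_int_lt_one_iff_dvd _).1 hk')
  obtain ⟨z, hz, -⟩ := hensels_lemma (p := p) (F := f) (a := (k : ℤ_[p])) (by
    rw [aeval_intCast, aeval_intCast, hnorm, one_pow]
    exact (PadicInt.norm_int_lt_one_iff_dvd _).2 hk)
  exact ⟨z, hz⟩

theorem exists_mul_add_mul_derivative_eq_C {f : ℤ[X]} (hf : 0 < f.natDegree)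
    (hsep : (f.map (algebraMap ℤ ℚ)).Separable) :
    ∃ (u v : ℤ[X]) (d : ℤ), d ≠ 0 ∧ f * u + derivative f * v = C d := by
  obtain ⟨u, v, -, -, huv⟩ :=
    exists_mul_add_mul_eq_C_resultant f (derivative f) le_rfl le_rfl (.inl hf.ne')
  refine ⟨u, v, _, fun h ↦ ?_, huv⟩
  have hinj : Function.Injective (algebraMap ℤ ℚ) := Int.cast_injective
  refine resultant_ne_zero _ _ hsep ?_
  rw [derivative_map, natDegree_map_eq_of_injective hinj, natDegree_map_eq_of_injective hinj,
    resultant_map_map, h, map_zero]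

theorem exists_prime_gt_padicInt_root {f : ℤ[X]} (hf : 0 < f.natDegree)
    (hsep : (f.map (algebraMap ℤ ℚ)).Separable) (M : ℕ) :
    ∃ (p : ℕ) (_ : Fact p.Prime), M < p ∧ ∃ z : ℤ_[p], aeval z f = 0 := by
  obtain ⟨u, v, d, hd, huv⟩ := exists_mul_add_mul_derivative_eq_C hf hsep
  obtain ⟨p, hp, hMp, k, hk⟩ := exists_prime_gt_dvd_eval hf (M + d.natAbs)
  have : Fact p.Prime := ⟨hp⟩
  refine ⟨p, this, by lia, exists_padicInt_root_of_dvd hk fun hk' ↦ ?_⟩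
  refine not_natCast_dvd_of_natAbs_lt hd (by lia : d.natAbs < p) ?_
  have hd_eq : f.eval k * u.eval k + (derivative f).eval k * v.eval k = d := by
    simpa using congr(eval k $huv)
  exact hd_eq ▸ dvd_add (hk.mul_right _) (hk'.mul_right _)

theorem exists_prime_gt_ringHom_padic (L : Type*) [Field L] [Algebra ℚ L] [FiniteDimensional ℚ L]
    (M : ℕ) : ∃ (p : ℕ) (_ : Fact p.Prime), M < p ∧ Nonempty (L →+* ℚ_[p]) := by
  let pb := Field.powerBasisOfFiniteOfSeparable ℚ L
  obtain ⟨b, hb, hmap⟩ :=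
    IsLocalization.integerNormalization_spec (nonZeroDivisors ℤ) (minpoly ℚ pb.gen)
  set f := IsLocalization.integerNormalization (nonZeroDivisors ℤ) (minpoly ℚ pb.gen)
  have hb0 : (b : ℚ) ≠ 0 := by exact_mod_cast nonZeroDivisors.ne_zero hb
  replace hmap : f.map (algebraMap ℤ ℚ) = C (b : ℚ) * minpoly ℚ pb.gen := by
    rw [hmap, ← Int.cast_smul_eq_zsmul ℚ, smul_eq_C_mul]
  have hsep : (f.map (algebraMap ℤ ℚ)).Separable := by
    rw [hmap]
    exact Separable.unit_mul (isUnit_C.2 hb0.isUnit) (Algebra.IsSeparable.isSeparable ℚ pb.gen)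
  have hdeg : 0 < f.natDegree := by
    rw [← natDegree_map_eq_of_injective (f := algebraMap ℤ ℚ) Int.cast_injective, hmap,
      natDegree_C_mul hb0]
    exact minpoly.natDegree_pos pb.isIntegral_gen
  obtain ⟨p, hp, hMp, z, hz⟩ := exists_prime_gt_padicInt_root hdeg hsep M
  refine ⟨p, hp, hMp, ⟨(pb.lift (z : ℚ_[p]) ?_).toRingHom⟩⟩
  have hroot : aeval (z : ℚ_[p]) (f.map (algebraMap ℤ ℚ)) = 0 := by
    rw [aeval_map_algebraMap]
    exact (aeval_algebraMap_apply ℚ_[p] z f).trans (by rw [hz, map_zero])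
  rw [hmap, map_mul, aeval_C, mul_eq_zero] at hroot
  exact hroot.resolve_left (by simpa using hb0)

theorem norm_le_one_of_isIntegral_int {p : ℕ} [Fact p.Prime] {x : ℚ_[p]} (hx : IsIntegral ℤ x) :
    ‖x‖ ≤ 1 := by
  have hx' : IsIntegral ℤ_[p] x := hx.tower_top
  obtain ⟨y, rfl⟩ := IsIntegrallyClosed.isIntegral_iff.1 hx'
  exact y.2

theorem norm_le_one_of_isIntegral_zsmul {p : ℕ} [Fact p.Prime] {x : ℚ_[p]} {d : ℤ}
    (hd : ¬ (p : ℤ) ∣ d) (hx : IsIntegral ℤ (d • x)) : ‖x‖ ≤ 1 := by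
  have hnorm : ‖(d : ℚ_[p])‖ = 1 := Padic.norm_intCast_eq_one_iff.2
    ((Nat.prime_iff_prime_int.1 Fact.out).coprime_iff_not_dvd.2 hd).symm
  simpa [hnorm] using norm_le_one_of_isIntegral_int hx

theorem exists_prime_gt_norm_le_one {L : Type*} [Field L] [Algebra ℚ L] [FiniteDimensional ℚ L]
    (T : Finset L) (M : ℕ) :
    ∃ (p : ℕ) (_ : Fact p.Prime), M < p ∧ ∃ e : L →+* ℚ_[p], ∀ t ∈ T, ‖e t‖ ≤ 1 := by
  have : Algebra.IsAlgebraic ℤ L :=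
    IsFractionRing.comap_isAlgebraic_iff (K := ℚ).2 (Algebra.IsAlgebraic.of_finite ℚ L)
  obtain ⟨d, hd, hdT⟩ := Algebra.IsAlgebraic.exists_integral_multiples ℤ T
  obtain ⟨p, hp, hMp, ⟨e⟩⟩ := exists_prime_gt_ringHom_padic L (M + d.natAbs)
  refine ⟨p, hp, by lia, e, fun t ht ↦
    norm_le_one_of_isIntegral_zsmul (not_natCast_dvd_of_natAbs_lt hd (by lia)) ?_⟩
  rw [← map_zsmul]
  exact (hdT t ht).map e.toIntAlgHom

theorem exists_ringHom_finiteDimensional.{u} (A : Type u) [CommRing A] [Nontrivial A]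
    [Algebra ℚ A] [Algebra.FiniteType ℚ A] :
    ∃ (L : Type u) (_ : Field L) (_ : Algebra ℚ L), FiniteDimensional ℚ L ∧ Nonempty (A →+* L) := by
  obtain ⟨I, hI⟩ := Ideal.exists_maximal A
  let _ : Field (A ⧸ I) := Ideal.Quotient.field I
  exact ⟨A ⧸ I, inferInstance, inferInstance, finite_of_finite_type_of_isJacobsonRing ℚ (A ⧸ I),
    ⟨Ideal.Quotient.mk I⟩⟩

theorem exists_prime_gt_ringHom_padicInt {K : Type*} [Field K] [CharZero K] (T : Finset K) (M : ℕ) :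
    ∃ (p : ℕ) (_ : Fact p.Prime), M < p ∧ Nonempty (Subring.closure (T : Set K) →+* ℤ_[p]) := by
  classical
  let A := Algebra.adjoin ℚ (T : Set K)
  have : Algebra.FiniteType ℚ A := A.fg_iff_finiteType.1 ⟨T, rfl⟩
  obtain ⟨L, _, _, _, ⟨ρ⟩⟩ := exists_ringHom_finiteDimensional A
  have hTA (t : T) : (t : K) ∈ A := Algebra.subset_adjoin t.2
  obtain ⟨p, hp, hMp, e, he⟩ :=
    exists_prime_gt_norm_le_one (Finset.univ.image fun t : T ↦ ρ ⟨t, hTA t⟩) M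
  have hle : Subring.closure (T : Set K) ≤
      ((PadicInt.subring p).comap (e.comp ρ)).map A.toSubring.subtype := by
    refine Subring.closure_le.2 fun t ht ↦ ⟨⟨t, hTA ⟨t, ht⟩⟩, ?_, rfl⟩
    exact he _ (Finset.mem_image_of_mem _ (Finset.mem_univ (⟨t, ht⟩ : T)))
  have hleA : Subring.closure (T : Set K) ≤ A.toSubring :=
    Subring.closure_le.2 Algebra.subset_adjoin
  refine ⟨p, hp, hMp,
    ⟨((e.comp ρ).comp (Subring.inclusion hleA)).codRestrict (PadicInt.subring p) fun x ↦ ?_⟩⟩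
  obtain ⟨y, hy, hyx⟩ := hle x.2
  obtain rfl : y = Subring.inclusion hleA x := Subtype.ext hyx
  exact hy

end PadicPoints

open MvPolynomial

/-! ### Obstructions and base change -/

section BaseChange

variable {R R' : Type*} [CommRing R] [CommRing R'] {n : ℕ}

theorem map_injective {f : R →+* R'} (hf : Function.Injective f) :
    Function.Injective (map (n := n) f) := fun a b h ↦ by
  refine symbol.injective (MvPolynomial.map_injective f hf ?_)
  rw [← symbol_map, ← symbol_map, h]

theorem mem_range_map_of_coeffs_subset {f : R →+* R'} {a : WeylAlgebra R' n}
    (ha : ((symbol a).coeffs : Set R') ⊆ Set.range f) : a ∈ Set.range (map (n := n) f) := by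
  obtain ⟨q, hq⟩ := MvPolynomial.mem_range_map_iff_coeffs_subset.2 ha
  exact ⟨normalOrder q, by rw [map_normalOrder, hq, normalOrder_symbol]⟩

theorem totalDegree_map_le {σ : Type*} (f : R →+* R') (q : MvPolynomial σ R) :
    (MvPolynomial.map f q).totalDegree ≤ q.totalDegree :=
  Finset.sup_mono (support_map_subset f q)

theorem totalDegree_map_of_injective {σ : Type*} {f : R →+* R'} (hf : Function.Injective f)
    (q : MvPolynomial σ R) : (MvPolynomial.map f q).totalDegree = q.totalDegree := by
  rw [totalDegree, support_map_of_injective q hf, totalDegree]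

/-- The endomorphism of `WeylAlgebra R' n` obtained from `φ` by extension of scalars along `f`. -/
noncomputable def baseChange (f : R →+* R') (φ : WeylAlgebra R n →ₐ[R] WeylAlgebra R n) :
    WeylAlgebra R' n →ₐ[R'] WeylAlgebra R' n :=
  lift (fun s ↦ map f (φ (gen R s))) ((isWeylFamily_gen.map φ.toRingHom).map (map f))

theorem baseChange_gen (f : R →+* R') (φ : WeylAlgebra R n →ₐ[R] WeylAlgebra R n) (s : Index n) :
    baseChange f φ (gen R' s) = map f (φ (gen R s)) :=
  lift_gen _ _ _

theorem baseChange_map (f : R →+* R') (φ : WeylAlgebra R n →ₐ[R] WeylAlgebra R n)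
    (a : WeylAlgebra R n) : baseChange f φ (map f a) = map f (φ a) := by
  induction a using induction_left with
  | one => simp only [map_one]
  | add a b ha hb => simp only [map_add, ha, hb]
  | smul r a ha =>
    rw [Algebra.smul_def, map_mul, map_mul, map_mul, map_mul, ha, map_algebraMap,
      AlgHom.commutes, AlgHom.commutes, map_algebraMap]
  | gen_mul s a ha => simp only [map_mul, ha, map_gen, baseChange_gen]

theorem IsWeylFamily.of_injective {B C : Type*} [Ring B] [Ring C] {h : B →+* C}
    (hh : Function.Injective h) {g : Index n → B} (hg : IsWeylFamily fun s ↦ h (g s)) :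
    IsWeylFamily g where
  xx i j := hh (by simpa only [map_mul] using hg.xx i j)
  dd i j := hh (by simpa only [map_mul] using hg.dd i j)
  dx i j := hh (by simpa only [map_mul, map_add, apply_ite h, map_one, map_zero] using hg.dx i j)

theorem exists_baseChange_eq {f : R →+* R'} (hf : Function.Injective f)
    {φ : WeylAlgebra R' n →ₐ[R'] WeylAlgebra R' n}
    (hφ : ∀ s, φ (gen R' s) ∈ Set.range (map (n := n) f)) :
    ∃ φ₀ : WeylAlgebra R n →ₐ[R] WeylAlgebra R n, baseChange f φ₀ = φ := by
  choose g hg using hφ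
  have hgW : IsWeylFamily g := .of_injective (map_injective hf) <| by
    simp only [hg]
    exact isWeylFamily_gen.map φ.toRingHom
  exact ⟨lift g hgW, algHom_ext fun s ↦ by rw [baseChange_gen, lift_gen, hg]⟩

/-- The linear functional `∑ qₑ Xᵉ ↦ ∑ vₑ qₑ` on polynomials given by the coefficients of `v`. -/
noncomputable def coeffPairing {σ : Type*} (v : MvPolynomial σ R) : MvPolynomial σ R →ₗ[R] R :=
  (basisMonomials σ R).constr R fun m ↦ coeff m v

theorem coeffPairing_monomial {σ : Type*} (v : MvPolynomial σ R) (m : σ →₀ ℕ) (r : R) :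
    coeffPairing v (monomial m r) = r * coeff m v := by
  have h := (basisMonomials σ R).constr_basis R (fun m ↦ coeff m v) m
  rw [coe_basisMonomials] at h
  rw [coeffPairing, ← mul_one r, ← smul_eq_mul, ← smul_monomial, map_smul, h, smul_eq_mul,
    smul_eq_mul, mul_one]

theorem coeffPairing_map {σ : Type*} (f : R →+* R') (v q : MvPolynomial σ R) :
    coeffPairing (MvPolynomial.map f v) (MvPolynomial.map f q) = f (coeffPairing v q) := by
  induction q using MvPolynomial.induction_on' with
  | monomial m r =>
    rw [map_monomial, coeffPairing_monomial, coeffPairing_monomial, coeff_map, map_mul]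
  | add q q' hq hq' => simp only [map_add, hq, hq']

theorem exists_coeffPairing_eq {σ : Type*} (l : MvPolynomial σ R →ₗ[R] R)
    {T : Set (MvPolynomial σ R)} (hT : T.Finite) :
    ∃ v : MvPolynomial σ R, ∀ q ∈ T, coeffPairing v q = l q := by
  classical
  let E := hT.toFinset.biUnion support
  refine ⟨∑ e ∈ E, monomial e (l (monomial e 1)), fun q hq ↦ ?_⟩
  conv => rw [q.as_sum]
  rw [map_sum, map_sum]
  refine Finset.sum_congr rfl fun m hm ↦ ?_
  have hmE : m ∈ E := Finset.mem_biUnion.2 ⟨q, hT.mem_toFinset.2 hq, hm⟩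
  rw [coeffPairing_monomial, coeff_sum]
  simp only [coeff_monomial, Finset.sum_ite_eq', hmE, if_true]
  rw [← smul_eq_mul, ← map_smul, smul_monomial, smul_eq_mul, mul_one]

/-- The coefficients of `v` define a functional which certifies that `b` is not the image under `φ`
of an element of order at most `c`. -/
structure IsObstruction (φ : WeylAlgebra R n →ₐ[R] WeylAlgebra R n) (c : ℕ) (b : WeylAlgebra R n)
    (v : MvPolynomial (Index n) R) : Prop where
  vanishing : ∀ m : Index n →₀ ℕ, m.degree ≤ c →
    coeffPairing v (symbol (φ (normalOrder (monomial m 1)))) = 0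
  apply_eq_one : coeffPairing v (symbol b) = 1

theorem IsObstruction.apply_ne [Nontrivial R] {φ : WeylAlgebra R n →ₐ[R] WeylAlgebra R n} {c : ℕ}
    {b : WeylAlgebra R n} {v : MvPolynomial (Index n) R} (hv : IsObstruction φ c b v)
    {y : WeylAlgebra R n} (hy : (symbol y).totalDegree ≤ c) : φ y ≠ b := by
  rintro rfl
  let l : MvPolynomial (Index n) R →ₗ[R] R :=
    coeffPairing v ∘ₗ symbol.toLinearMap ∘ₗ φ.toLinearMap ∘ₗ normalOrder
  have hl : degreeLT R (Index n) (c + 1) ≤ LinearMap.ker l := by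
    rw [degreeLT, restrictSupport_eq_span, Submodule.span_le]
    rintro _ ⟨m, hm, rfl⟩
    exact hv.vanishing m (Nat.lt_succ_iff.1 hm)
  have h0 : coeffPairing v (symbol (φ (normalOrder (symbol y)))) = 0 :=
    hl (mem_degreeLT_succ.2 hy)
  rw [normalOrder_symbol, hv.apply_eq_one] at h0
  exact one_ne_zero h0

theorem exists_isObstruction {K : Type*} [Field K] {φ : WeylAlgebra K n →ₐ[K] WeylAlgebra K n}
    {c : ℕ} {b : WeylAlgebra K n} (hb : ∀ y, (symbol y).totalDegree ≤ c → φ y ≠ b) :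
    ∃ v, IsObstruction φ c b v := by
  let T : MvPolynomial (Index n) K →ₗ[K] MvPolynomial (Index n) K :=
    symbol.toLinearMap ∘ₗ φ.toLinearMap ∘ₗ normalOrder
  have hmem : symbol b ∉ (degreeLT K (Index n) (c + 1)).map T := by
    rintro ⟨q, hq, hqb⟩
    exact hb (normalOrder q) (by rwa [symbol_normalOrder, ← mem_degreeLT_succ])
      (symbol.injective hqb)
  obtain ⟨l, hl0, hl⟩ := Submodule.exists_le_ker_of_notMem hmem
  have hfin : {m : Index n →₀ ℕ | m.degree ≤ c}.Finite := Finsupp.finite_of_degree_le c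
  obtain ⟨v, hv⟩ := exists_coeffPairing_eq ((l (symbol b))⁻¹ • l)
    ((hfin.image fun m ↦ T (monomial m 1)).insert (symbol b))
  refine ⟨v, fun m hm ↦ ?_, ?_⟩
  · refine (hv _ (.inr ⟨m, hm, rfl⟩)).trans ?_
    have hlm : l (T (monomial m 1)) = 0 :=
      hl ⟨_, monomial_mem_degreeLT 1 (Nat.lt_succ_iff.2 hm), rfl⟩
    rw [LinearMap.smul_apply, hlm, smul_zero]
  · rw [hv _ (.inl rfl), LinearMap.smul_apply, smul_eq_mul, inv_mul_cancel₀ hl0]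

theorem coeffPairing_symbol_baseChange (f : R →+* R') (φ : WeylAlgebra R n →ₐ[R] WeylAlgebra R n)
    (v : MvPolynomial (Index n) R) (m : Index n →₀ ℕ) :
    coeffPairing (MvPolynomial.map f v) (symbol (baseChange f φ (normalOrder (monomial m 1)))) =
      f (coeffPairing v (symbol (φ (normalOrder (monomial m 1))))) := by
  rw [← coeffPairing_map, ← symbol_map, ← baseChange_map, map_normalOrder, map_monomial, map_one f]

theorem IsObstruction.baseChange (f : R →+* R') {φ : WeylAlgebra R n →ₐ[R] WeylAlgebra R n} {c : ℕ}
    {b : WeylAlgebra R n} {v : MvPolynomial (Index n) R} (hv : IsObstruction φ c b v) :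
    IsObstruction (baseChange f φ) c (map f b) (MvPolynomial.map f v) where
  vanishing m hm := by rw [coeffPairing_symbol_baseChange, hv.vanishing m hm, map_zero]
  apply_eq_one := by rw [symbol_map, coeffPairing_map, hv.apply_eq_one, map_one]

theorem IsObstruction.of_baseChange {f : R →+* R'} (hf : Function.Injective f)
    {φ : WeylAlgebra R n →ₐ[R] WeylAlgebra R n} {c : ℕ} {b : WeylAlgebra R n}
    {v : MvPolynomial (Index n) R}
    (hv : IsObstruction (WeylAlgebra.baseChange f φ) c (map f b) (MvPolynomial.map f v)) :
    IsObstruction φ c b v where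
  vanishing m hm := hf <| by
    rw [← coeffPairing_symbol_baseChange, hv.vanishing m hm, map_zero]
  apply_eq_one := hf <| by rw [← coeffPairing_map, ← symbol_map, hv.apply_eq_one, map_one]

end BaseChange

/-! ### Transposition -/

section Transpose

variable {R : Type*} [CommRing R] {n : ℕ}

/-- The family `xᵢ ↦ xᵢ`, `∂ᵢ ↦ -∂ᵢ` in the opposite ring. -/
def transposeFamily {B : Type*} [Ring B] (g : Index n → B) : Index n → Bᵐᵒᵖ
  | .inl i => .op (g (.inl i))
  | .inr i => -.op (g (.inr i))

theorem IsWeylFamily.transposeFamily {B : Type*} [Ring B] {g : Index n → B} (hg : IsWeylFamily g) :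
    IsWeylFamily (transposeFamily g) where
  xx i j := congrArg MulOpposite.op (hg.xx j i)
  dd i j := by
    simp only [WeylAlgebra.transposeFamily, neg_mul_neg]
    exact congrArg MulOpposite.op (hg.dd j i)
  dx i j := by
    simp only [WeylAlgebra.transposeFamily, neg_mul, mul_neg, ← MulOpposite.op_mul, hg.dx]
    split_ifs <;> simp

/-- The transpose of differential operators, encoded as an isomorphism with the opposite algebra. -/
noncomputable def transpose (R : Type*) [CommRing R] (n : ℕ) :
    WeylAlgebra R n ≃ₐ[R] (WeylAlgebra R n)ᵐᵒᵖ :=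
  let τ : WeylAlgebra R n →ₐ[R] (WeylAlgebra R n)ᵐᵒᵖ :=
    lift (transposeFamily (gen R)) isWeylFamily_gen.transposeFamily
  have hτ : (AlgHom.opComm τ).comp τ = AlgHom.id R _ := algHom_ext fun s ↦ by
    rcases s with i | i <;> simp [τ, transposeFamily, lift_gen]
  AlgEquiv.ofAlgHom τ (AlgHom.opComm τ)
    (AlgHom.ext fun a ↦ congr(MulOpposite.op ($hτ a.unop))) hτ

end Transpose

/-! ### Descent to characteristic zero -/

section Injective

variable {K : Type*} [Field K] [CharZero K] {n : ℕ}

theorem algHom_injective {B : Type*} [Ring B] [Nontrivial B] [Algebra K B]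
    (φ : WeylAlgebra K n →ₐ[K] B) : Function.Injective φ := by
  refine (injective_iff_map_eq_zero φ).2 fun a ha ↦ ?_
  induction hd : (symbol a).totalDegree using Nat.strong_induction_on generalizing a with
  | _ d ih =>
    have hdeg : (symbol a).totalDegree = 0 := by
      by_contra hne
      refine hne (totalDegree_eq_zero_of_pderiv_eq_zero fun s ↦ ?_)
      have hlt := totalDegree_pderiv_lt hne s
      rw [← symbol_innerDer_gen] at hlt ⊢
      have hker : φ (innerDer K (gen K) s a) = 0 := by
        rcases s with i | i <;> simp [innerDer_inl, innerDer_inr, ha]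
      rw [ih _ (hd ▸ hlt) _ hker rfl, map_zero]
    obtain ⟨r, rfl⟩ : ∃ r, a = algebraMap K _ r :=
      ⟨coeff 0 (symbol a), symbol.injective <| by
        rw [symbol_algebraMap, ← totalDegree_eq_zero_iff_eq_C.1 hdeg]⟩
    rw [AlgHom.commutes, map_eq_zero] at ha
    rw [ha, map_zero]

end Injective

section Descent

variable {n : ℕ}

theorem not_isObstruction_of_ringHom_padicInt {p : ℕ} [Fact p.Prime] {R : Type*} [CommRing R]
    (θ : R →+* ℤ_[p]) {φ : WeylAlgebra R n →ₐ[R] WeylAlgebra R n} {ι : Type*} [Fintype ι]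
    {a : ι → WeylAlgebra R n} {U : Index n → ι → ι → WeylAlgebra R n}
    (hU : ∀ s l, a l * gen R s = ∑ k, φ (U s l k) * a k) {c : ℕ}
    (hUc : ∀ s l k, (symbol (U s l k)).totalDegree ≤ c) {l₀ : ι} (hl₀ : a l₀ = 1)
    (hm : Fintype.card ι < p) (hc : c * Fintype.card ι < p) (s : Index n)
    (v : MvPolynomial (Index n) R) : ¬ IsObstruction φ c (gen R s) v := by
  intro hv
  let ψ : R →+* ZMod p := (PadicInt.toZMod (p := p)).comp θ
  have hψ (b : WeylAlgebra R n) : map (PadicInt.toZMod (p := p)) (map θ b) = map ψ b :=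
    symbol.injective <| by simp only [symbol_map, MvPolynomial.map_map, ψ]
  obtain ⟨y, hyc, hy⟩ := (isFlatLift_map_toZMod (p := p) (n := n)).exists_apply_eq_gen
    (φ := baseChange ψ φ) (a := fun l ↦ map ψ (a l)) (U := fun s l k ↦ map ψ (U s l k)) (c := c)
    ((isWeylFamily_gen.map φ.toRingHom).map (map θ))
    (fun s ↦ by rw [baseChange_gen]; exact hψ _)
    (fun s l ↦ by
      simpa only [map_mul, map_sum, map_gen, baseChange_map] using congr(map ψ $(hU s l)))
    (fun s l k ↦ by
      rw [symbol_map]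
      exact (totalDegree_map_le _ _).trans (hUc s l k))
    (by rw [hl₀, map_one]) hm hc s
  refine (hv.baseChange ψ).apply_ne hyc ?_
  rw [hy, map_gen]

theorem surjective_of_gen_mem_range {R : Type*} [CommRing R] {B : Type*} [Ring B] [Algebra R B]
    {φ : B →ₐ[R] WeylAlgebra R n} (hφ : ∀ s, ∃ y, φ y = gen R s) : Function.Surjective φ := by
  rw [← AlgHom.range_eq_top, eq_top_iff, ← adjoin_range_gen, Algebra.adjoin_le_iff]
  rintro _ ⟨s, rfl⟩
  exact hφ s

variable {K : Type*} [Field K] [CharZero K]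

theorem exists_prime_gt_subset_range_map {T : Set (WeylAlgebra K n)} (hT : T.Finite) (M : ℕ) :
    ∃ (p : ℕ) (_ : Fact p.Prime) (R : Subring K), M < p ∧ Nonempty (R →+* ℤ_[p]) ∧
      T ⊆ Set.range (map R.subtype) := by
  classical
  let E := hT.toFinset.biUnion fun a ↦ (symbol a).coeffs
  obtain ⟨p, hp, hMp, hθ⟩ := exists_prime_gt_ringHom_padicInt E M
  refine ⟨p, hp, Subring.closure E, hMp, hθ, fun a ha ↦
    mem_range_map_of_coeffs_subset fun r hr ↦ ?_⟩
  exact ⟨⟨r, Subring.subset_closure (Finset.mem_biUnion.2 ⟨a, hT.mem_toFinset.2 ha, hr⟩)⟩, rfl⟩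

theorem exists_apply_eq_gen {φ : WeylAlgebra K n →ₐ[K] WeylAlgebra K n} {ι : Type*} [Fintype ι]
    {a : ι → WeylAlgebra K n} {U : Index n → ι → ι → WeylAlgebra K n}
    (hU : ∀ s l, a l * gen K s = ∑ k, φ (U s l k) * a k) {c : ℕ}
    (hUc : ∀ s l k, (symbol (U s l k)).totalDegree ≤ c) {l₀ : ι} (hl₀ : a l₀ = 1) (s : Index n) :
    ∃ y, φ y = gen K s := by
  by_contra! hs
  obtain ⟨v, hv⟩ := exists_isObstruction (c := c) fun y _ ↦ hs y
  obtain ⟨p, _, R, hp, ⟨θ⟩, hT⟩ := exists_prime_gt_subset_range_map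
    (((Set.finite_range fun s ↦ φ (gen K s)).union (Set.finite_range a)).union
      ((Set.finite_range fun x : Index n × ι × ι ↦ U x.1 x.2.1 x.2.2).union
        (Set.finite_singleton (normalOrder v)))) (Fintype.card ι + c * Fintype.card ι)
  have hinj : Function.Injective R.subtype := Subtype.val_injective
  obtain ⟨φ₀, rfl⟩ := exists_baseChange_eq hinj fun s ↦ hT (.inl (.inl ⟨s, rfl⟩))
  choose a₀ ha₀ using fun l ↦ hT (.inl (.inr ⟨l, rfl⟩))
  choose U₀ hU₀ using fun s l k ↦ hT (.inr (.inl ⟨(s, l, k), rfl⟩))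
  obtain ⟨w, hw⟩ := hT (.inr (.inr rfl))
  obtain rfl : v = MvPolynomial.map R.subtype (symbol w) := by
    rw [← symbol_map, hw, symbol_normalOrder]
  rw [← map_gen R.subtype] at hv
  refine not_isObstruction_of_ringHom_padicInt θ (a := a₀) (U := U₀) (fun s l ↦ ?_)
    (fun s l k ↦ ?_) (l₀ := l₀) ?_ (by lia) (by lia) s _ (hv.of_baseChange hinj)
  · apply map_injective hinj
    simpa only [map_mul, map_sum, map_gen, ← baseChange_map, ha₀, hU₀] using hU s l
  · rw [← totalDegree_map_of_injective hinj, ← symbol_map, hU₀]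
    exact hUc s l k
  · exact map_injective hinj (by rw [ha₀, hl₀, map_one])

theorem surjective_of_eq_sum_apply_mul {φ : WeylAlgebra K n →ₐ[K] WeylAlgebra K n} {ι : Type*}
    [Fintype ι] (a : ι → WeylAlgebra K n)
    (ha : ∀ x, ∃ t : ι → WeylAlgebra K n, x = ∑ i, φ (t i) * a i) : Function.Surjective φ := by
  let a' : Option ι → WeylAlgebra K n := fun o ↦ o.elim 1 a
  have ha' (x) : ∃ t : Option ι → WeylAlgebra K n, x = ∑ o, φ (t o) * a' o := by
    obtain ⟨t, ht⟩ := ha x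
    exact ⟨fun o ↦ o.elim 0 t, by simpa [a', Fintype.sum_option] using ht⟩
  choose U hU using fun s l ↦ ha' (a' l * gen K s)
  let deg (x : Index n × Option ι × Option ι) : ℕ := (symbol (U x.1 x.2.1 x.2.2)).totalDegree
  exact surjective_of_gen_mem_range <| exists_apply_eq_gen hU (c := Finset.univ.sup deg)
    (fun s l k ↦ Finset.le_sup (f := deg) (Finset.mem_univ (s, l, k))) (l₀ := none) rfl

theorem surjective_of_eq_sum_mul_apply {φ : WeylAlgebra K n →ₐ[K] WeylAlgebra K n} {ι : Type*}
    [Fintype ι] (a : ι → WeylAlgebra K n)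
    (ha : ∀ x, ∃ t : ι → WeylAlgebra K n, x = ∑ i, a i * φ (t i)) : Function.Surjective φ := by
  let τ := transpose K n
  let φτ : WeylAlgebra K n →ₐ[K] WeylAlgebra K n :=
    τ.symm.toAlgHom.comp ((AlgHom.op φ).comp τ.toAlgHom)
  have hφτ : Function.Surjective φτ := by
    refine surjective_of_eq_sum_apply_mul (fun i ↦ τ.symm (.op (a i))) fun x ↦ ?_
    obtain ⟨t, ht⟩ := ha (τ x).unop
    refine ⟨fun i ↦ τ.symm (.op (t i)), τ.injective ?_⟩
    simp [φτ, ← MulOpposite.op_mul, ← Finset.op_sum, ← ht]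
  intro x
  obtain ⟨y, hy⟩ := hφτ (τ.symm (.op x))
  exact ⟨(τ y).unop, MulOpposite.op_injective (τ.symm.injective hy)⟩

end Descent

theorem exists_eq_sum_of_closure_eq_top {B C : Type*} [AddCommGroup B] [AddCommGroup C]
    {T : Finset C} (F : C → B →+ C)
    (hT : AddSubgroup.closure {x | ∃ g ∈ T, ∃ b, x = F g b} = ⊤) (x : C) :
    ∃ t : T → B, x = ∑ g : T, F g (t g) := by
  classical
  have hle : AddSubgroup.closure {x | ∃ g ∈ T, ∃ b, x = F g b} ≤
      (∑ g : T, (F g).comp (Pi.evalAddMonoidHom (fun _ : T ↦ B) g)).range := by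
    refine (AddSubgroup.closure_le _).2 ?_
    rintro _ ⟨g, hg, b, rfl⟩
    refine ⟨Pi.single ⟨g, hg⟩ b, ?_⟩
    rw [AddMonoidHom.finsetSum_apply, Finset.sum_eq_single ⟨g, hg⟩] <;> simp +contextual
  obtain ⟨t, rfl⟩ := hle (hT ▸ AddSubgroup.mem_top x)
  exact ⟨t, by simp⟩

end WeylAlgebra

/-- **Main theorem.** Let `K` be a field of characteristic `0`, `A = A_n(K)`
the `n`-th Weyl algebra, `φ : A → A` a `K`-algebra endomorphism and `S = φ(A)`.  If `A` is
finitely generated as a left `S`-module or as a right `S`-module, then `S = A`; in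
particular, `φ` is an automorphism of `A`. -/
theorem weylAlgebra_endomorphism_surjective_of_finitely_generated (K : Type*) [Field K]
    [CharZero K] (n : ℕ) (φ : WeylAlgebra K n →ₐ[K] WeylAlgebra K n)
    (hfg : (∃ s : Finset (WeylAlgebra K n),
        AddSubgroup.closure {x : WeylAlgebra K n | ∃ g ∈ s, ∃ b : WeylAlgebra K n,
          x = φ b * g} = ⊤)
      ∨ (∃ s : Finset (WeylAlgebra K n),
        AddSubgroup.closure {x : WeylAlgebra K n | ∃ g ∈ s, ∃ b : WeylAlgebra K n,
          x = g * φ b} = ⊤)) :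
    φ.range = ⊤ ∧ Function.Bijective φ := by
  have hφ : Function.Surjective φ := by
    rcases hfg with ⟨s, hs⟩ | ⟨s, hs⟩
    · exact WeylAlgebra.surjective_of_eq_sum_apply_mul (fun g : s ↦ (g : WeylAlgebra K n))
        (WeylAlgebra.exists_eq_sum_of_closure_eq_top
          (fun g ↦ (AddMonoidHom.mulRight g).comp φ.toAddMonoidHom) hs)
    · exact WeylAlgebra.surjective_of_eq_sum_mul_apply (fun g : s ↦ (g : WeylAlgebra K n))
        (WeylAlgebra.exists_eq_sum_of_closure_eq_top
          (fun g ↦ (AddMonoidHom.mulLeft g).comp φ.toAddMonoidHom) hs)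
  exact ⟨(AlgHom.range_eq_top φ).2 hφ, WeylAlgebra.algHom_injective φ, hφ⟩
end

section
/- Let K be a field, B = K[x_1,…,x_n] with n > 0, and φ: B → B a K-algebra endomorphism with φ(x_i) = f_i. Let d, r ∈ ℕ with r > 0, let h_1, …, h_r ∈ B be polynomials of total degree ≤ d, and let m > n + d be an integer. If there is no non-trivial relation φ(b_1) h_1 + ⋯ + φ(b_r) h_r = 0 with b_1, …, b_r ∈ B of total degree ≤ m (not all zero), then m (r − deg(φ)^n) < 2^n deg(φ)^{n−1} (n + d). -/
/-- The degree of a `K`-algebra endomorphism `φ` of the polynomial ring `K[x_1, …, x_n]`: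
`deg(φ) = max {deg f_1, …, deg f_n}` where `f_i = φ(x_i)` and `deg` is total degree. -/
noncomputable def polyDeg {K : Type*} [CommSemiring K] {n : ℕ}
    (φ : MvPolynomial (Fin n) K →ₐ[K] MvPolynomial (Fin n) K) : ℕ :=
  Finset.univ.sup fun i : Fin n => (φ (MvPolynomial.X i)).totalDegree

/-!
The `R`-linear map `(b_i) ↦ ∑ φ(b_i) h_i` sends `r` copies of the polynomials of degree at most `m`
into the polynomials of degree at most `D m + d`, where `D = deg φ`. If it is injective, comparing
ranks gives `r * C(m + n, n) ≤ C(D m + d + n, n)`, hence `r m ^ n < (D m + n + d) ^ n`. Convexity of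
`t ↦ (1 + t) ^ n` on `[0, 1]` bounds the right-hand side by `(D m) ^ (n - 1) (D m + 2 ^ n (n + d))`,
and dividing by `m ^ (n - 1)` gives the result.
-/

section TotalDegree

open MvPolynomial

variable {R σ τ ι : Type*}

lemma totalDegree_algHom_monomial_le [CommSemiring R]
    {φ : MvPolynomial σ R →ₐ[R] MvPolynomial τ R} {D : ℕ} (hφ : ∀ i, (φ (X i)).totalDegree ≤ D)
    (s : σ →₀ ℕ) (a : R) : (φ (monomial s a)).totalDegree ≤ D * s.degree :=
  calc (φ (monomial s a)).totalDegree
      = (C a * ∏ i ∈ s.support, φ (X i) ^ s i).totalDegree := by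
        simp only [monomial_eq, map_mul, algHom_C, algebraMap_eq, Finsupp.prod, map_prod, map_pow]
    _ ≤ (C a : MvPolynomial τ R).totalDegree + (∏ i ∈ s.support, φ (X i) ^ s i).totalDegree :=
        totalDegree_mul _ _
    _ ≤ ∑ i ∈ s.support, (φ (X i) ^ s i).totalDegree := by
        rw [totalDegree_C, zero_add]
        exact totalDegree_finsetProd _ _
    _ ≤ ∑ i ∈ s.support, s i * D :=
        Finset.sum_le_sum fun i _ =>
          (totalDegree_pow _ _).trans (Nat.mul_le_mul_left _ (hφ i))
    _ = D * s.degree := by rw [← Finset.sum_mul, Finsupp.degree_apply, mul_comm]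

lemma totalDegree_algHom_apply_le [CommSemiring R] {φ : MvPolynomial σ R →ₐ[R] MvPolynomial τ R}
    {D : ℕ} (hφ : ∀ i, (φ (X i)).totalDegree ≤ D) (p : MvPolynomial σ R) :
    (φ p).totalDegree ≤ D * p.totalDegree := by
  conv_lhs => rw [p.as_sum, map_sum]
  exact totalDegree_finsetSum_le fun s hs =>
    (totalDegree_algHom_monomial_le hφ s _).trans (Nat.mul_le_mul_left _ (le_totalDegree hs))

lemma card_finsupp_degree_le (σ : Type*) [Fintype σ] (m : ℕ) :
    Nat.card {s : σ →₀ ℕ | s.degree ≤ m} = (m + Fintype.card σ).choose (Fintype.card σ) := by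
  classical
  have hunion : {s : σ →₀ ℕ | s.degree ≤ m} =
      ((Finset.range (m + 1)).biUnion (Finset.univ : Finset σ).finsuppAntidiag :
        Finset (σ →₀ ℕ)) := by
    ext s
    simp [Finsupp.degree_eq_sum]
  have hdisjoint : (Finset.range (m + 1) : Set ℕ).PairwiseDisjoint
      (Finset.univ : Finset σ).finsuppAntidiag := fun i _ j _ hij =>
    Finset.disjoint_left.2 fun s hi hj => hij <|
      (Finset.mem_finsuppAntidiag.1 hi).1.symm.trans (Finset.mem_finsuppAntidiag.1 hj).1
  rw [hunion, Nat.card_coe_set_eq, Set.ncard_coe_finset, Finset.card_biUnion hdisjoint]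
  simp only [Finset.card_finsuppAntidiag_nat_eq_multichoose, Finset.card_univ,
    Nat.sum_range_multichoose]

lemma finrank_restrictTotalDegree (σ R : Type*) [Fintype σ] [CommRing R] [Nontrivial R] (m : ℕ) :
    Module.finrank R (restrictTotalDegree σ R m) =
      (m + Fintype.card σ).choose (Fintype.card σ) := by
  rw [← card_finsupp_degree_le]
  exact Module.finrank_eq_nat_card_basis (basisRestrictSupport R _)

/-- The `R`-linear map `b ↦ ∑ i, φ (b i) * h i`, whose kernel consists of the relations
`φ(b_1) h_1 + ⋯ + φ(b_r) h_r = 0` among the `h i` with coefficients in the image of `φ`. -/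
def twistedCombination {A B : Type*} [Fintype ι] [CommSemiring R] [Semiring A] [Semiring B]
    [Algebra R A] [Algebra R B] (φ : A →ₐ[R] B) (h : ι → B) : (ι → A) →ₗ[R] B where
  toFun b := ∑ i, φ (b i) * h i
  map_add' b c := by simp only [Pi.add_apply, map_add, add_mul, Finset.sum_add_distrib]
  map_smul' a b := by
    simp only [Pi.smul_apply, map_smul, smul_mul_assoc, Finset.smul_sum, RingHom.id_apply]

lemma twistedCombination_mem_restrictTotalDegree [Fintype ι] [CommSemiring R]
    {φ : MvPolynomial σ R →ₐ[R] MvPolynomial τ R} {h : ι → MvPolynomial τ R} {D d m : ℕ}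
    (hφ : ∀ i, (φ (X i)).totalDegree ≤ D) (hh : ∀ i, (h i).totalDegree ≤ d)
    {b : ι → MvPolynomial σ R} (hb : ∀ i, b i ∈ restrictTotalDegree σ R m) :
    twistedCombination φ h b ∈ restrictTotalDegree τ R (D * m + d) := by
  refine Submodule.sum_mem _ fun i _ => (mem_restrictTotalDegree _ _ _).2 ?_
  have hbi : (b i).totalDegree ≤ m := (mem_restrictTotalDegree _ _ _).1 (hb i)
  calc (φ (b i) * h i).totalDegree
      ≤ (φ (b i)).totalDegree + (h i).totalDegree := totalDegree_mul _ _
    _ ≤ D * m + d := Nat.add_le_add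
        ((totalDegree_algHom_apply_le hφ _).trans (Nat.mul_le_mul_left D hbi)) (hh i)

lemma card_mul_choose_le_choose_of_no_relation [Fintype σ] [Fintype τ] [Fintype ι] [CommRing R]
    [Nontrivial R] {φ : MvPolynomial σ R →ₐ[R] MvPolynomial τ R} {h : ι → MvPolynomial τ R}
    {D d m : ℕ} (hφ : ∀ i, (φ (X i)).totalDegree ≤ D) (hh : ∀ i, (h i).totalDegree ≤ d)
    (hno : ¬ ∃ b : ι → MvPolynomial σ R,
      (∀ i, (b i).totalDegree ≤ m) ∧ (∃ i, b i ≠ 0) ∧ ∑ i, φ (b i) * h i = 0) :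
    Fintype.card ι * (m + Fintype.card σ).choose (Fintype.card σ) ≤
      (D * m + d + Fintype.card τ).choose (Fintype.card τ) := by
  let L : (ι → restrictTotalDegree σ R m) →ₗ[R] restrictTotalDegree τ R (D * m + d) :=
    (twistedCombination φ h ∘ₗ (restrictTotalDegree σ R m).subtype.compLeft ι).codRestrict _
      fun b => twistedCombination_mem_restrictTotalDegree hφ hh fun i => (b i).2
  have hL : Function.Injective L := by
    refine (injective_iff_map_eq_zero L).2 fun b hb => by_contra fun hne => hno ?_
    obtain ⟨i, hi⟩ := Function.ne_iff.1 hne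
    exact ⟨fun i => b i, fun i => (mem_restrictTotalDegree _ _ _).1 (b i).2,
      ⟨i, fun h0 => hi (Subtype.ext h0)⟩, congrArg Subtype.val hb⟩
  have : Module.Free R (restrictTotalDegree σ R m) := .of_basis (basisRestrictSupport R _)
  simpa only [Module.finrank_pi_fintype, finrank_restrictTotalDegree, Finset.sum_const,
    Finset.card_univ, smul_eq_mul] using LinearMap.finrank_le_finrank_of_injective hL

end TotalDegree

lemma mul_pow_lt_add_pow_of_mul_choose_le {k r m M : ℕ} (hk : k ≠ 0) (hr : 0 < r)
    (hle : r * (m + k).choose k ≤ (M + k).choose k) : r * m ^ k < (M + k) ^ k :=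
  calc r * m ^ k < r * (m + 1) ^ k :=
        Nat.mul_lt_mul_of_pos_left (Nat.pow_lt_pow_left m.lt_succ_self hk) hr
    _ ≤ r * (m + 1).ascFactorial k := Nat.mul_le_mul_left _ (Nat.pow_succ_le_ascFactorial _ _)
    _ = k.factorial * (r * (m + k).choose k) := by
        rw [Nat.ascFactorial_eq_factorial_mul_choose, mul_left_comm]
    _ ≤ k.factorial * (M + k).choose k := Nat.mul_le_mul_left _ hle
    _ = (M + 1).ascFactorial k := (Nat.ascFactorial_eq_factorial_mul_choose _ _).symm
    _ ≤ (M + k) ^ k := Nat.ascFactorial_le_pow_add _ _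

-- The chord of the convex function `t ↦ (1 + t) ^ (n + 1)` over `[0, 1]`, at `t = c / a`.
lemma add_pow_succ_le_of_le {R : Type*} [CommRing R] [PartialOrder R] [IsOrderedRing R] {a c : R}
    (hc : 0 ≤ c) (hca : c ≤ a) (n : ℕ) :
    (a + c) ^ (n + 1) ≤ a ^ n * (a + (2 ^ (n + 1) - 1) * c) := by
  have ha : 0 ≤ a := hc.trans hca
  induction n with
  | zero => exact le_of_eq (by ring)
  | succ n ih =>
    have hcoeff : (0 : R) ≤ 2 ^ (n + 1) - 1 := sub_nonneg.2 (one_le_pow₀ one_le_two)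
    have hcc : c * c ≤ a * c := mul_le_mul_of_nonneg_right hca hc
    calc (a + c) ^ (n + 1 + 1)
        = (a + c) ^ (n + 1) * (a + c) := pow_succ _ _
      _ ≤ a ^ n * (a + (2 ^ (n + 1) - 1) * c) * (a + c) := by gcongr
      _ = a ^ n * (a * (a + 2 ^ (n + 1) * c) + (2 ^ (n + 1) - 1) * (c * c)) := by ring
      _ ≤ a ^ n * (a * (a + 2 ^ (n + 1) * c) + (2 ^ (n + 1) - 1) * (a * c)) := by gcongr
      _ = a ^ (n + 1) * (a + (2 ^ (n + 1 + 1) - 1) * c) := by ring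

lemma mul_sub_pow_lt_of_mul_pow_lt {R : Type*} [CommRing R] [LinearOrder R] [IsStrictOrderedRing R]
    {D c m r : R} {n : ℕ} (hc : 0 ≤ c) (hm : 0 ≤ m) (hD : 0 ≤ D) (hcD : c ≤ D * m)
    (hlt : r * m ^ (n + 1) < (D * m + c) ^ (n + 1)) :
    m * (r - D ^ (n + 1)) < 2 ^ (n + 1) * D ^ n * c := by
  have hscaled : m ^ n * (r * m) < m ^ n * (D ^ n * (D * m + 2 ^ (n + 1) * c)) :=
    calc m ^ n * (r * m) = r * m ^ (n + 1) := by ring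
      _ < (D * m + c) ^ (n + 1) := hlt
      _ ≤ (D * m) ^ n * (D * m + (2 ^ (n + 1) - 1) * c) := add_pow_succ_le_of_le hc hcD n
      _ ≤ (D * m) ^ n * (D * m + 2 ^ (n + 1) * c) := by gcongr; exact sub_le_self _ zero_le_one
      _ = m ^ n * (D ^ n * (D * m + 2 ^ (n + 1) * c)) := by ring
  have hdivided := lt_of_mul_lt_mul_left hscaled (pow_nonneg hm n)
  linear_combination hdivided

open MvPolynomial in
theorem polynomial_no_relation_degree_bound_general {R ι : Type*} [CommRing R] [Nontrivial R]
    [Fintype ι] [Nonempty ι] {n : ℕ} (hn : 0 < n)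
    (φ : MvPolynomial (Fin n) R →ₐ[R] MvPolynomial (Fin n) R) {d m : ℕ}
    (h : ι → MvPolynomial (Fin n) R) (hhd : ∀ i, (h i).totalDegree ≤ d) (hm : n + d ≤ m)
    (hno : ¬ ∃ b : ι → MvPolynomial (Fin n) R,
      (∀ i, (b i).totalDegree ≤ m) ∧ (∃ i, b i ≠ 0) ∧ ∑ i, φ (b i) * h i = 0) :
    (m : ℤ) * (Fintype.card ι - (polyDeg φ : ℤ) ^ n) <
      2 ^ n * (polyDeg φ : ℤ) ^ (n - 1) * (n + d) := by
  have hφ (i : Fin n) : (φ (X i)).totalDegree ≤ polyDeg φ :=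
    Finset.le_sup (f := fun i => (φ (X i)).totalDegree) (Finset.mem_univ i)
  have hchoose := card_mul_choose_le_choose_of_no_relation hφ hhd hno
  rw [Fintype.card_fin] at hchoose
  have hpow : Fintype.card ι * m ^ n < (polyDeg φ * m + (n + d)) ^ n := by
    simpa only [add_assoc, add_comm d n] using
      mul_pow_lt_add_pow_of_mul_choose_le hn.ne' Fintype.card_pos hchoose
  have hD : 0 < polyDeg φ := by
    refine Nat.pos_of_ne_zero fun hzero => hpow.not_ge ?_
    rw [hzero, zero_mul, zero_add]
    exact (Nat.pow_le_pow_left hm n).trans (Nat.le_mul_of_pos_left _ Fintype.card_pos)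
  have hcD : n + d ≤ polyDeg φ * m := hm.trans (Nat.le_mul_of_pos_left m hD)
  obtain ⟨k, rfl⟩ := Nat.exists_eq_add_one.2 hn
  exact mul_sub_pow_lt_of_mul_pow_lt (by positivity) (by positivity) (by positivity)
    (mod_cast hcD) (mod_cast hpow)

open MvPolynomial in
/-- Let `K` be a field, `B = K[x_1, …, x_n]` with `n > 0`, and `φ : B → B`
a `K`-algebra endomorphism.  Let `d, r ∈ ℕ` with `r > 0`, let `h_1, …, h_r ∈ B` have total
degree `≤ d`, and let `m > n + d` be an integer.  If there is no non-trivial relation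
`φ(b_1) h_1 + ⋯ + φ(b_r) h_r = 0` with all `b_i` of total degree `≤ m`, then
`m (r − deg(φ)^n) < 2^n deg(φ)^{n−1} (n + d)`. -/
theorem polynomial_no_relation_degree_bound (K : Type*) [Field K] (n : ℕ) (hn : 0 < n)
    (φ : MvPolynomial (Fin n) K →ₐ[K] MvPolynomial (Fin n) K)
    (d r : ℕ) (hr : 0 < r) (h : Fin r → MvPolynomial (Fin n) K)
    (hhd : ∀ i, (h i).totalDegree ≤ d) (m : ℕ) (hm : n + d < m)
    (hno : ¬ ∃ b : Fin r → MvPolynomial (Fin n) K,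
        (∀ i, (b i).totalDegree ≤ m) ∧ (∃ i, b i ≠ 0) ∧ ∑ i, φ (b i) * h i = 0) :
    (m : ℤ) * ((r : ℤ) - (polyDeg φ : ℤ) ^ n) <
      2 ^ n * (polyDeg φ : ℤ) ^ (n - 1) * ((n : ℤ) + (d : ℤ)) := by
  have : Nonempty (Fin r) := ⟨⟨0, hr⟩⟩
  simpa only [Fintype.card_fin] using
    polynomial_no_relation_degree_bound_general hn φ h hhd hm.le hno
end
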